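/- arXiv:math/0503246 — 4 statements merged into one kernel-verified Lean document; each statement's English description precedes it below -/
import Mathlib

section
/- Let χ be a real measurable function with χ(t) = 1 for 0 ≤ t ≤ 1 and 0 ≤ χ(t) ≤ 1 for t > 1. Assume either: (i) there exists T > 1 with ∫_T^∞ χ(t) dt = 0, where T is minimal with this property; or (ii) there exist a function ε(t) → 0 as t → ∞ and a nondecreasing function h with h(t) → ∞ as t → ∞ such that χ(t) = ((1+ε(t))/h(t))^t for all t ≥ 1. Let σ be the unique solution of u·σ(u) = ∫₀^u σ(u−t)·χ(t) dt for u > 1 with σ(u) = 1 for 0 ≤ u ≤ 1, and for u > 1 let ξ(u) be the unique solution of u = ∫₁^∞ χ(v)·e^{ξ(u)·v} dv. Then (log σ(u) + ξ(u)·u − ∫₁^∞ (χ(v)·e^{ξ(u)·v}/v) dv)/u → 0 as u → ∞. -/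
open MeasureTheory Set Filter Topology

/-- A nonnegative function bounded by its own primitive vanishes. -/
theorem eq_zero_of_le_primitive {N : ℝ → ℝ} {U : ℝ} (hN0 : ∀ u ∈ Icc 0 U, 0 ≤ N u)
    (hInt : IntervalIntegrable N volume 0 U)
    (h : ∀ u ∈ Icc 0 U, N u ≤ ∫ x in (0 : ℝ)..u, N x) : ∀ u ∈ Icc 0 U, N u = 0 := by
  have key : ∀ n : ℕ, ∀ u ∈ Icc 0 U, u ≤ n / 2 → N u = 0 := by
    intro n
    induction n with
    | zero =>
      intro u hu hun
      have hu0 : u = 0 := le_antisymm (by simpa using hun) hu.1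
      have := h u hu
      rw [hu0] at this ⊢
      simp only [intervalIntegral.integral_same] at this
      exact le_antisymm this (hN0 0 ⟨le_rfl, hu.1.trans hu.2⟩)
    | succ n ih =>
      intro u hu hun
      push_cast at hun
      by_cases hle : u ≤ n / 2
      · exact ih u hu hle
      push Not at hle
      have hn0 : (0 : ℝ) ≤ n / 2 := by positivity
      have hsub : ∀ a b, 0 ≤ a → a ≤ b → b ≤ U → IntervalIntegrable N volume a b :=
        fun a b ha hab hb => hInt.mono_set (by
          rw [uIcc_of_le hab, uIcc_of_le (ha.trans (hab.trans hb))]; exact Icc_subset_Icc ha hb)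
      have hsplit := intervalIntegral.integral_add_adjacent_intervals
        (hsub 0 (n / 2) le_rfl hn0 (hle.le.trans hu.2)) (hsub (n / 2) u hn0 hle.le hu.2)
      have h1 : ∫ x in (0 : ℝ)..(n / 2), N x = 0 := by
        rw [intervalIntegral.integral_congr (g := fun _ => (0 : ℝ))]
        · simp
        · intro x hx
          rw [uIcc_of_le hn0] at hx
          exact ih x ⟨hx.1, hx.2.trans (hle.le.trans hu.2)⟩ hx.2
      have h2 : ∫ x in (n / 2 : ℝ)..u, N x ≤ ∫ x in (n / 2 : ℝ)..u, (∫ y in (0 : ℝ)..u, N y) := by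
        refine intervalIntegral.integral_mono_on hle.le (hsub _ _ hn0 hle.le hu.2)
          intervalIntegrable_const fun x hx => ?_
        have hx0 : 0 ≤ x := hn0.trans hx.1
        refine (h x ⟨hx0, hx.2.trans hu.2⟩).trans ?_
        rw [← intervalIntegral.integral_add_adjacent_intervals
          (hsub 0 x le_rfl hx0 (hx.2.trans hu.2)) (hsub x u hx0 hx.2 hu.2)]
        have : 0 ≤ ∫ y in x..u, N y := intervalIntegral.integral_nonneg hx.2
          fun y hy => hN0 y ⟨hx0.trans hy.1, hy.2.trans hu.2⟩
        linarith
      rw [intervalIntegral.integral_const, smul_eq_mul] at h2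
      have hJ : 0 ≤ ∫ y in (0 : ℝ)..u, N y := intervalIntegral.integral_nonneg hu.1
          fun y hy => hN0 y ⟨hy.1, hy.2.trans hu.2⟩
      have h3 : (u - n / 2) * ∫ y in (0 : ℝ)..u, N y ≤ 1 / 2 * ∫ y in (0 : ℝ)..u, N y :=
        mul_le_mul_of_nonneg_right (by linarith) hJ
      have := h u hu
      exact le_antisymm (by linarith) (hN0 u hu)
  intro u hu
  obtain ⟨n, hn⟩ := exists_nat_ge (2 * u)
  exact key n u hu (by linarith)

theorem intervalIntegrable_comp_sub_mul {χ D : ℝ → ℝ} (hmeas : Measurable χ)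
    (hχ : ∀ t, 0 ≤ t → 0 ≤ χ t ∧ χ t ≤ 1) {u : ℝ} (hu : 0 ≤ u)
    (hInt : IntervalIntegrable D volume 0 u) :
    IntervalIntegrable (fun t => D (u - t) * χ t) volume 0 u := by
  have h := (hInt.comp_sub_left u).symm
  simp only [sub_zero, sub_self] at h
  rw [intervalIntegrable_iff_integrableOn_Ioc_of_le hu] at h ⊢
  refine Integrable.mul_bdd (c := 1) h hmeas.aestronglyMeasurable ?_
  refine (ae_restrict_iff' measurableSet_Ioc).2 (Eventually.of_forall fun t ht => ?_)
  rw [Real.norm_eq_abs, abs_of_nonneg (hχ t ht.1.le).1]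
  exact (hχ t ht.1.le).2

/-- Comparison principle for `u * D u ≥ ∫ t in 0..u, D (u - t) * χ t`. -/
theorem nonneg_of_convolution_le {χ D : ℝ → ℝ} (hmeas : Measurable χ)
    (hχ : ∀ t, 0 ≤ t → 0 ≤ χ t ∧ χ t ≤ 1) {U u₀ : ℝ} (hInt : IntervalIntegrable D volume 0 U)
    (hu₀ : 1 ≤ u₀) (h₀ : ∀ u ∈ Icc 0 u₀, 0 ≤ D u)
    (h : ∀ u, u₀ < u → u ≤ U → ∫ t in (0 : ℝ)..u, D (u - t) * χ t ≤ u * D u) :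
    ∀ u ∈ Icc 0 U, 0 ≤ D u := by
  intro u hu
  have hU := hu.1.trans hu.2
  have hsub : ∀ b, 0 ≤ b → b ≤ U → IntervalIntegrable D volume 0 b :=
    fun b h0 hb => hInt.mono_set (by
      rw [uIcc_of_le h0, uIcc_of_le hU]; exact Icc_subset_Icc le_rfl hb)
  have hneg : ∀ {b}, 0 ≤ b → IntervalIntegrable D volume 0 b →
      IntervalIntegrable (fun x => max (-D x) 0) volume 0 b := by
    intro b hb hD
    rw [intervalIntegrable_iff_integrableOn_Ioc_of_le hb] at hD ⊢
    exact hD.neg.pos_part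
  have := eq_zero_of_le_primitive (N := fun x => max (-D x) 0) (U := U)
    (fun _ _ => le_max_right _ _) (hneg hU hInt) ?_ u hu
  · have := le_max_left (-D u) 0
    simp_all
  intro u hu
  have hnn : 0 ≤ ∫ x in (0 : ℝ)..u, max (-D x) 0 :=
    intervalIntegral.integral_nonneg hu.1 fun _ _ => le_max_right _ _
  refine max_le ?_ hnn
  by_cases hDu : 0 ≤ D u
  · linarith
  have hlt : u₀ < u := by
    by_contra hle
    exact hDu (h₀ u ⟨hu.1, not_lt.1 hle⟩)
  have h1 := h u hlt hu.2
  have h2 : ∫ t in (0 : ℝ)..u, -(D (u - t) * χ t) ≤ ∫ t in (0 : ℝ)..u, max (-D (u - t)) 0 := by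
    have hN := ((hneg hu.1 (hsub u hu.1 hu.2)).comp_sub_left u).symm
    simp only [sub_zero, sub_self] at hN
    refine intervalIntegral.integral_mono_on hu.1
      (intervalIntegrable_comp_sub_mul hmeas hχ hu.1 (hsub u hu.1 hu.2)).neg hN fun t ht => ?_
    obtain ⟨h0, h1⟩ := hχ t ht.1
    calc -(D (u - t) * χ t) = -D (u - t) * χ t := by ring
      _ ≤ max (-D (u - t)) 0 * χ t := mul_le_mul_of_nonneg_right (le_max_left _ _) h0
      _ ≤ max (-D (u - t)) 0 := mul_le_of_le_one_right (le_max_right _ _) h1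
  rw [intervalIntegral.integral_neg,
    intervalIntegral.integral_comp_sub_left (fun x => max (-D x) 0)] at h2
  simp only [sub_zero, sub_self] at h2
  nlinarith

/-- Solutions of the delay equation are locally integrable, whatever value the Bochner integral
takes where the integrand is not integrable. -/
theorem intervalIntegrable_of_delay_equation {χ σ : ℝ → ℝ} (hmeas : Measurable χ)
    (hχ : ∀ t, 0 ≤ t → 0 ≤ χ t ∧ χ t ≤ 1) (hχ1 : ∀ t : ℝ, 0 ≤ t → t ≤ 1 → χ t = 1)
    (hσ1 : ∀ u : ℝ, 0 ≤ u → u ≤ 1 → σ u = 1)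
    (hσeq : ∀ u : ℝ, 1 < u → u * σ u = ∫ t in (0 : ℝ)..u, σ (u - t) * χ t) {U : ℝ} (hU : 0 ≤ U) :
    IntervalIntegrable σ volume 0 U := by
  have mono : ∀ {a b c}, 0 ≤ a → a ≤ b → b ≤ c → IntervalIntegrable σ volume 0 c →
      IntervalIntegrable σ volume a b := fun ha hab hbc hc => hc.mono_set (by
        rw [uIcc_of_le hab, uIcc_of_le (ha.trans (hab.trans hbc))]; exact Icc_subset_Icc ha hbc)
  have key : ∀ n : ℕ, IntervalIntegrable σ volume 0 (1 + n / 2) := by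
    intro n
    induction n with
    | zero =>
      refine (intervalIntegrable_const (c := (1 : ℝ))).congr fun x hx => ?_
      rw [uIoc_of_le (by simp)] at hx
      exact (hσ1 x hx.1.le (by simpa using hx.2)).symm
    | succ n ih =>
      push_cast
      have hn0 : (0 : ℝ) ≤ n / 2 := by positivity
      set a : ℝ := 1 + n / 2 with ha
      set b : ℝ := 1 + (n + 1) / 2 with hb
      have hab : b = a + 1 / 2 := by rw [ha, hb]; ring
      have ha1 : 1 ≤ a := by linarith
      have hIa : 0 ≤ ∫ x in (0 : ℝ)..a, ‖σ x‖ :=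
        intervalIntegral.integral_nonneg (by linarith) fun _ _ => norm_nonneg _
      let S : Set ℝ := {u | a ≤ u ∧ u ≤ b ∧ IntervalIntegrable σ volume 0 u}
      have haS : a ∈ S := ⟨le_rfl, by linarith, ih⟩
      have hbdd : BddAbove S := ⟨b, fun u hu => hu.2.1⟩
      have hzero : ∀ u, a < u → u ≤ b → u ∉ S → σ u = 0 := by
        intro u hau hub huS
        have hu0 : (0 : ℝ) ≤ u := by linarith
        have hni : ¬ IntervalIntegrable (fun t => σ (u - t) * χ t) volume 0 u := by
          intro hi
          refine huS ⟨hau.le, hub, ?_⟩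
          have h1 : IntervalIntegrable (fun t => σ (u - t)) volume 0 1 := by
            refine (hi.mono_set (d := 1) (c := 0) ?_).congr fun t ht => ?_
            · rw [uIcc_of_le hu0, uIcc_of_le zero_le_one]
              exact Icc_subset_Icc le_rfl (by linarith)
            · rw [uIoc_of_le zero_le_one] at ht
              simp [hχ1 t ht.1.le ht.2]
          have h2 := (h1.comp_sub_left u).symm
          simp only [sub_sub_cancel, sub_zero] at h2
          exact (mono le_rfl (by linarith) (by linarith) ih).trans h2
        have := hσeq u (by linarith)
        rw [intervalIntegral.integral_undef hni] at this
        rcases mul_eq_zero.1 this with h | h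
        · linarith
        · exact h
      have hbound : ∀ u ∈ S, ∫ x in a..u, ‖σ x‖ ≤ ∫ x in (0 : ℝ)..a, ‖σ x‖ := by
        rintro u ⟨hau, hub, hi⟩
        have hu0 : (0 : ℝ) ≤ u := by linarith
        have hsplit := intervalIntegral.integral_add_adjacent_intervals ih.norm
          (mono (by linarith) hau le_rfl hi).norm
        have h1 : ∫ x in a..u, ‖σ x‖ ≤ ∫ x in a..u, ∫ y in (0 : ℝ)..u, ‖σ y‖ := by
          refine intervalIntegral.integral_mono_on_of_le_Ioo hau
            (mono (by linarith) hau le_rfl hi).norm intervalIntegrable_const fun x hx => ?_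
          have hx0 : (0 : ℝ) ≤ x := by linarith [hx.1]
          have hix := mono le_rfl hx0 hx.2.le hi
          have heq := hσeq x (by linarith [hx.1])
          have h2 : ‖x * σ x‖ ≤ ∫ y in (0 : ℝ)..x, ‖σ y‖ := by
            rw [heq]
            refine (intervalIntegral.norm_integral_le_integral_norm hx0).trans ?_
            have hc := (hix.norm.comp_sub_left x).symm
            simp only [sub_zero, sub_self] at hc
            have := intervalIntegral.integral_mono_on hx0
              (intervalIntegrable_comp_sub_mul hmeas hχ hx0 hix).norm hc fun t ht => by
                obtain ⟨h0, h1⟩ := hχ t ht.1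
                rw [norm_mul, Real.norm_eq_abs (χ t), abs_of_nonneg h0]
                exact mul_le_of_le_one_right (norm_nonneg _) h1
            rwa [intervalIntegral.integral_comp_sub_left (fun y => ‖σ y‖), sub_self,
              sub_zero] at this
          have h3 : ∫ y in (0 : ℝ)..x, ‖σ y‖ ≤ ∫ y in (0 : ℝ)..u, ‖σ y‖ := by
            rw [← intervalIntegral.integral_add_adjacent_intervals hix.norm
              (mono hx0 hx.2.le le_rfl hi).norm]
            have := intervalIntegral.integral_nonneg (μ := volume) hx.2.le
              fun y _ => norm_nonneg (σ y)
            linarith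
          rw [norm_mul, Real.norm_eq_abs x, abs_of_nonneg hx0] at h2
          nlinarith [norm_nonneg (σ x), hx.1]
        rw [intervalIntegral.integral_const, smul_eq_mul, ← hsplit] at h1
        have h4 : 0 ≤ ∫ x in a..u, ‖σ x‖ :=
          intervalIntegral.integral_nonneg hau fun _ _ => norm_nonneg _
        nlinarith
      have has : a ≤ sSup S := le_csSup hbdd haS
      have hsb : sSup S ≤ b := csSup_le ⟨a, haS⟩ fun u hu => hu.2.1
      have h1 : IntervalIntegrable σ volume a (sSup S) := by
        rcases has.eq_or_lt with h | h
        · rw [← h]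
        obtain ⟨x, -, hxmem, hxlim⟩ := exists_seq_strictMono_tendsto' h
        have hxS : ∀ k, x k ∈ S := fun k => by
          obtain ⟨y, hy, hxy⟩ := exists_lt_of_lt_csSup ⟨a, haS⟩ (hxmem k).2
          exact ⟨(hxmem k).1.le, hxy.le.trans hy.2.1,
            mono le_rfl (by linarith [(hxmem k).1]) hxy.le hy.2.2⟩
        rw [intervalIntegrable_iff_integrableOn_Ioc_of_le has]
        refine integrableOn_Ioc_of_intervalIntegral_norm_bounded (l := atTop) (a := fun _ => a)
          (b := x) (I := ∫ x in (0 : ℝ)..a, ‖σ x‖) (fun k => ?_) tendsto_const_nhds hxlim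
          (Eventually.of_forall fun k => ?_)
        · exact (intervalIntegrable_iff_integrableOn_Ioc_of_le (hxS k).1).1
            (mono (by linarith) (hxS k).1 le_rfl (hxS k).2.2)
        · rw [← intervalIntegral.integral_of_le (hxS k).1]
          exact hbound _ (hxS k)
      have h2 : IntervalIntegrable σ volume (sSup S) b := by
        refine (intervalIntegrable_const (c := (0 : ℝ))).congr fun x hx => ?_
        rw [uIoc_of_le hsb] at hx
        exact (hzero x (has.trans_lt hx.1) hx.2 fun h => (le_csSup hbdd h).not_gt hx.1).symm
      exact ih.trans (h1.trans h2)
  obtain ⟨n, hn⟩ := exists_nat_ge (2 * U)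
  exact mono le_rfl hU (by linarith) (key n)

theorem le_of_convolution_le {χ w f : ℝ → ℝ} (hmeas : Measurable χ)
    (hχ : ∀ t, 0 ≤ t → 0 ≤ χ t ∧ χ t ≤ 1) {U u₀ : ℝ} (hw : IntervalIntegrable w volume 0 U)
    (hf : IntervalIntegrable f volume 0 U) (hu₀ : 1 ≤ u₀) (h₀ : ∀ u ∈ Icc 0 u₀, w u ≤ f u)
    (hsub : ∀ u, u₀ < u → u ≤ U → u * w u ≤ ∫ t in (0 : ℝ)..u, w (u - t) * χ t)
    (hsup : ∀ u, u₀ < u → u ≤ U → ∫ t in (0 : ℝ)..u, f (u - t) * χ t ≤ u * f u) :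
    ∀ u ∈ Icc 0 U, w u ≤ f u := by
  intro u hu
  have := nonneg_of_convolution_le (D := fun x => f x - w x) hmeas hχ (hf.sub hw) hu₀
    (fun u hu => sub_nonneg.2 (h₀ u hu)) (fun u hlt hle => ?_) u hu
  · exact sub_nonneg.1 this
  have h0 : (0 : ℝ) ≤ u := by linarith
  have mono : uIcc 0 u ⊆ uIcc 0 U := by
    rw [uIcc_of_le h0, uIcc_of_le (h0.trans hle)]; exact Icc_subset_Icc le_rfl hle
  simp only [sub_mul, mul_sub]
  rw [intervalIntegral.integral_sub
    (intervalIntegrable_comp_sub_mul hmeas hχ h0 (hf.mono_set mono))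
    (intervalIntegrable_comp_sub_mul hmeas hχ h0 (hw.mono_set mono))]
  linarith [hsub u hlt hle, hsup u hlt hle]

theorem exists_pos_le_of_delay_equation {χ σ : ℝ → ℝ} (hmeas : Measurable χ)
    (hχ : ∀ t, 0 ≤ t → 0 ≤ χ t ∧ χ t ≤ 1) (hχ1 : ∀ t : ℝ, 0 ≤ t → t ≤ 1 → χ t = 1)
    (hσ1 : ∀ u : ℝ, 0 ≤ u → u ≤ 1 → σ u = 1)
    (hσeq : ∀ u : ℝ, 1 < u → u * σ u = ∫ t in (0 : ℝ)..u, σ (u - t) * χ t) {U : ℝ} (hU : 0 ≤ U) :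
    ∃ c > 0, ∀ u ∈ Icc 0 U, c ≤ σ u := by
  have hσint := intervalIntegrable_of_delay_equation hmeas hχ hχ1 hσ1 hσeq hU
  refine ⟨Real.exp (-(2 * U * U)), Real.exp_pos _, fun u hu => ?_⟩
  have hcont : Continuous fun x : ℝ => Real.exp (-(2 * U * x)) := by fun_prop
  refine le_trans ?_ (le_of_convolution_le (w := fun x => Real.exp (-(2 * U * x))) (f := σ) hmeas hχ
    (hcont.intervalIntegrable _ _) hσint le_rfl (fun x hx => ?_) (fun x hx hxU => ?_)
    (fun x hx _ => (hσeq x hx).ge) u hu)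
  · exact Real.exp_le_exp.2 (by nlinarith [hu.1, hu.2])
  · rw [hσ1 x hx.1 hx.2]
    exact Real.exp_le_one_iff.2 (by nlinarith [hx.1])
  have hx0 : 0 ≤ x := by linarith
  have hi := intervalIntegrable_comp_sub_mul hmeas hχ hx0
    (hcont.intervalIntegrable (μ := volume) 0 x)
  have h1 : ∫ t in (0 : ℝ)..1, Real.exp (-(2 * U * x)) * (1 + 2 * U * t) ≤
      ∫ t in (0 : ℝ)..1, Real.exp (-(2 * U * (x - t))) * χ t := by
    refine intervalIntegral.integral_mono_on zero_le_one
      (Continuous.intervalIntegrable (by fun_prop) _ _) (hi.mono_set ?_) fun t ht => ?_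
    · rw [uIcc_of_le hx0, uIcc_of_le zero_le_one]; exact Icc_subset_Icc le_rfl hx.le
    · rw [hχ1 t ht.1 ht.2, mul_one,
        show -(2 * U * (x - t)) = -(2 * U * x) + 2 * U * t by ring, Real.exp_add]
      have := Real.add_one_le_exp (2 * U * t)
      gcongr
      linarith
  have h2 : ∫ t in (0 : ℝ)..1, Real.exp (-(2 * U * (x - t))) * χ t ≤
      ∫ t in (0 : ℝ)..x, Real.exp (-(2 * U * (x - t))) * χ t := by
    refine intervalIntegral.integral_mono_interval le_rfl zero_le_one hx.le ?_ hi
    refine (ae_restrict_iff' measurableSet_Ioc).2 (Eventually.of_forall fun t ht => ?_)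
    exact mul_nonneg (Real.exp_pos _).le (hχ t ht.1.le).1
  have h3 : ∫ t in (0 : ℝ)..1, Real.exp (-(2 * U * x)) * (1 + 2 * U * t) =
      Real.exp (-(2 * U * x)) * (1 + U) := by
    rw [intervalIntegral.integral_const_mul, intervalIntegral.integral_add (by simp)
      (Continuous.intervalIntegrable (by fun_prop) _ _), intervalIntegral.integral_const_mul]
    simp only [intervalIntegral.integral_const, sub_zero, smul_eq_mul, mul_one, integral_id]
    ring
  have := Real.exp_pos (-(2 * U * x))
  refine le_trans ?_ ((h3.symm.le.trans h1).trans h2)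
  nlinarith

/-- The Legendre-type exponent `ξ(u) u - ∫₁^∞ χ(v) e^{ξ(u) v} / v dv`. -/
noncomputable def rate (χ ξ : ℝ → ℝ) (u : ℝ) : ℝ :=
  ξ u * u - ∫ v in Ioi (1 : ℝ), χ v * Real.exp (ξ u * v) / v

theorem integrableOn_mul_exp_saddle {χ ξ : ℝ → ℝ}
    (hξ : ∀ u : ℝ, 1 < u → u = ∫ v in Ioi (1 : ℝ), χ v * Real.exp (ξ u * v))
    {u : ℝ} (hu : 1 < u) : IntegrableOn (fun v => χ v * Real.exp (ξ u * v)) (Ioi 1) := by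
  by_contra h
  have := hξ u hu
  rw [integral_undef h] at this
  linarith

theorem integrableOn_mul_exp_saddle_div {χ ξ : ℝ → ℝ} (hmeas : Measurable χ)
    (hξ : ∀ u : ℝ, 1 < u → u = ∫ v in Ioi (1 : ℝ), χ v * Real.exp (ξ u * v))
    {u : ℝ} (hu : 1 < u) : IntegrableOn (fun v => χ v * Real.exp (ξ u * v) / v) (Ioi 1) := by
  refine Integrable.mono (integrableOn_mul_exp_saddle hξ hu)
    (Measurable.aestronglyMeasurable (by fun_prop)) ?_
  refine (ae_restrict_iff' measurableSet_Ioi).2 (Eventually.of_forall fun t ht => ?_)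
  rw [norm_div, Real.norm_of_nonneg (r := t) (zero_le_one.trans (le_of_lt ht))]
  exact div_le_self (norm_nonneg _) (le_of_lt ht)

theorem rate_sub_le {χ ξ : ℝ → ℝ} (hmeas : Measurable χ) (hχ : ∀ t, 0 ≤ t → 0 ≤ χ t ∧ χ t ≤ 1)
    (hξ : ∀ u : ℝ, 1 < u → u = ∫ v in Ioi (1 : ℝ), χ v * Real.exp (ξ u * v))
    {x y : ℝ} (hx : 1 < x) (hy : 1 < y) : rate χ ξ y - rate χ ξ x ≤ ξ y * (y - x) := by
  have h1 : ∫ v in Ioi (1 : ℝ), (χ v * Real.exp (ξ x * v) / v +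
      (ξ y - ξ x) * (χ v * Real.exp (ξ x * v))) ≤
      ∫ v in Ioi (1 : ℝ), χ v * Real.exp (ξ y * v) / v := by
    refine setIntegral_mono_on ((integrableOn_mul_exp_saddle_div hmeas hξ hx).add
      ((integrableOn_mul_exp_saddle hξ hx).const_mul _))
      (integrableOn_mul_exp_saddle_div hmeas hξ hy) measurableSet_Ioi fun v hv => ?_
    have hv0 : 0 < v := zero_lt_one.trans hv
    have h := Real.add_one_le_exp ((ξ y - ξ x) * v)
    have h2 : Real.exp (ξ y * v) = Real.exp (ξ x * v) * Real.exp ((ξ y - ξ x) * v) := by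
      rw [← Real.exp_add]; ring_nf
    have h3 : χ v * Real.exp (ξ x * v) / v + (ξ y - ξ x) * (χ v * Real.exp (ξ x * v)) =
        χ v * (Real.exp (ξ x * v) * ((ξ y - ξ x) * v + 1)) / v := by
      field_simp
      ring
    rw [h2, h3]
    have := (hχ v hv0.le).1
    gcongr
  rw [integral_add (integrableOn_mul_exp_saddle_div hmeas hξ hx)
    ((integrableOn_mul_exp_saddle hξ hx).const_mul _), integral_const_mul, ← hξ x hx] at h1
  unfold rate
  linarith

theorem saddle_mono {χ ξ : ℝ → ℝ} (hχ : ∀ t, 0 ≤ t → 0 ≤ χ t ∧ χ t ≤ 1)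
    (hξ : ∀ u : ℝ, 1 < u → u = ∫ v in Ioi (1 : ℝ), χ v * Real.exp (ξ u * v))
    {x y : ℝ} (hx : 1 < x) (hxy : x ≤ y) : ξ x ≤ ξ y := by
  by_contra! hlt
  have hy : 1 < y := hx.trans_le hxy
  have : y ≤ x := by
    rw [hξ x hx, hξ y hy]
    refine setIntegral_mono_on (integrableOn_mul_exp_saddle hξ hy)
      (integrableOn_mul_exp_saddle hξ hx) measurableSet_Ioi fun v hv => ?_
    have hv0 : 0 < v := zero_lt_one.trans hv
    have := (hχ v hv0.le).1
    gcongr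
  rw [le_antisymm this hxy] at hlt
  exact lt_irrefl _ hlt

theorem saddle_le_add_log {χ ξ : ℝ → ℝ} (hχ : ∀ t, 0 ≤ t → 0 ≤ χ t ∧ χ t ≤ 1)
    (hξ : ∀ u : ℝ, 1 < u → u = ∫ v in Ioi (1 : ℝ), χ v * Real.exp (ξ u * v))
    {x y : ℝ} (hx : 1 < x) (hxy : x ≤ y) : ξ y ≤ ξ x + Real.log (y / x) := by
  have hm := saddle_mono hχ hξ hx hxy
  have hy : 1 < y := hx.trans_le hxy
  have h1 : Real.exp (ξ y - ξ x) * x ≤ y := by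
    suffices Real.exp (ξ y - ξ x) * ∫ v in Ioi (1 : ℝ), χ v * Real.exp (ξ x * v) ≤
        ∫ v in Ioi (1 : ℝ), χ v * Real.exp (ξ y * v) by rwa [← hξ x hx, ← hξ y hy] at this
    rw [← integral_const_mul]
    refine setIntegral_mono_on ((integrableOn_mul_exp_saddle hξ hx).const_mul _)
      (integrableOn_mul_exp_saddle hξ hy) measurableSet_Ioi fun v hv => ?_
    have hv1 : 1 < v := hv
    have := (hχ v (zero_le_one.trans hv1.le)).1
    rw [mul_left_comm, ← Real.exp_add]
    gcongr
    nlinarith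
  have h2 := (Real.le_log_iff_exp_le (div_pos (zero_lt_one.trans hy) (zero_lt_one.trans hx))).2
    ((le_div_iff₀ (zero_lt_one.trans hx)).2 h1)
  linarith

theorem monotone_rate_max {χ ξ : ℝ → ℝ} (hmeas : Measurable χ) (hχ : ∀ t, 0 ≤ t → 0 ≤ χ t ∧ χ t ≤ 1)
    (hξ : ∀ u : ℝ, 1 < u → u = ∫ v in Ioi (1 : ℝ), χ v * Real.exp (ξ u * v))
    {u₁ : ℝ} (hu₁ : 1 < u₁) (hpos : 0 ≤ ξ u₁) : Monotone fun x => rate χ ξ (max x u₁) := by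
  intro x y hxy
  have hxy' : max x u₁ ≤ max y u₁ := max_le_max_right _ hxy
  have h1 : u₁ ≤ max x u₁ := le_max_right _ _
  have h2 := rate_sub_le hmeas hχ hξ (x := max y u₁) (y := max x u₁)
    (by linarith) (by linarith)
  have h3 := saddle_mono hχ hξ hu₁ h1
  simp only
  nlinarith

theorem intervalIntegrable_exp_rate {χ ξ : ℝ → ℝ} (hmeas : Measurable χ)
    (hχ : ∀ t, 0 ≤ t → 0 ≤ χ t ∧ χ t ≤ 1)
    (hξ : ∀ u : ℝ, 1 < u → u = ∫ v in Ioi (1 : ℝ), χ v * Real.exp (ξ u * v))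
    {u₁ : ℝ} (hu₁ : 1 < u₁) (hpos : 0 ≤ ξ u₁) (C κ a b : ℝ) :
    IntervalIntegrable (fun x => C * Real.exp (-rate χ ξ (max x u₁) + κ * x)) volume a b := by
  have hanti : Antitone fun x => Real.exp (-rate χ ξ (max x u₁)) := fun x y hxy =>
    Real.exp_le_exp.2 (neg_le_neg (monotone_rate_max hmeas hχ hξ hu₁ hpos hxy))
  simp only [Real.exp_add]
  exact (hanti.intervalIntegrable.mul_continuousOn
    (Continuous.continuousOn (by fun_prop))).const_mul C

theorem integrableOn_Ioc_mul_exp {χ : ℝ → ℝ} (hmeas : Measurable χ)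
    (hχ : ∀ t, 0 ≤ t → 0 ≤ χ t ∧ χ t ≤ 1) {a : ℝ} (ha : 0 ≤ a) (b k : ℝ) :
    IntegrableOn (fun t => χ t * Real.exp (k * t)) (Ioc a b) := by
  have hcont : Continuous fun t : ℝ => Real.exp (k * t) := by fun_prop
  refine Integrable.bdd_mul (c := 1) (hcont.integrableOn_Ioc) hmeas.aestronglyMeasurable ?_
  refine (ae_restrict_iff' measurableSet_Ioc).2 (Eventually.of_forall fun t ht => ?_)
  rw [Real.norm_eq_abs, abs_of_nonneg (hχ t (ha.trans ht.1.le)).1]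
  exact (hχ t (ha.trans ht.1.le)).2

theorem delay_equation_le_one {χ σ : ℝ → ℝ} (hmeas : Measurable χ)
    (hχ : ∀ t, 0 ≤ t → 0 ≤ χ t ∧ χ t ≤ 1) (hχ1 : ∀ t : ℝ, 0 ≤ t → t ≤ 1 → χ t = 1)
    (hσ1 : ∀ u : ℝ, 0 ≤ u → u ≤ 1 → σ u = 1)
    (hσeq : ∀ u : ℝ, 1 < u → u * σ u = ∫ t in (0 : ℝ)..u, σ (u - t) * χ t) {u : ℝ} (hu : 0 ≤ u) :
    σ u ≤ 1 := by
  refine le_of_convolution_le (f := fun _ => 1) hmeas hχ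
    (intervalIntegrable_of_delay_equation hmeas hχ hχ1 hσ1 hσeq hu) intervalIntegrable_const le_rfl
    (fun x hx => (hσ1 x hx.1 hx.2).le) (fun x hx _ => (hσeq x hx).le) (fun x hx _ => ?_)
    u ⟨hu, le_rfl⟩
  have hx0 : 0 ≤ x := by linarith
  have := intervalIntegral.integral_mono_on hx0
    (intervalIntegrable_comp_sub_mul (D := fun _ => 1) hmeas hχ hx0 intervalIntegrable_const)
    (intervalIntegrable_const (c := (1 : ℝ))) fun t ht => by
      rw [one_mul]; exact (hχ t ht.1).2
  simpa using this

theorem integral_exp_sub_mul_le {χ ξ : ℝ → ℝ} (hmeas : Measurable χ)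
    (hχ : ∀ t, 0 ≤ t → 0 ≤ χ t ∧ χ t ≤ 1)
    (hξ : ∀ u : ℝ, 1 < u → u = ∫ v in Ioi (1 : ℝ), χ v * Real.exp (ξ u * v))
    {δ u : ℝ} (hδ : 0 ≤ δ) (hu : 1 < u) (hpos : 0 ≤ ξ u)
    (hexp : Real.exp (ξ u) ≤ (1 - Real.exp (-δ)) * u) :
    ∫ t in (0 : ℝ)..u, χ t * Real.exp ((ξ u - δ) * t) ≤ u := by
  have hi : ∀ a b, 0 ≤ a → a ≤ b →
      IntervalIntegrable (fun t => χ t * Real.exp ((ξ u - δ) * t)) volume a b := fun a b ha hab =>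
    (intervalIntegrable_iff_integrableOn_Ioc_of_le hab).2
      (integrableOn_Ioc_mul_exp hmeas hχ ha b _)
  rw [← intervalIntegral.integral_add_adjacent_intervals (hi 0 1 le_rfl zero_le_one)
    (hi 1 u zero_le_one hu.le)]
  have h1 : ∫ t in (0 : ℝ)..1, χ t * Real.exp ((ξ u - δ) * t) ≤ Real.exp (ξ u) := by
    have := intervalIntegral.integral_mono_on zero_le_one (hi 0 1 le_rfl zero_le_one)
      (intervalIntegrable_const (c := Real.exp (ξ u))) fun t ht => by
        obtain ⟨h0, h1⟩ := hχ t ht.1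
        refine (mul_le_of_le_one_left (Real.exp_pos _).le h1).trans (Real.exp_le_exp.2 ?_)
        nlinarith [ht.1, ht.2, mul_nonneg hδ ht.1, mul_nonneg hpos (sub_nonneg.2 ht.2)]
    simpa using this
  have h2 : ∫ t in (1 : ℝ)..u, χ t * Real.exp ((ξ u - δ) * t) ≤ Real.exp (-δ) * u := by
    rw [intervalIntegral.integral_of_le hu.le]
    calc ∫ t in Ioc 1 u, χ t * Real.exp ((ξ u - δ) * t)
        ≤ ∫ t in Ioc 1 u, Real.exp (-δ) * (χ t * Real.exp (ξ u * t)) := by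
          refine setIntegral_mono_on (integrableOn_Ioc_mul_exp hmeas hχ zero_le_one u _)
            ((integrableOn_Ioc_mul_exp hmeas hχ zero_le_one u _).const_mul _) measurableSet_Ioc
            fun t ht => ?_
          have := (hχ t (zero_le_one.trans ht.1.le)).1
          rw [mul_left_comm, ← Real.exp_add]
          gcongr
          nlinarith [ht.1]
      _ = Real.exp (-δ) * ∫ t in Ioc 1 u, χ t * Real.exp (ξ u * t) := integral_const_mul _ _
      _ ≤ Real.exp (-δ) * ∫ t in Ioi (1 : ℝ), χ t * Real.exp (ξ u * t) := by
          refine mul_le_mul_of_nonneg_left (setIntegral_mono_set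
            (integrableOn_mul_exp_saddle hξ hu) ?_ Ioc_subset_Ioi_self.eventuallyLE)
            (Real.exp_pos _).le
          refine (ae_restrict_iff' measurableSet_Ioi).2 (Eventually.of_forall fun t ht => ?_)
          exact mul_nonneg (hχ t (zero_le_one.trans (le_of_lt ht))).1 (Real.exp_pos _).le
      _ = Real.exp (-δ) * u := by rw [← hξ u hu]
  linarith

/-- Upper bound by comparison with the supersolution `exp (-rate + δ u)`. -/
theorem log_add_rate_le {χ σ ξ : ℝ → ℝ} (hmeas : Measurable χ)
    (hχ : ∀ t, 0 ≤ t → 0 ≤ χ t ∧ χ t ≤ 1) (hχ1 : ∀ t : ℝ, 0 ≤ t → t ≤ 1 → χ t = 1)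
    (hσ1 : ∀ u : ℝ, 0 ≤ u → u ≤ 1 → σ u = 1)
    (hσeq : ∀ u : ℝ, 1 < u → u * σ u = ∫ t in (0 : ℝ)..u, σ (u - t) * χ t)
    (hξ : ∀ u : ℝ, 1 < u → u = ∫ v in Ioi (1 : ℝ), χ v * Real.exp (ξ u * v))
    (hpos : ∃ u₁, 1 < u₁ ∧ 0 ≤ ξ u₁)
    (hexp : ∀ ε > 0, ∀ᶠ u in atTop, Real.exp (ξ u) ≤ ε * u) {δ : ℝ} (hδ : 0 < δ) :
    ∃ C, ∀ᶠ u in atTop, Real.log (σ u) + rate χ ξ u ≤ C + δ * u := by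
  obtain ⟨u₁, hu₁, hξ₁⟩ := hpos
  have hε : 0 < 1 - Real.exp (-δ) := sub_pos.2 (Real.exp_lt_one_iff.2 (by linarith))
  obtain ⟨B, hB⟩ := eventually_atTop.1 (hexp _ hε)
  set u₀ := max B u₁ with hu₀
  have hBu : B ≤ u₀ := le_max_left _ _
  have h1u : u₁ ≤ u₀ := le_max_right _ _
  have hmono := monotone_rate_max hmeas hχ hξ hu₁ hξ₁
  refine ⟨rate χ ξ u₀, ?_⟩
  filter_upwards [eventually_ge_atTop u₀] with u hu
  have hu0 : 0 ≤ u := by linarith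
  have hle := le_of_convolution_le (w := σ)
    (f := fun x => Real.exp (rate χ ξ u₀) * Real.exp (-rate χ ξ (max x u₁) + δ * x)) hmeas hχ
    (intervalIntegrable_of_delay_equation hmeas hχ hχ1 hσ1 hσeq hu0)
    (intervalIntegrable_exp_rate hmeas hχ hξ hu₁ hξ₁ _ δ 0 u) (u₀ := u₀) (by linarith)
    (fun x hx => ?_) (fun x hx _ => (hσeq x (by linarith)).le) (fun x hx _ => ?_) u ⟨hu0, le_rfl⟩
  · obtain ⟨c, hc, hcσ⟩ := exists_pos_le_of_delay_equation hmeas hχ hχ1 hσ1 hσeq hu0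
    have hσpos : 0 < σ u := hc.trans_le (hcσ u ⟨hu0, le_rfl⟩)
    rw [max_eq_left (h1u.trans hu), ← Real.exp_add] at hle
    have := Real.log_le_log hσpos hle
    rw [Real.log_exp] at this
    linarith
  · refine (delay_equation_le_one hmeas hχ hχ1 hσ1 hσeq hx.1).trans ?_
    rw [← Real.exp_add]
    refine Real.one_le_exp ?_
    have := hmono hx.2
    simp only [max_eq_left h1u] at this
    nlinarith [mul_nonneg hδ.le hx.1]
  · have hx1 : 1 < x := by linarith
    have hx0 : 0 ≤ x := by linarith
    have hξx : 0 ≤ ξ x := hξ₁.trans (saddle_mono hχ hξ hu₁ (by linarith))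
    set K := Real.exp (rate χ ξ u₀) * Real.exp (-rate χ ξ x + δ * x) with hK
    have hK0 : 0 ≤ K := by positivity
    have hi2 : IntervalIntegrable (fun t => K * (χ t * Real.exp ((ξ x - δ) * t))) volume 0 x :=
      ((intervalIntegrable_iff_integrableOn_Ioc_of_le hx0).2
        (integrableOn_Ioc_mul_exp hmeas hχ le_rfl x _)).const_mul _
    have h1 := intervalIntegral.integral_mono_on hx0
      (intervalIntegrable_comp_sub_mul hmeas hχ hx0
        (intervalIntegrable_exp_rate hmeas hχ hξ hu₁ hξ₁ (Real.exp (rate χ ξ u₀)) δ 0 x)) hi2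
      fun t ht => by
        have hr := rate_sub_le hmeas hχ hξ (x := max (x - t) u₁) (y := x)
          (hu₁.trans_le (le_max_right _ _)) hx1
        have hm := mul_le_mul_of_nonneg_left
          (sub_le_comm.1 (le_max_left (x - t) u₁)) hξx
        calc Real.exp (rate χ ξ u₀) * Real.exp (-rate χ ξ (max (x - t) u₁) + δ * (x - t)) * χ t
            ≤ Real.exp (rate χ ξ u₀) *
                Real.exp (-rate χ ξ x + δ * x + (ξ x - δ) * t) * χ t := by
              refine mul_le_mul_of_nonneg_right (mul_le_mul_of_nonneg_left
                (Real.exp_le_exp.2 ?_) (Real.exp_pos _).le) (hχ t ht.1).1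
              linarith
          _ = K * (χ t * Real.exp ((ξ x - δ) * t)) := by
              rw [hK, Real.exp_add (-rate χ ξ x + δ * x)]; ring
    rw [intervalIntegral.integral_const_mul] at h1
    have h2 := integral_exp_sub_mul_le hmeas hχ hξ hδ.le hx1 hξx (hB x (by linarith))
    simp only [max_eq_left (show u₁ ≤ x by linarith)]
    calc _ ≤ _ := h1
      _ ≤ K * x := mul_le_mul_of_nonneg_left h2 hK0
      _ = x * K := mul_comm _ _

/-- Lower bound by comparison with the subsolution `exp (-rate - 3 δ u)`. -/
theorem le_log_add_rate {χ σ ξ : ℝ → ℝ} (hmeas : Measurable χ)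
    (hχ : ∀ t, 0 ≤ t → 0 ≤ χ t ∧ χ t ≤ 1) (hχ1 : ∀ t : ℝ, 0 ≤ t → t ≤ 1 → χ t = 1)
    (hσ1 : ∀ u : ℝ, 0 ≤ u → u ≤ 1 → σ u = 1)
    (hσeq : ∀ u : ℝ, 1 < u → u * σ u = ∫ t in (0 : ℝ)..u, σ (u - t) * χ t)
    (hξ : ∀ u : ℝ, 1 < u → u = ∫ v in Ioi (1 : ℝ), χ v * Real.exp (ξ u * v))
    (hpos : ∃ u₁, 1 < u₁ ∧ 0 ≤ ξ u₁) {δ : ℝ} (hδ : 0 < δ) (hδ2 : δ ≤ 1 / 2)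
    (hmass : ∀ᶠ u in atTop, u ≤ ∫ t in Ioc 1 (δ * u), χ t * Real.exp ((ξ u + δ) * t)) :
    ∃ C, ∀ᶠ u in atTop, C - 3 * δ * u ≤ Real.log (σ u) + rate χ ξ u := by
  obtain ⟨u₁, hu₁, hξ₁⟩ := hpos
  obtain ⟨B, hB⟩ := eventually_atTop.1 hmass
  set u₀ := max B (2 * u₁) with hu₀
  have hBu : B ≤ u₀ := le_max_left _ _
  have h1u : 2 * u₁ ≤ u₀ := le_max_right _ _
  have hmono := monotone_rate_max hmeas hχ hξ hu₁ hξ₁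
  obtain ⟨c, hc, hcσ⟩ := exists_pos_le_of_delay_equation hmeas hχ hχ1 hσ1 hσeq
    (show (0 : ℝ) ≤ u₀ by linarith)
  refine ⟨Real.log c + rate χ ξ u₁, ?_⟩
  filter_upwards [eventually_ge_atTop u₀] with u hu
  have hu0 : 0 ≤ u := by linarith
  have hle := le_of_convolution_le (f := σ)
    (w := fun x => c * Real.exp (rate χ ξ u₁) *
      Real.exp (-rate χ ξ (max x u₁) + (-(3 * δ)) * x)) hmeas hχ
    (intervalIntegrable_exp_rate hmeas hχ hξ hu₁ hξ₁ _ _ 0 u)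
    (intervalIntegrable_of_delay_equation hmeas hχ hχ1 hσ1 hσeq hu0) (u₀ := u₀) (by linarith)
    (fun x hx => ?_) (fun x hx _ => ?_) (fun x hx _ => (hσeq x (by linarith)).ge) u ⟨hu0, le_rfl⟩
  · rw [max_eq_left (by linarith)] at hle
    have := Real.log_le_log (by positivity) hle
    rw [Real.log_mul (by positivity) (by positivity), Real.log_mul (by positivity) (by positivity),
      Real.log_exp, Real.log_exp] at this
    linarith
  · refine le_trans ?_ (hcσ x hx)
    rw [mul_assoc, ← Real.exp_add]
    refine mul_le_of_le_one_right hc.le (Real.exp_le_one_iff.2 ?_)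
    have := hmono hx.1
    simp only [max_eq_right (show (0 : ℝ) ≤ u₁ by linarith)] at this
    nlinarith [mul_nonneg hδ.le hx.1]
  · have hx1 : 1 < x := by linarith
    have hx0 : 0 ≤ x := by linarith
    set A := c * Real.exp (rate χ ξ u₁) with hA
    have hA0 : 0 < A := by positivity
    set K := A * Real.exp (-rate χ ξ x + (-(3 * δ)) * x) with hK
    have hK0 : 0 ≤ K := by positivity
    have hi := intervalIntegrable_comp_sub_mul hmeas hχ hx0
      (intervalIntegrable_exp_rate hmeas hχ hξ hu₁ hξ₁ A (-(3 * δ)) 0 x)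
    rw [intervalIntegrable_iff_integrableOn_Ioc_of_le hx0] at hi
    have hδx : δ * x ≤ x / 2 := by nlinarith
    have hsubset : Ioc 1 (δ * x) ⊆ Ioc 0 x := Ioc_subset_Ioc zero_le_one (by linarith)
    rw [intervalIntegral.integral_of_le hx0]
    simp only [max_eq_left (show u₁ ≤ x by linarith)]
    calc x * K = K * x := mul_comm _ _
      _ ≤ K * ∫ t in Ioc 1 (δ * x), χ t * Real.exp ((ξ x + δ) * t) :=
          mul_le_mul_of_nonneg_left (hB x (by linarith)) hK0
      _ = ∫ t in Ioc 1 (δ * x), K * (χ t * Real.exp ((ξ x + δ) * t)) :=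
          (integral_const_mul _ _).symm
      _ ≤ ∫ t in Ioc 1 (δ * x),
            A * Real.exp (-rate χ ξ (max (x - t) u₁) + (-(3 * δ)) * (x - t)) * χ t := by
          refine setIntegral_mono_on
            ((integrableOn_Ioc_mul_exp hmeas hχ zero_le_one _ _).const_mul _)
            (hi.mono_set hsubset) measurableSet_Ioc fun t ht => ?_
          have ht0 : 0 ≤ t := by linarith [ht.1]
          have hxt : x / 2 ≤ x - t := by linarith [ht.2]
          have hxt1 : 1 < x - t := by linarith
          rw [max_eq_left (show u₁ ≤ x - t by linarith)]
          have hr := rate_sub_le hmeas hχ hξ hx1 hxt1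
          have hl := saddle_le_add_log hχ hξ hxt1 (show x - t ≤ x by linarith)
          have hlog : Real.log (x / (x - t)) ≤ 2 * δ := by
            refine (Real.log_le_sub_one_of_pos (div_pos (by linarith) (by linarith))).trans ?_
            rw [sub_le_iff_le_add, div_le_iff₀ (by linarith)]
            nlinarith [ht.2]
          have hm := mul_le_mul_of_nonneg_right (hl.trans (add_le_add_right hlog _)) ht0
          calc K * (χ t * Real.exp ((ξ x + δ) * t))
              = A * Real.exp (-rate χ ξ x + (-(3 * δ)) * x + (ξ x + δ) * t) * χ t := by
                rw [hK, Real.exp_add (-rate χ ξ x + (-(3 * δ)) * x)]; ring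
            _ ≤ _ := by
                refine mul_le_mul_of_nonneg_right (mul_le_mul_of_nonneg_left
                  (Real.exp_le_exp.2 ?_) hA0.le) (hχ t ht0).1
                linarith
      _ ≤ _ := by
          refine setIntegral_mono_set hi ?_ hsubset.eventuallyLE
          refine (ae_restrict_iff' measurableSet_Ioc).2 (Eventually.of_forall fun t ht => ?_)
          exact mul_nonneg (by positivity) (hχ t ht.1.le).1

theorem exists_saddle_nonneg {χ ξ : ℝ → ℝ} (hχ : ∀ t, 0 ≤ t → 0 ≤ χ t ∧ χ t ≤ 1)
    (hξ : ∀ u : ℝ, 1 < u → u = ∫ v in Ioi (1 : ℝ), χ v * Real.exp (ξ u * v))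
    (hInt : IntegrableOn χ (Ioi 1)) : ∃ u, 1 < u ∧ 0 ≤ ξ u := by
  set I := ∫ v in Ioi (1 : ℝ), χ v with hI
  have hu : 1 < max I 1 + 1 := by linarith [le_max_right I 1]
  refine ⟨max I 1 + 1, hu, ?_⟩
  by_contra! hneg
  have : max I 1 + 1 ≤ I := by
    conv_lhs => rw [hξ _ hu]
    refine setIntegral_mono_on (integrableOn_mul_exp_saddle hξ hu) hInt measurableSet_Ioi
      fun v hv => ?_
    have hv0 : 0 ≤ v := zero_le_one.trans (le_of_lt hv)
    exact mul_le_of_le_one_right (hχ v hv0).1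
      (Real.exp_le_one_iff.2 (mul_nonpos_of_nonpos_of_nonneg hneg.le hv0))
  linarith [le_max_left I 1]

theorem eventually_exp_saddle_le {χ ξ : ℝ → ℝ} (hχ : ∀ t, 0 ≤ t → 0 ≤ χ t ∧ χ t ≤ 1)
    (hξ : ∀ u : ℝ, 1 < u → u = ∫ v in Ioi (1 : ℝ), χ v * Real.exp (ξ u * v))
    (hInt : IntegrableOn χ (Ioi 1)) {a : ℝ} (ha : 1 < a) (hmass : 0 < ∫ v in Ioi a, χ v)
    {ε : ℝ} (hε : 0 < ε) : ∀ᶠ u in atTop, Real.exp (ξ u) ≤ ε * u := by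
  obtain ⟨u₁, hu₁, hξ₁⟩ := exists_saddle_nonneg hχ hξ hInt
  set c := ∫ v in Ioi a, χ v with hc
  filter_upwards [eventually_ge_atTop u₁,
    (tendsto_rpow_atTop (sub_pos.2 ha)).eventually_gt_atTop (1 / (c * ε ^ a))] with u hu hbig
  have hu1 : 1 < u := hu₁.trans_le hu
  have hu0 : 0 < u := by linarith
  have hξu : 0 ≤ ξ u := hξ₁.trans (saddle_mono hχ hξ hu₁ hu)
  have hsub : Ioi a ⊆ Ioi (1 : ℝ) := Ioi_subset_Ioi ha.le
  have hle : Real.exp (ξ u * a) * c ≤ u := by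
    calc Real.exp (ξ u * a) * c = ∫ v in Ioi a, Real.exp (ξ u * a) * χ v :=
          (integral_const_mul _ _).symm
      _ ≤ ∫ v in Ioi a, χ v * Real.exp (ξ u * v) := by
          refine setIntegral_mono_on ((hInt.mono_set hsub).const_mul _)
            ((integrableOn_mul_exp_saddle hξ hu1).mono_set hsub) measurableSet_Ioi fun v hv => ?_
          have hv' : a < v := hv
          have := (hχ v (by linarith)).1
          rw [mul_comm]
          gcongr
      _ ≤ ∫ v in Ioi 1, χ v * Real.exp (ξ u * v) := by
          refine setIntegral_mono_set (integrableOn_mul_exp_saddle hξ hu1) ?_ hsub.eventuallyLE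
          refine (ae_restrict_iff' measurableSet_Ioi).2 (Eventually.of_forall fun t ht => ?_)
          exact mul_nonneg (hχ t (zero_le_one.trans (le_of_lt ht))).1 (Real.exp_pos _).le
      _ = u := (hξ u hu1).symm
  by_contra! hlt
  have h1 : (ε * u) ^ a ≤ Real.exp (ξ u * a) := by
    rw [Real.exp_mul]
    exact Real.rpow_le_rpow (by positivity) hlt.le (by linarith)
  have h2 : (ε * u) ^ a = ε ^ a * (u * u ^ (a - 1)) := by
    rw [Real.mul_rpow hε.le hu0.le]
    congr 1
    rw [Real.rpow_sub_one hu0.ne']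
    field_simp
  rw [div_lt_iff₀ (by positivity)] at hbig
  have h3 := (mul_le_mul_of_nonneg_right h1 hmass.le).trans hle
  rw [h2] at h3
  nlinarith

theorem mass_of_vanishing {χ ξ : ℝ → ℝ} (hmeas : Measurable χ)
    (hχ : ∀ t, 0 ≤ t → 0 ≤ χ t ∧ χ t ≤ 1)
    (hξ : ∀ u : ℝ, 1 < u → u = ∫ v in Ioi (1 : ℝ), χ v * Real.exp (ξ u * v))
    (hInt : IntegrableOn χ (Ioi 1)) {T : ℝ} (hT : 1 < T) (hT0 : ∫ t in Ioi T, χ t = 0)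
    {δ : ℝ} (hδ : 0 < δ) :
    ∀ᶠ u in atTop, u ≤ ∫ t in Ioc 1 (δ * u), χ t * Real.exp ((ξ u + δ) * t) := by
  have hae : χ =ᵐ[volume.restrict (Ioi T)] 0 := by
    refine (setIntegral_eq_zero_iff_of_nonneg_ae ?_
      (hInt.mono_set (Ioi_subset_Ioi hT.le))).1 hT0
    refine (ae_restrict_iff' measurableSet_Ioi).2 (Eventually.of_forall fun t ht => ?_)
    exact (hχ t ((zero_lt_one.trans hT).trans ht).le).1
  filter_upwards [eventually_gt_atTop 1, eventually_ge_atTop (T / δ)] with u hu hTu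
  have hTu' : T ≤ δ * u := by rwa [div_le_iff₀' hδ] at hTu
  have hi := integrableOn_mul_exp_saddle hξ hu
  have h1 : ∫ t in Ioi (δ * u), χ t * Real.exp (ξ u * t) = 0 := by
    refine integral_eq_zero_of_ae ?_
    filter_upwards [ae_restrict_of_ae_restrict_of_subset (Ioi_subset_Ioi hTu') hae] with t ht
    simp [ht]
  have h2 := setIntegral_union Ioc_disjoint_Ioi_same measurableSet_Ioi
    (hi.mono_set Ioc_subset_Ioi_self) (hi.mono_set (Ioi_subset_Ioi (hT.le.trans hTu')))
  rw [Ioc_union_Ioi_eq_Ioi (hT.le.trans hTu'), h1, add_zero, ← hξ u hu] at h2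
  conv_lhs => rw [h2]
  refine setIntegral_mono_on (hi.mono_set Ioc_subset_Ioi_self)
    (integrableOn_Ioc_mul_exp hmeas hχ zero_le_one _ _) measurableSet_Ioc fun t ht => ?_
  have ht0 : 0 ≤ t := by linarith [ht.1]
  have := (hχ t ht0).1
  gcongr
  linarith

theorem integrable_and_mass_of_rpow_decay {χ e h : ℝ → ℝ} (hmeas : Measurable χ)
    (hχ : ∀ t, 0 ≤ t → 0 ≤ χ t ∧ χ t ≤ 1) (he : Tendsto e atTop (𝓝 0))
    (hh : Tendsto h atTop atTop) (hχe : ∀ t : ℝ, 1 ≤ t → χ t = ((1 + e t) / h t) ^ t) :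
    IntegrableOn χ (Ioi 1) ∧ ∃ a, 1 < a ∧ 0 < ∫ v in Ioi a, χ v := by
  have hev : ∀ᶠ t in atTop, 0 < χ t ∧ χ t ≤ Real.exp (-1 * t) := by
    filter_upwards [he.eventually_const_lt (show (-1 : ℝ) < 0 by norm_num),
      he.eventually_lt_const (show (0 : ℝ) < 1 by norm_num),
      hh.eventually_ge_atTop (Real.exp 2), eventually_ge_atTop 1] with t h1 h2 h3 h4
    have hpos : 0 < h t := (Real.exp_pos _).trans_le h3
    have hb : 0 < (1 + e t) / h t := div_pos (by linarith) hpos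
    rw [hχe t h4, Real.exp_mul]
    refine ⟨Real.rpow_pos_of_pos hb t, Real.rpow_le_rpow hb.le ?_ (by linarith)⟩
    rw [div_le_iff₀ hpos]
    calc 1 + e t ≤ Real.exp 1 := by linarith [Real.add_one_le_exp 1]
      _ = Real.exp (-1) * Real.exp 2 := by rw [← Real.exp_add]; norm_num
      _ ≤ Real.exp (-1) * h t := by gcongr
  obtain ⟨B, hB⟩ := eventually_atTop.1 hev
  set K := max B 2 with hK
  have hBK : B ≤ K := le_max_left _ _
  have h2K : 2 ≤ K := le_max_right _ _
  have hiK : IntegrableOn χ (Ioi K) := by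
    refine Integrable.mono' (integrableOn_exp_mul_Ioi (show (-1 : ℝ) < 0 by norm_num) K)
      hmeas.aestronglyMeasurable ?_
    refine (ae_restrict_iff' measurableSet_Ioi).2 (Eventually.of_forall fun t ht => ?_)
    have := hB t (hBK.trans (le_of_lt ht))
    rw [Real.norm_of_nonneg this.1.le]
    exact this.2
  have hi : IntegrableOn χ (Ioc 1 K) := by
    simpa using integrableOn_Ioc_mul_exp hmeas hχ zero_le_one K 0
  refine ⟨?_, K, by linarith, ?_⟩
  · rw [← Ioc_union_Ioi_eq_Ioi (show (1 : ℝ) ≤ K by linarith)]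
    exact hi.union hiK
  · rw [setIntegral_pos_iff_support_of_nonneg_ae ?_ hiK]
    · have : Function.support χ ∩ Ioi K = Ioi K := inter_eq_right.2 fun t ht =>
        (hB t (hBK.trans (le_of_lt ht))).1.ne'
      simp [this]
    · refine (ae_restrict_iff' measurableSet_Ioi).2 (Eventually.of_forall fun t ht => ?_)
      exact (hB t (hBK.trans (le_of_lt ht))).1.le

theorem mass_of_rpow_decay {χ ξ e h : ℝ → ℝ} (hmeas : Measurable χ)
    (hχ : ∀ t, 0 ≤ t → 0 ≤ χ t ∧ χ t ≤ 1)
    (hξ : ∀ u : ℝ, 1 < u → u = ∫ v in Ioi (1 : ℝ), χ v * Real.exp (ξ u * v))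
    (he : Tendsto e atTop (𝓝 0)) (hmono : Monotone h) (hh : Tendsto h atTop atTop)
    (hχe : ∀ t : ℝ, 1 ≤ t → χ t = ((1 + e t) / h t) ^ t) {δ : ℝ} (hδ : 0 < δ) :
    ∀ᶠ u in atTop, u ≤ ∫ t in Ioc 1 (δ * u), χ t * Real.exp ((ξ u + δ) * t) := by
  have hlo : Real.exp (-(δ / 8)) - 1 < 0 := by
    linarith [Real.exp_lt_one_iff.2 (show -(δ / 8) < 0 by linarith)]
  have hhi : 0 < Real.exp (δ / 8) - 1 := by
    linarith [Real.one_lt_exp_iff.2 (show 0 < δ / 8 by linarith)]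
  obtain ⟨B, hB⟩ := eventually_atTop.1 ((he.eventually_const_lt hlo).and
    ((he.eventually_lt_const hhi).and (hh.eventually_gt_atTop 0)))
  set K := max B 1 with hK
  have hBK : B ≤ K := le_max_left _ _
  have h1K : 1 ≤ K := le_max_right _ _
  filter_upwards [eventually_gt_atTop 1, eventually_ge_atTop ((K + 1) / δ),
    eventually_ge_atTop (2 / δ), eventually_ge_atTop (8 / (δ ^ 2 / 2) ^ 2),
    eventually_ge_atTop ((8 / δ + 8) / δ)] with u hu hKu hu2 hu3 hu4
  rw [div_le_iff₀' hδ] at hKu hu2 hu4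
  rw [div_le_iff₀' (by positivity)] at hu3
  have hi := integrableOn_mul_exp_saddle hξ hu
  have hiδ := integrableOn_Ioc_mul_exp hmeas hχ zero_le_one (δ * u) (ξ u + δ)
  have h1δu : 1 ≤ δ * u := by linarith
  by_cases hcase : h (δ * u) ≤ Real.exp (ξ u + δ / 4)
  · have hlow : ∀ t ∈ Ioc (δ * u - 1) (δ * u),
        Real.exp (δ / 2 * (δ * u - 1)) ≤ χ t * Real.exp ((ξ u + δ) * t) := by
      intro t ht
      have htK : K ≤ t := by linarith [ht.1]
      obtain ⟨h1, -, h3⟩ := hB t (hBK.trans htK)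
      have hb : Real.exp (-(δ / 8) - (ξ u + δ / 4)) ≤ (1 + e t) / h t := by
        rw [Real.exp_sub]
        exact div_le_div₀ (by linarith [Real.exp_pos (-(δ / 8))]) (by linarith) h3
          ((hmono ht.2).trans hcase)
      have hp := Real.rpow_le_rpow (Real.exp_pos _).le hb (show 0 ≤ t by linarith)
      rw [← Real.exp_mul, ← hχe t (by linarith)] at hp
      refine le_trans ?_ (mul_le_mul_of_nonneg_right hp (Real.exp_pos _).le)
      rw [← Real.exp_add]
      refine Real.exp_le_exp.2 ?_
      nlinarith [ht.1, mul_le_mul_of_nonneg_left ht.1.le hδ.le]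
    have hconst : Real.exp (δ / 2 * (δ * u - 1)) ≤
        ∫ t in Ioc (δ * u - 1) (δ * u), χ t * Real.exp ((ξ u + δ) * t) := by
      have := setIntegral_mono_on (μ := volume) continuous_const.integrableOn_Ioc
        (hiδ.mono_set (Ioc_subset_Ioc_left (by linarith))) measurableSet_Ioc hlow
      simpa using this
    have hset : ∫ t in Ioc (δ * u - 1) (δ * u), χ t * Real.exp ((ξ u + δ) * t) ≤
        ∫ t in Ioc 1 (δ * u), χ t * Real.exp ((ξ u + δ) * t) := by
      refine setIntegral_mono_set hiδ ?_ (Ioc_subset_Ioc_left (by linarith)).eventuallyLE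
      refine (ae_restrict_iff' measurableSet_Ioc).2 (Eventually.of_forall fun t ht => ?_)
      exact mul_nonneg (hχ t (by linarith [ht.1])).1 (Real.exp_pos _).le
    refine le_trans ?_ (hconst.trans hset)
    have hy : δ ^ 2 / 4 * u ≤ δ / 2 * (δ * u - 1) := by nlinarith
    have hy0 : 0 ≤ δ ^ 2 / 4 * u := by positivity
    have hq := Real.quadratic_le_exp_of_nonneg hy0
    refine le_trans ?_ (hq.trans (Real.exp_le_exp.2 hy))
    nlinarith
  · push Not at hcase
    have hup : ∀ t ∈ Ioi (δ * u), χ t * Real.exp (ξ u * t) ≤ Real.exp (-(δ / 8) * t) := by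
      intro t ht
      have ht' : δ * u < t := ht
      obtain ⟨h1, h2, h3⟩ := hB t (by linarith)
      have hb : (1 + e t) / h t ≤ Real.exp (δ / 8 - (ξ u + δ / 4)) := by
        rw [Real.exp_sub]
        exact div_le_div₀ (Real.exp_pos _).le (by linarith) (Real.exp_pos _)
          (hcase.le.trans (hmono ht'.le))
      have hb0 : 0 ≤ (1 + e t) / h t :=
        div_nonneg (by linarith [Real.exp_pos (-(δ / 8))]) h3.le
      have hp := Real.rpow_le_rpow hb0 hb (show 0 ≤ t by linarith)
      rw [← Real.exp_mul, ← hχe t (by linarith)] at hp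
      refine (mul_le_mul_of_nonneg_right hp (Real.exp_pos _).le).trans ?_
      rw [← Real.exp_add]
      exact Real.exp_le_exp.2 (by linarith)
    have hneg : -(δ / 8) < 0 := by linarith
    have htail : ∫ t in Ioi (δ * u), χ t * Real.exp (ξ u * t) ≤ 8 / δ := by
      refine (setIntegral_mono_on (hi.mono_set (Ioi_subset_Ioi h1δu))
        (integrableOn_exp_mul_Ioi hneg _) measurableSet_Ioi hup).trans ?_
      rw [integral_exp_mul_Ioi hneg, neg_div_neg_eq, div_div_eq_mul_div]
      gcongr
      have := Real.exp_le_one_iff.2 (show -(δ / 8) * (δ * u) ≤ 0 by nlinarith)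
      linarith
    have h2 := setIntegral_union Ioc_disjoint_Ioi_same measurableSet_Ioi
      (hi.mono_set Ioc_subset_Ioi_self) (hi.mono_set (Ioi_subset_Ioi h1δu))
    rw [Ioc_union_Ioi_eq_Ioi h1δu, ← hξ u hu] at h2
    have h3 : Real.exp δ * ∫ t in Ioc 1 (δ * u), χ t * Real.exp (ξ u * t) ≤
        ∫ t in Ioc 1 (δ * u), χ t * Real.exp ((ξ u + δ) * t) := by
      rw [← integral_const_mul]
      refine setIntegral_mono_on ((hi.mono_set Ioc_subset_Ioi_self).const_mul _) hiδ
        measurableSet_Ioc fun t ht => ?_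
      rw [mul_left_comm, ← Real.exp_add]
      refine mul_le_mul_of_nonneg_left (Real.exp_le_exp.2 ?_) (hχ t (by linarith [ht.1])).1
      nlinarith [ht.1]
    refine le_trans ?_ h3
    have h4 : (δ + 1) * (u - 8 / δ) ≤
        Real.exp δ * ∫ t in Ioc 1 (δ * u), χ t * Real.exp (ξ u * t) := by
      have h8 : 8 / δ ≤ u := by
        have : δ * (8 / δ) = 8 := by field_simp
        have h9 : 0 < 8 / δ := by positivity
        nlinarith
      exact mul_le_mul (Real.add_one_le_exp δ) (by linarith) (by linarith) (Real.exp_pos _).le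
    have : δ * (8 / δ) = 8 := by field_simp
    linarith

theorem statement6 (χ : ℝ → ℝ) (hmeas : Measurable χ)
    (hχ1 : ∀ t : ℝ, 0 ≤ t → t ≤ 1 → χ t = 1)
    (hχ2 : ∀ t : ℝ, 1 < t → 0 ≤ χ t ∧ χ t ≤ 1)
    (hcase :
      -- case (i): χ vanishes beyond a minimal T > 1
      (∃ T : ℝ, 1 < T ∧ (∫ t in Set.Ioi T, χ t) = 0 ∧
        ∀ T' : ℝ, (∫ t in Set.Ioi T', χ t) = 0 → T ≤ T') ∨
      -- case (ii): χ(t) = ((1 + o(1))/h(t))^t with h nondecreasing, h → ∞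
      (∃ e : ℝ → ℝ, Filter.Tendsto e Filter.atTop (nhds 0) ∧
        ∃ h : ℝ → ℝ, Monotone h ∧ Filter.Tendsto h Filter.atTop Filter.atTop ∧
          ∀ t : ℝ, 1 ≤ t → χ t = ((1 + e t) / h t) ^ t))
    (σ : ℝ → ℝ)
    (hσ1 : ∀ u : ℝ, 0 ≤ u → u ≤ 1 → σ u = 1)
    (hσeq : ∀ u : ℝ, 1 < u → u * σ u = ∫ t in (0 : ℝ)..u, σ (u - t) * χ t)
    (ξ : ℝ → ℝ)
    (hξ : ∀ u : ℝ, 1 < u → u = ∫ v in Set.Ioi (1 : ℝ), χ v * Real.exp (ξ u * v)) :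
    Filter.Tendsto (fun u : ℝ =>
        (Real.log (σ u) + ξ u * u -
          ∫ v in Set.Ioi (1 : ℝ), χ v * Real.exp (ξ u * v) / v) / u)
      Filter.atTop (nhds 0) := by
  have hχ : ∀ t, 0 ≤ t → 0 ≤ χ t ∧ χ t ≤ 1 := fun t ht => by
    rcases le_or_gt t 1 with h | h
    · rw [hχ1 t ht h]; exact ⟨zero_le_one, le_rfl⟩
    · exact hχ2 t h
  obtain ⟨hInt, ⟨a, ha, hamass⟩, hmass⟩ : IntegrableOn χ (Ioi 1) ∧
      (∃ a, 1 < a ∧ 0 < ∫ v in Ioi a, χ v) ∧ ∀ δ > 0, ∀ᶠ u in atTop,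
        u ≤ ∫ t in Ioc 1 (δ * u), χ t * Real.exp ((ξ u + δ) * t) := by
    rcases hcase with ⟨T, hT, hT0, hTmin⟩ | ⟨e, he, h, hmono, hh, hχe⟩
    · have hInt : IntegrableOn χ (Ioi 1) := by
        by_contra hni
        exact hT.not_ge (hTmin 1 (integral_undef hni))
      refine ⟨hInt, ⟨(1 + T) / 2, by linarith, lt_of_le_of_ne ?_ fun h0 => ?_⟩,
        fun δ hδ => mass_of_vanishing hmeas hχ hξ hInt hT hT0 hδ⟩
      · refine setIntegral_nonneg measurableSet_Ioi fun t ht => (hχ t ?_).1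
        have : (1 + T) / 2 < t := ht
        linarith
      · linarith [hTmin _ h0.symm]
    · obtain ⟨h1, h2⟩ := integrable_and_mass_of_rpow_decay hmeas hχ he hh hχe
      exact ⟨h1, h2, fun δ hδ => mass_of_rpow_decay hmeas hχ hξ he hmono hh hχe hδ⟩
  have hpos := exists_saddle_nonneg hχ hξ hInt
  rw [Metric.tendsto_nhds]
  intro ε hε
  set δ := min (ε / 6) (1 / 2) with hδdef
  have hδ : 0 < δ := lt_min (by linarith) (by norm_num)
  have hδε : δ ≤ ε / 6 := min_le_left _ _
  obtain ⟨C, hC⟩ := log_add_rate_le hmeas hχ hχ1 hσ1 hσeq hξ hpos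
    (fun η hη => eventually_exp_saddle_le hχ hξ hInt ha hamass hη) hδ
  obtain ⟨c, hc⟩ := le_log_add_rate hmeas hχ hχ1 hσ1 hσeq hξ hpos hδ (min_le_right _ _) (hmass δ hδ)
  filter_upwards [hC, hc, eventually_gt_atTop 0, eventually_gt_atTop (C / (ε / 2)),
    eventually_gt_atTop (-c / (ε / 2))] with u h1 h2 hu h3 h4
  rw [div_lt_iff₀ (by positivity)] at h3 h4
  rw [add_sub_assoc]
  change dist ((Real.log (σ u) + rate χ ξ u) / u) 0 < ε
  rw [Real.dist_eq, sub_zero, abs_lt, lt_div_iff₀ hu, div_lt_iff₀ hu]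
  have h5 := mul_le_mul_of_nonneg_right hδε hu.le
  constructor <;> nlinarith
end

section
/- Let χ be a real measurable function with χ(t) = 1 for 0 ≤ t ≤ 1 and 0 ≤ χ(t) ≤ 1 for t > 1, and suppose there exists T > 1 with ∫_T^∞ χ(t) dt = 0, where T is minimal with this property. Let σ be the unique solution of u·σ(u) = ∫₀^u σ(u−t)·χ(t) dt for u > 1 with σ(u) = 1 for 0 ≤ u ≤ 1, and for u > 1 let ξ(u) be the unique solution of u = ∫₁^∞ χ(v)·e^{ξ(u)·v} dv. Then ξ(u)·T/log(u) → 1 as u → ∞, and log σ(u) / (u·log(u)/T) → −1 as u → ∞. -/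
open MeasureTheory Set Filter Topology

lemma intervalIntegrable_delay_mul {χ σ : ℝ → ℝ} {u : ℝ} (hmeas : Measurable χ)
    (hχ : ∀ t, 0 ≤ t → 0 ≤ χ t ∧ χ t ≤ 1) (hu : 0 ≤ u)
    (hσ : IntervalIntegrable σ volume 0 u) :
    IntervalIntegrable (fun t => σ (u - t) * χ t) volume 0 u := by
  have h1 : IntervalIntegrable (fun t => σ (u - t)) volume 0 u := by
    simpa using (hσ.comp_sub_left u).symm
  rw [intervalIntegrable_iff_integrableOn_Ioc_of_le hu] at h1 ⊢
  refine Integrable.mul_bdd (c := 1) h1 hmeas.aestronglyMeasurable ?_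
  filter_upwards [ae_restrict_mem measurableSet_Ioc] with t ht
  have := hχ t ht.1.le
  rw [Real.norm_eq_abs, abs_of_nonneg this.1]
  exact this.2

lemma abs_le_integral_abs {χ σ : ℝ → ℝ} {u : ℝ} (hmeas : Measurable χ)
    (hχ : ∀ t, 0 ≤ t → 0 ≤ χ t ∧ χ t ≤ 1)
    (hσeq : u * σ u = ∫ t in (0 : ℝ)..u, σ (u - t) * χ t) (hu : 1 < u)
    (hσ : IntervalIntegrable σ volume 0 u) :
    |σ u| ≤ ∫ s in (0 : ℝ)..u, |σ s| := by
  have h0 : 0 ≤ u := by linarith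
  have h1 : IntervalIntegrable (fun t => σ (u - t)) volume 0 u := by
    simpa using (hσ.comp_sub_left u).symm
  calc |σ u| ≤ |u * σ u| := by
        rw [abs_mul, abs_of_nonneg h0]
        nlinarith [abs_nonneg (σ u)]
    _ = |∫ t in (0 : ℝ)..u, σ (u - t) * χ t| := by rw [hσeq]
    _ ≤ ∫ t in (0 : ℝ)..u, |σ (u - t) * χ t| :=
        intervalIntegral.abs_integral_le_integral_abs h0
    _ ≤ ∫ t in (0 : ℝ)..u, |σ (u - t)| := by
        refine intervalIntegral.integral_mono_on h0
          (intervalIntegrable_delay_mul hmeas hχ h0 hσ).abs h1.abs fun t ht => ?_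
        have := hχ t ht.1
        rw [abs_mul, abs_of_nonneg this.1]
        nlinarith [abs_nonneg (σ (u - t))]
    _ = ∫ s in (0 : ℝ)..u, |σ s| := by
        simpa using intervalIntegral.integral_comp_sub_left (a := 0) (b := u) (fun s => |σ s|) u

/-- A solution of the delay equation is automatically locally integrable: at a point where
integrability first failed, the Bochner integral would vanish to the right. -/
lemma intervalIntegrable_of_delay {χ σ : ℝ → ℝ} (hmeas : Measurable χ)
    (hχ1 : ∀ t : ℝ, 0 ≤ t → t ≤ 1 → χ t = 1)
    (hχ : ∀ t, 0 ≤ t → 0 ≤ χ t ∧ χ t ≤ 1)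
    (hσ1 : ∀ u : ℝ, 0 ≤ u → u ≤ 1 → σ u = 1)
    (hσeq : ∀ u : ℝ, 1 < u → u * σ u = ∫ t in (0 : ℝ)..u, σ (u - t) * χ t)
    {u : ℝ} (hu : 0 ≤ u) : IntervalIntegrable σ volume 0 u := by
  by_contra hnot
  have hdown : ∀ {c d : ℝ}, 0 ≤ c → c ≤ d → IntervalIntegrable σ volume 0 d →
      IntervalIntegrable σ volume 0 c := fun {c d} hc hcd h =>
    h.mono_set (by
      rw [uIcc_of_le hc, uIcc_of_le (hc.trans hcd)]
      exact Icc_subset_Icc_right hcd)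
  set G : Set ℝ := {c | 0 ≤ c ∧ IntervalIntegrable σ volume 0 c} with hG
  have h1G : (1 : ℝ) ∈ G := by
    refine ⟨zero_le_one, (intervalIntegrable_const (c := (1 : ℝ))).congr ?_⟩
    intro t ht
    rw [uIoc_of_le zero_le_one] at ht
    exact (hσ1 t ht.1.le ht.2).symm
  have hbdd : BddAbove G := ⟨u, fun c hc => by
    by_contra hlt
    exact hnot (hdown hu (not_le.1 hlt).le hc.2)⟩
  set a := sSup G with ha
  have h1a : 1 ≤ a := le_csSup hbdd h1G
  have hlt : ∀ c, 0 ≤ c → c < a → c ∈ G := fun c hc hca => by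
    obtain ⟨d, hd, hcd⟩ := exists_lt_of_lt_csSup ⟨1, h1G⟩ hca
    exact ⟨hc, hdown hc hcd.le hd.2⟩
  have hgt : ∀ c, a < c → ¬ IntervalIntegrable σ volume 0 c := fun c hc h =>
    absurd (le_csSup hbdd (show c ∈ G from ⟨by linarith, h⟩)) (not_le.2 hc)
  have haG : IntervalIntegrable σ volume 0 a := by
    rcases h1a.eq_or_lt with h | h
    · rw [← h]; exact h1G.2
    obtain ⟨b, hb1, hba, hb⟩ : ∃ b, 1 ≤ b ∧ b < a ∧ a - b ≤ 1 / 2 := by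
      refine ⟨max 1 (a - 1 / 2), le_max_left _ _, max_lt h (by linarith), ?_⟩
      have := le_max_right 1 (a - 1 / 2)
      linarith
    have hbG := (hlt b (by linarith) hba).2
    have hF : ∀ c, b ≤ c → c < a →
        ∫ s in (0 : ℝ)..c, |σ s| ≤ 2 * ∫ s in (0 : ℝ)..b, |σ s| := by
      intro c hbc hca
      have hcG := (hlt c (by linarith) hca).2
      have hbcI : IntervalIntegrable σ volume b c := hbG.symm.trans hcG
      have hadd := intervalIntegral.integral_add_adjacent_intervals hbG.abs hbcI.abs
      have hnn : 0 ≤ ∫ s in (0 : ℝ)..c, |σ s| :=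
        intervalIntegral.integral_nonneg (by linarith) fun _ _ => abs_nonneg _
      have hle : ∫ s in b..c, |σ s| ≤ ∫ _ in b..c, (∫ s in (0 : ℝ)..c, |σ s|) := by
        refine intervalIntegral.integral_mono_on_of_le_Ioo hbc hbcI.abs
          intervalIntegrable_const fun v hv => ?_
        have hv1 : 1 < v := lt_of_le_of_lt hb1 hv.1
        have hvG := hdown (by linarith) hv.2.le hcG
        refine (abs_le_integral_abs hmeas hχ (hσeq v hv1) hv1 hvG).trans ?_
        refine intervalIntegral.integral_mono_interval le_rfl (by linarith) hv.2.le
          (Eventually.of_forall fun _ => abs_nonneg _) hcG.abs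
      rw [intervalIntegral.integral_const, smul_eq_mul] at hle
      nlinarith
    rw [intervalIntegrable_iff_integrableOn_Ioc_of_le (by linarith)]
    have hseq : Tendsto (fun n : ℕ => a - (a - b) / ((n : ℝ) + 1)) atTop (𝓝 a) := by
      have := (tendsto_const_nhds (x := a - b)).div_atTop
        (tendsto_natCast_atTop_atTop.atTop_add (tendsto_const_nhds (x := (1 : ℝ))))
      simpa using (tendsto_const_nhds (x := a)).sub this
    have hmem : ∀ n : ℕ, b ≤ a - (a - b) / ((n : ℝ) + 1) ∧ a - (a - b) / ((n : ℝ) + 1) < a := by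
      intro n
      have hn : (0 : ℝ) < (n : ℝ) + 1 := by positivity
      have h1 : 0 < (a - b) / ((n : ℝ) + 1) := div_pos (by linarith) hn
      have h2 : (a - b) / ((n : ℝ) + 1) ≤ a - b :=
        div_le_self (by linarith) (by linarith [(Nat.cast_nonneg n : (0 : ℝ) ≤ n)])
      constructor <;> linarith
    refine integrableOn_Ioc_of_intervalIntegral_norm_bounded (l := atTop)
      (a := fun _ : ℕ => (0 : ℝ)) (b := fun n : ℕ => a - (a - b) / ((n : ℝ) + 1))
      (I := 2 * ∫ s in (0 : ℝ)..b, |σ s|) (fun n => ?_) tendsto_const_nhds hseq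
      (Eventually.of_forall fun n => ?_)
    · have := hmem n
      rw [← intervalIntegrable_iff_integrableOn_Ioc_of_le (by linarith)]
      exact (hlt _ (by linarith) this.2).2
    · have := hmem n
      rw [← intervalIntegral.integral_of_le (by linarith)]
      simpa using hF _ this.1 this.2
  have hzero : ∀ c, a < c → c ≤ a + 1 → σ c = 0 := by
    intro c hc hc1
    have hni : ¬ IntervalIntegrable (fun t => σ (c - t) * χ t) volume 0 c := by
      intro h
      apply hgt c hc
      have h01 : IntervalIntegrable (fun t => σ (c - t)) volume 0 1 := by
        refine IntervalIntegrable.congr (fun t ht => ?_) (h.mono_set (c := 0) (d := 1) ?_)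
        · rw [uIoc_of_le zero_le_one] at ht
          simp [hχ1 t ht.1.le ht.2]
        · rw [uIcc_of_le zero_le_one, uIcc_of_le (by linarith)]
          exact Icc_subset_Icc_right (by linarith)
      have h2 : IntervalIntegrable σ volume (c - 1) c := by
        simpa using (h01.comp_sub_left c).symm
      exact (hdown (by linarith) (by linarith) haG).trans h2
    have := hσeq c (by linarith)
    rw [intervalIntegral.integral_undef hni] at this
    rcases mul_eq_zero.1 this with h | h
    · linarith
    · exact h
  refine hgt (a + 1) (by linarith) (haG.trans ?_)
  refine (intervalIntegrable_const (c := (0 : ℝ))).congr fun t ht => ?_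
  rw [uIoc_of_le (by linarith)] at ht
  exact (hzero t ht.1 ht.2).symm

lemma intervalIntegrable_of_bounded {χ : ℝ → ℝ} (hmeas : Measurable χ)
    (hχ : ∀ t, 0 ≤ t → 0 ≤ χ t ∧ χ t ≤ 1) {p q : ℝ} (hp : 0 ≤ p) (hpq : p ≤ q) :
    IntervalIntegrable χ volume p q := by
  refine (intervalIntegrable_const (c := (1 : ℝ))).mono_fun hmeas.aestronglyMeasurable ?_
  filter_upwards [ae_restrict_mem measurableSet_uIoc] with t ht
  rw [uIoc_of_le hpq] at ht
  have := hχ t (by linarith [ht.1])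
  rw [Real.norm_eq_abs, abs_of_nonneg this.1]
  simpa using this.2

/-- Lower bound for a solution from a lower bound on a window of its past. -/
lemma mul_integral_le_of_le {χ σ : ℝ → ℝ} {u p q c : ℝ} (hmeas : Measurable χ)
    (hχ : ∀ t, 0 ≤ t → 0 ≤ χ t ∧ χ t ≤ 1)
    (hσeq : u * σ u = ∫ t in (0 : ℝ)..u, σ (u - t) * χ t)
    (hσ : IntervalIntegrable σ volume 0 u) (hnn : ∀ s, 0 ≤ s → s ≤ u → 0 ≤ σ s)
    (hp : 0 ≤ p) (hpq : p ≤ q) (hqu : q ≤ u)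
    (hc : ∀ s, u - q ≤ s → s ≤ u - p → c ≤ σ s) :
    c * ∫ t in p..q, χ t ≤ u * σ u := by
  have hI := intervalIntegrable_delay_mul hmeas hχ (by linarith) hσ
  have hsub : IntervalIntegrable (fun t => σ (u - t) * χ t) volume p q := hI.mono_set (by
    rw [uIcc_of_le hpq, uIcc_of_le (by linarith)]
    exact Icc_subset_Icc hp hqu)
  rw [hσeq, ← intervalIntegral.integral_const_mul]
  calc ∫ t in p..q, c * χ t ≤ ∫ t in p..q, σ (u - t) * χ t := by
        refine intervalIntegral.integral_mono_on hpq
          ((intervalIntegrable_of_bounded hmeas hχ hp hpq).const_mul c) hsub fun t ht => ?_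
        exact mul_le_mul_of_nonneg_right (hc _ (by linarith [ht.2]) (by linarith [ht.1]))
          (hχ t (by linarith [ht.1])).1
    _ ≤ ∫ t in (0 : ℝ)..u, σ (u - t) * χ t := by
        refine intervalIntegral.integral_mono_interval hp hpq hqu ?_ hI
        filter_upwards [ae_restrict_mem measurableSet_Ioc] with t ht
        exact mul_nonneg (hnn _ (by linarith [ht.2]) (by linarith [ht.1])) (hχ t ht.1.le).1

lemma nonneg_extend {χ σ : ℝ → ℝ} (hmeas : Measurable χ)
    (hχ : ∀ t, 0 ≤ t → 0 ≤ χ t ∧ χ t ≤ 1)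
    (hσeq : ∀ u : ℝ, 1 < u → u * σ u = ∫ t in (0 : ℝ)..u, σ (u - t) * χ t)
    (hσ : ∀ u, 0 ≤ u → IntervalIntegrable σ volume 0 u)
    {b : ℝ} (hb : 1 ≤ b) (hnn : ∀ s, 0 ≤ s → s ≤ b → 0 ≤ σ s) :
    ∀ s, 0 ≤ s → s ≤ b + 1 / 2 → 0 ≤ σ s := by
  set n : ℝ → ℝ := fun s => max (-σ s) 0 with hn
  have hnI : ∀ u, 0 ≤ u → IntervalIntegrable n volume 0 u := fun u hu => by
    have h := hσ u hu
    rw [intervalIntegrable_iff_integrableOn_Ioc_of_le hu] at h ⊢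
    exact h.neg_part
  set N := ∫ s in (0 : ℝ)..(b + 1 / 2), n s with hN
  have hn0 : ∀ s, 0 ≤ n s := fun s => le_max_right _ _
  have hN0 : 0 ≤ N := intervalIntegral.integral_nonneg (by linarith) fun s _ => hn0 s
  have hlow : ∀ v, b < v → v ≤ b + 1 / 2 → -N ≤ v * σ v := by
    intro v hbv hv
    have hv0 : 0 ≤ v := by linarith
    have h1 : IntervalIntegrable (fun t => n (v - t)) volume 0 v := by
      simpa using ((hnI v hv0).comp_sub_left v).symm
    have h2 : ∫ t in (0 : ℝ)..v, n (v - t) = ∫ s in (0 : ℝ)..v, n s := by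
      simp
    have h3 : ∫ s in (0 : ℝ)..v, n s ≤ N :=
      intervalIntegral.integral_mono_interval le_rfl hv0 hv
        (Eventually.of_forall hn0) (hnI _ (by linarith))
    have h4 : ∫ t in (0 : ℝ)..v, -n (v - t) ≤ ∫ t in (0 : ℝ)..v, σ (v - t) * χ t := by
      refine intervalIntegral.integral_mono_on hv0 h1.neg
        (intervalIntegrable_delay_mul hmeas hχ hv0 (hσ v hv0)) fun t ht => ?_
      have hx := hχ t ht.1
      have h5 : -σ (v - t) ≤ n (v - t) := le_max_left _ _
      nlinarith [hn0 (v - t)]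
    rw [hσeq v (by linarith)]
    rw [intervalIntegral.integral_neg, h2] at h4
    linarith
  have hnN : ∀ v, b < v → v ≤ b + 1 / 2 → n v ≤ N := by
    intro v hbv hv
    refine max_le ?_ hN0
    by_contra hlt
    nlinarith [hlow v hbv hv, not_le.1 hlt]
  have hNle : N ≤ N / 2 := by
    have hI0 := hnI b (by linarith)
    have hI1 := hI0.symm.trans (hnI (b + 1 / 2) (by linarith))
    have hz : ∫ s in (0 : ℝ)..b, n s = 0 := by
      rw [intervalIntegral.integral_congr (g := fun _ => (0 : ℝ))]
      · simp
      · intro s hs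
        rw [uIcc_of_le (by linarith)] at hs
        simpa [hn] using hnn s hs.1 hs.2
    have hle : ∫ s in b..(b + 1 / 2), n s ≤ ∫ _ in b..(b + 1 / 2), N :=
      intervalIntegral.integral_mono_on_of_le_Ioo (by linarith) hI1
        intervalIntegrable_const fun v hv => hnN v hv.1 hv.2.le
    rw [intervalIntegral.integral_const, smul_eq_mul] at hle
    have := intervalIntegral.integral_add_adjacent_intervals hI0 hI1
    linarith
  intro s hs0 hs
  rcases le_or_gt s b with h | h
  · exact hnn s hs0 h
  · have := hlow s h hs
    have hN' : N = 0 := by linarith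
    rw [hN', neg_zero] at this
    exact nonneg_of_mul_nonneg_right this (by linarith)

lemma exists_pos_lower_bound {χ σ : ℝ → ℝ} (hmeas : Measurable χ)
    (hχ1 : ∀ t : ℝ, 0 ≤ t → t ≤ 1 → χ t = 1)
    (hχ : ∀ t, 0 ≤ t → 0 ≤ χ t ∧ χ t ≤ 1)
    (hσ1 : ∀ u : ℝ, 0 ≤ u → u ≤ 1 → σ u = 1)
    (hσeq : ∀ u : ℝ, 1 < u → u * σ u = ∫ t in (0 : ℝ)..u, σ (u - t) * χ t)
    (hσ : ∀ u, 0 ≤ u → IntervalIntegrable σ volume 0 u) (U : ℝ) :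
    ∃ c > 0, ∀ s, 0 ≤ s → s ≤ U → c ≤ σ s := by
  have key : ∀ n : ℕ, ∃ c > 0, ∀ s, 0 ≤ s → s ≤ 1 + (n : ℝ) / 2 → c ≤ σ s := by
    intro n
    induction n with
    | zero => exact ⟨1, one_pos, fun s h0 h1 => (hσ1 s h0 (by simpa using h1)).ge⟩
    | succ n ih =>
      obtain ⟨c, hc, h⟩ := ih
      set b : ℝ := 1 + (n : ℝ) / 2 with hb
      have hb1 : 1 ≤ b := by
        have : (0 : ℝ) ≤ n := Nat.cast_nonneg n
        linarith
      have hnn := nonneg_extend hmeas hχ hσeq hσ hb1 fun s h0 h1 => hc.le.trans (h s h0 h1)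
      refine ⟨c / (2 * (b + 1 / 2)), by positivity, fun s h0 h1 => ?_⟩
      have h1' : s ≤ b + 1 / 2 := by rw [hb]; push_cast at h1; linarith
      have hle : c / (2 * (b + 1 / 2)) ≤ c := div_le_self hc.le (by linarith)
      rcases le_or_gt s b with hsb | hsb
      · exact hle.trans (h s h0 hsb)
      · have := mul_integral_le_of_le (p := s - b) (q := 1) (c := c) hmeas hχ
          (hσeq s (by linarith)) (hσ s h0) (fun x hx hxs => hnn x hx (by linarith))
          (by linarith) (by linarith) (by linarith)
          (fun x hx hxs => h x (by linarith) (by linarith))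
        rw [intervalIntegral.integral_congr (g := fun _ => (1 : ℝ)),
          intervalIntegral.integral_const, smul_eq_mul] at this
        · rw [div_le_iff₀ (by positivity)]
          nlinarith [hnn s h0 h1']
        · intro t ht
          rw [uIcc_of_le (by linarith)] at ht
          exact hχ1 t (by linarith [ht.1]) ht.2
  obtain ⟨n, hn⟩ := exists_nat_ge (2 * U)
  obtain ⟨c, hc, h⟩ := key n
  exact ⟨c, hc, fun s h0 h1 => h s h0 (by linarith)⟩

/-- Upper bound for a solution from an upper bound on the window of its past of length `T`. -/
lemma mul_le_of_forall_le {χ σ : ℝ → ℝ} {u T C : ℝ} (hmeas : Measurable χ)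
    (hχ : ∀ t, 0 ≤ t → 0 ≤ χ t ∧ χ t ≤ 1) (hχT : ∀ᵐ t, T < t → χ t = 0)
    (hσeq : u * σ u = ∫ t in (0 : ℝ)..u, σ (u - t) * χ t)
    (hσ : IntervalIntegrable σ volume 0 u) (hnn : ∀ s, 0 ≤ s → 0 ≤ σ s)
    (hT : 0 ≤ T) (hTu : T ≤ u)
    (hC : ∀ s, u - T ≤ s → s ≤ u → σ s ≤ C) :
    u * σ u ≤ T * C := by
  have hI := intervalIntegrable_delay_mul hmeas hχ (by linarith) hσ
  have hsub : IntervalIntegrable (fun t => σ (u - t) * χ t) volume 0 T := hI.mono_set (by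
    rw [uIcc_of_le hT, uIcc_of_le (by linarith)]
    exact Icc_subset_Icc_right hTu)
  have htail : ∫ t in T..u, σ (u - t) * χ t = 0 := by
    rw [intervalIntegral.integral_congr_ae (g := fun _ => (0 : ℝ))]
    · simp
    · filter_upwards [hχT] with t ht hmem
      rw [uIoc_of_le hTu] at hmem
      simp [ht hmem.1]
  have hle : ∫ t in (0 : ℝ)..T, σ (u - t) * χ t ≤ ∫ _ in (0 : ℝ)..T, C := by
    refine intervalIntegral.integral_mono_on hT hsub intervalIntegrable_const fun t ht => ?_
    have hx := hχ t ht.1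
    have h0 := hnn (u - t) (by linarith [ht.2])
    have h1 := hC (u - t) (by linarith [ht.2]) (by linarith [ht.1])
    nlinarith
  have hadd := intervalIntegral.integral_add_adjacent_intervals hsub (hsub.symm.trans hI)
  rw [intervalIntegral.integral_const, smul_eq_mul, sub_zero] at hle
  rw [hσeq, ← hadd, htail, add_zero]
  exact hle

lemma exists_upper_bound {χ σ : ℝ → ℝ} {T : ℝ} (hmeas : Measurable χ)
    (hχ : ∀ t, 0 ≤ t → 0 ≤ χ t ∧ χ t ≤ 1) (hχT : ∀ᵐ t, T < t → χ t = 0)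
    (hσ1 : ∀ u : ℝ, 0 ≤ u → u ≤ 1 → σ u = 1)
    (hσeq : ∀ u : ℝ, 1 < u → u * σ u = ∫ t in (0 : ℝ)..u, σ (u - t) * χ t)
    (hσ : ∀ u, 0 ≤ u → IntervalIntegrable σ volume 0 u) (hnn : ∀ s, 0 ≤ s → 0 ≤ σ s)
    (hT : 1 < T) : ∃ C > 0, ∀ s, 0 ≤ s → σ s ≤ C := by
  have hloc : ∀ U, 0 ≤ U → ∃ M > 0, ∀ s, 0 ≤ s → s ≤ U → σ s ≤ M := by
    intro U hU
    have hI0 : 0 ≤ ∫ s in (0 : ℝ)..U, |σ s| :=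
      intervalIntegral.integral_nonneg hU fun _ _ => abs_nonneg _
    refine ⟨1 + ∫ s in (0 : ℝ)..U, |σ s|, by linarith, fun s h0 hs => ?_⟩
    rcases le_or_gt s 1 with h1 | h1
    · rw [hσ1 s h0 h1]; linarith
    · have h2 := abs_le_integral_abs hmeas hχ (hσeq s h1) h1 (hσ s h0)
      have h3 : ∫ x in (0 : ℝ)..s, |σ x| ≤ ∫ x in (0 : ℝ)..U, |σ x| :=
        intervalIntegral.integral_mono_interval le_rfl h0 hs
          (Eventually.of_forall fun _ => abs_nonneg _) (hσ U hU).abs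
      linarith [le_abs_self (σ s)]
  obtain ⟨C, hC, hCle⟩ := hloc (2 * T) (by linarith)
  refine ⟨C, hC, fun U hU => ?_⟩
  obtain ⟨M, -, hM⟩ := hloc U hU
  set S := sSup (σ '' Icc 0 U) with hS
  have hbdd : BddAbove (σ '' Icc 0 U) := ⟨M, by
    rintro _ ⟨s, hs, rfl⟩
    exact hM s hs.1 hs.2⟩
  have hle : ∀ s, 0 ≤ s → s ≤ U → σ s ≤ S := fun s h0 hs =>
    le_csSup hbdd ⟨s, ⟨h0, hs⟩, rfl⟩
  have hS0 : 0 ≤ S := (hnn U hU).trans (hle U hU le_rfl)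
  have hmax : S ≤ max C (S / 2) := by
    refine csSup_le ⟨_, U, ⟨hU, le_rfl⟩, rfl⟩ ?_
    rintro _ ⟨s, hs, rfl⟩
    rcases le_or_gt s (2 * T) with h | h
    · exact (hCle s hs.1 h).trans (le_max_left _ _)
    · refine le_trans ?_ (le_max_right _ _)
      have := mul_le_of_forall_le hmeas hχ hχT (hσeq s (by linarith)) (hσ s hs.1) hnn
        (by linarith) (by linarith) (C := S)
        (fun x hx hxs => hle x (by linarith) (hxs.trans hs.2))
      nlinarith [hnn s hs.1]
  rcases le_max_iff.1 hmax with h | h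
  · exact (hle U hU le_rfl).trans h
  · linarith [hle U hU le_rfl]

lemma ae_eq_zero_of_tail {χ : ℝ → ℝ} {T : ℝ}
    (hχ : ∀ t, 0 ≤ t → 0 ≤ χ t ∧ χ t ≤ 1) (hT : 1 < T)
    (hT0 : (∫ t in Ioi T, χ t) = 0)
    (hTmin : ∀ T' : ℝ, (∫ t in Ioi T', χ t) = 0 → T ≤ T') :
    ∀ᵐ t, T < t → χ t = 0 := by
  have hint : IntegrableOn χ (Ioi 1) := by
    by_contra h
    exact absurd (hTmin 1 (integral_undef h)) (not_le.2 hT)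
  have hint' : IntegrableOn χ (Ioi T) := hint.mono_set (Ioi_subset_Ioi hT.le)
  have hnn : 0 ≤ᵐ[volume.restrict (Ioi T)] χ := by
    filter_upwards [ae_restrict_mem measurableSet_Ioi] with t ht
    exact (hχ t (by linarith [mem_Ioi.1 ht])).1
  have := (setIntegral_eq_zero_iff_of_nonneg_ae hnn hint').1 hT0
  exact (ae_restrict_iff' measurableSet_Ioi).1 this

lemma integral_pos_of_minimal {χ : ℝ → ℝ} {T a : ℝ}
    (hχ : ∀ t, 0 ≤ t → 0 ≤ χ t ∧ χ t ≤ 1) (hχT : ∀ᵐ t, T < t → χ t = 0)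
    (hTmin : ∀ T' : ℝ, (∫ t in Ioi T', χ t) = 0 → T ≤ T') (ha : 0 ≤ a) (haT : a < T) :
    0 < ∫ t in a..T, χ t := by
  have hnn : 0 ≤ ∫ t in a..T, χ t :=
    intervalIntegral.integral_nonneg haT.le fun t ht => (hχ t (ha.trans ht.1)).1
  refine lt_of_le_of_ne hnn fun h0 => ?_
  refine absurd (hTmin a ?_) (not_le.2 haT)
  rw [h0, intervalIntegral.integral_of_le haT.le]
  refine setIntegral_eq_of_subset_of_ae_sdiff_eq_zero measurableSet_Ioi.nullMeasurableSet
    Ioc_subset_Ioi_self ?_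
  filter_upwards [hχT] with t ht hmem
  refine ht (not_le.1 fun h => hmem.2 ⟨hmem.1, h⟩)

lemma log_lower_bound {χ σ : ℝ → ℝ} {T a c U : ℝ} (hmeas : Measurable χ)
    (hχ : ∀ t, 0 ≤ t → 0 ≤ χ t ∧ χ t ≤ 1) (hT : 1 < T)
    (hσeq : ∀ u : ℝ, 1 < u → u * σ u = ∫ t in (0 : ℝ)..u, σ (u - t) * χ t)
    (hσ : ∀ u, 0 ≤ u → IntervalIntegrable σ volume 0 u) (hnn : ∀ s, 0 ≤ s → 0 ≤ σ s)
    (ha : 0 < a) (haT : a < T) (hm : 0 < ∫ t in a..T, χ t)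
    (hc : 0 < c) (hcle : ∀ s, 0 ≤ s → s ≤ T → c ≤ σ s)
    (hU : 0 < U) (hmU : ∫ t in a..T, χ t ≤ U) :
    Real.log c + (U / a + 1) * (Real.log (∫ t in a..T, χ t) - Real.log U) ≤
      Real.log (σ U) := by
  set m := ∫ t in a..T, χ t with hmdef
  have hq0 : 0 < m / U := by positivity
  have hq1 : m / U ≤ 1 := (div_le_one hU).2 hmU
  have key : ∀ n : ℕ, ∀ u, 0 ≤ u → u ≤ U → u ≤ T + n * a → c * (m / U) ^ n ≤ σ u := by
    intro n
    induction n with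
    | zero => intro u h0 _ h2; simpa using hcle u h0 (by simpa using h2)
    | succ n ih =>
      intro u h0 hu h2
      rcases le_or_gt u T with h | h
      · exact (mul_le_of_le_one_right hc.le (pow_le_one₀ hq0.le hq1)).trans (hcle u h0 h)
      · have h3 := mul_integral_le_of_le (p := a) (q := T) (c := c * (m / U) ^ n) hmeas hχ
          (hσeq u (by linarith)) (hσ u h0) (fun s hs _ => hnn s hs) ha.le haT.le h.le
          (fun s hs hs' => ih s (by linarith) (by linarith) (by push_cast at h2; linarith))
        have h4 : u * σ u ≤ U * σ u := mul_le_mul_of_nonneg_right hu (hnn u h0)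
        rw [pow_succ, ← mul_assoc, ← mul_div_assoc, div_le_iff₀ hU]
        linarith
  have hceil := Nat.le_ceil (U / a)
  have hceil' := (Nat.ceil_lt_add_one (div_pos hU ha).le).le
  have hmain := key ⌈U / a⌉₊ U hU.le le_rfl (by
    have := (div_le_iff₀ ha).1 hceil
    linarith)
  have hlog := Real.log_le_log (by positivity) hmain
  rw [Real.log_mul hc.ne' (by positivity), Real.log_pow] at hlog
  rw [← Real.log_div hm.ne' hU.ne']
  have hneg : Real.log (m / U) ≤ 0 := Real.log_nonpos hq0.le hq1
  have := mul_le_mul_of_nonpos_right hceil' hneg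
  linarith

lemma log_upper_bound {χ σ : ℝ → ℝ} {T κ C U : ℝ} (hmeas : Measurable χ)
    (hχ : ∀ t, 0 ≤ t → 0 ≤ χ t ∧ χ t ≤ 1) (hχT : ∀ᵐ t, T < t → χ t = 0) (hT : 1 < T)
    (hσeq : ∀ u : ℝ, 1 < u → u * σ u = ∫ t in (0 : ℝ)..u, σ (u - t) * χ t)
    (hσ : ∀ u, 0 ≤ u → IntervalIntegrable σ volume 0 u) (hpos : ∀ s, 0 ≤ s → 0 < σ s)
    (hC : 0 < C) (hCle : ∀ s, 0 ≤ s → σ s ≤ C)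
    (hκ : 0 < κ) (hκ1 : κ < 1) (hU : 0 < U) (hTU : T ≤ κ * U) :
    Real.log (σ U) ≤
      Real.log C + ((1 - κ) * U / T - 1) * (Real.log (T / κ) - Real.log U) := by
  have hT0 : 0 < T := by linarith
  have hK : 0 < κ * U := by positivity
  set q := T / (κ * U) with hq
  have hq0 : 0 < q := by positivity
  have hq1 : q ≤ 1 := (div_le_one hK).2 hTU
  have key : ∀ n : ℕ, ∀ u, κ * U + n * T ≤ u → σ u ≤ C * q ^ n := by
    intro n
    induction n with
    | zero => intro u hu; simpa using hCle u (by simp at hu; linarith)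
    | succ n ih =>
      intro u hu
      push_cast at hu
      have hn : 0 ≤ (n : ℝ) * T := by positivity
      have h := mul_le_of_forall_le hmeas hχ hχT (hσeq u (by linarith)) (hσ u (by linarith))
        (fun s hs => (hpos s hs).le) hT0.le (by linarith) (C := C * q ^ n)
        (fun s hs _ => ih s (by linarith))
      have h4 : κ * U * σ u ≤ u * σ u :=
        mul_le_mul_of_nonneg_right (by linarith) (hpos u (by linarith)).le
      rw [pow_succ, ← mul_assoc, hq, ← mul_div_assoc, le_div_iff₀ hK]
      rw [← hq]
      linarith
  have hr : 0 ≤ (1 - κ) * U / T := div_nonneg (mul_nonneg (by linarith) hU.le) hT0.le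
  have hfloor := Nat.floor_le hr
  have hfloor' := (Nat.lt_floor_add_one ((1 - κ) * U / T)).le
  have hmain := key ⌊(1 - κ) * U / T⌋₊ U (by
    have := (le_div_iff₀ hT0).1 hfloor
    linarith)
  have hlog := Real.log_le_log (hpos U hU.le) hmain
  rw [Real.log_mul hC.ne' (by positivity), Real.log_pow] at hlog
  rw [← Real.log_div (by positivity) hU.ne', div_div, ← hq]
  have hneg : Real.log q ≤ 0 := Real.log_nonpos hq0.le hq1
  have := mul_le_mul_of_nonpos_right (sub_le_iff_le_add.2 hfloor') hneg
  linarith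

lemma tendsto_affine_mul_log_div (A p r B : ℝ) {T : ℝ} (hT : 0 < T) :
    Tendsto (fun u : ℝ => (A + (p * u + r) * (B - Real.log u)) / (u * Real.log u / T))
      atTop (𝓝 (-(p * T))) := by
  have hinv : Tendsto (fun u : ℝ => u⁻¹) atTop (𝓝 0) := tendsto_inv_atTop_zero
  have hlog : Tendsto (fun u : ℝ => (Real.log u)⁻¹) atTop (𝓝 0) :=
    tendsto_inv_atTop_zero.comp Real.tendsto_log_atTop
  have h : Tendsto (fun u : ℝ => T * (A * u⁻¹ * (Real.log u)⁻¹ +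
      (p + r * u⁻¹) * (B * (Real.log u)⁻¹ - 1))) atTop
      (𝓝 (T * (A * 0 * 0 + (p + r * 0) * (B * 0 - 1)))) :=
    (((hinv.const_mul A).mul hlog).add (((hinv.const_mul r).const_add p).mul
      ((hlog.const_mul B).sub_const 1))).const_mul T
  have hval : T * (A * 0 * 0 + (p + r * 0) * (B * 0 - 1)) = -(p * T) := by ring
  rw [hval] at h
  refine h.congr' ?_
  filter_upwards [eventually_gt_atTop 1] with u hu
  have h1 := Real.log_pos hu
  have h2 : 0 < u := by linarith
  field_simp

lemma xi_lower_bound {χ : ℝ → ℝ} {T u x : ℝ}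
    (hmeas : Measurable χ) (hχ : ∀ t, 0 ≤ t → 0 ≤ χ t ∧ χ t ≤ 1) (hT : 1 < T) (hTu : T < u)
    (hx : u = ∫ v in (1 : ℝ)..T, χ v * Real.exp (x * v)) :
    0 < x ∧ Real.log u - Real.log T ≤ x * T := by
  have hI : IntervalIntegrable (fun v => χ v * Real.exp (x * v)) volume 1 T :=
    (intervalIntegrable_of_bounded hmeas hχ zero_le_one hT.le).mul_continuousOn (by fun_prop)
  have hbound : ∀ M, (∀ v ∈ Icc 1 T, Real.exp (x * v) ≤ M) → u ≤ (T - 1) * M := by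
    intro M hM
    have : ∫ v in (1 : ℝ)..T, χ v * Real.exp (x * v) ≤ ∫ _ in (1 : ℝ)..T, M := by
      refine intervalIntegral.integral_mono_on hT.le hI intervalIntegrable_const fun v hv => ?_
      have h1 := hχ v (by linarith [hv.1])
      nlinarith [hM v hv, Real.exp_pos (x * v)]
    rw [intervalIntegral.integral_const, smul_eq_mul] at this
    linarith
  have hx0 : 0 < x := by
    by_contra hx0
    have := hbound 1 fun v hv => Real.exp_le_one_iff.2
      (mul_nonpos_of_nonpos_of_nonneg (not_lt.1 hx0) (by linarith [hv.1]))
    linarith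
  refine ⟨hx0, ?_⟩
  have h := hbound (Real.exp (x * T)) fun v hv =>
    Real.exp_le_exp.2 (mul_le_mul_of_nonneg_left hv.2 hx0.le)
  have h' : u ≤ T * Real.exp (x * T) := by nlinarith [Real.exp_pos (x * T)]
  have hlog := Real.log_le_log (by linarith) h'
  rw [Real.log_mul (by linarith) (Real.exp_pos _).ne', Real.log_exp] at hlog
  linarith

lemma xi_upper_bound {χ : ℝ → ℝ} {T u x a : ℝ}
    (hmeas : Measurable χ) (hχ : ∀ t, 0 ≤ t → 0 ≤ χ t ∧ χ t ≤ 1) (hx0 : 0 ≤ x)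
    (hx : u = ∫ v in (1 : ℝ)..T, χ v * Real.exp (x * v)) (ha : 1 ≤ a) (haT : a < T)
    (hm : 0 < ∫ t in a..T, χ t) :
    x * a ≤ Real.log u - Real.log (∫ t in a..T, χ t) := by
  have hI : IntervalIntegrable (fun v => χ v * Real.exp (x * v)) volume 1 T :=
    (intervalIntegrable_of_bounded hmeas hχ zero_le_one (by linarith)).mul_continuousOn
      (by fun_prop)
  have hI' : IntervalIntegrable (fun v => χ v * Real.exp (x * v)) volume a T :=
    (intervalIntegrable_of_bounded hmeas hχ (by linarith) haT.le).mul_continuousOn (by fun_prop)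
  have h1 : ∫ v in a..T, χ v * Real.exp (x * v) ≤ u := by
    rw [hx]
    refine intervalIntegral.integral_mono_interval ha haT.le le_rfl ?_ hI
    filter_upwards [ae_restrict_mem measurableSet_Ioc] with v hv
    exact mul_nonneg (hχ v (by linarith [hv.1])).1 (Real.exp_pos _).le
  have h2 : ∫ v in a..T, χ v * Real.exp (x * a) ≤ ∫ v in a..T, χ v * Real.exp (x * v) := by
    refine intervalIntegral.integral_mono_on haT.le
      ((intervalIntegrable_of_bounded hmeas hχ (by linarith) haT.le).mul_const _) hI'
      fun v hv => ?_
    exact mul_le_mul_of_nonneg_left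
      (Real.exp_le_exp.2 (mul_le_mul_of_nonneg_left hv.1 hx0)) (hχ v (by linarith [hv.1])).1
  rw [intervalIntegral.integral_mul_const] at h2
  have hlog := Real.log_le_log (by positivity) (h2.trans h1)
  rw [Real.log_mul hm.ne' (Real.exp_pos _).ne', Real.log_exp] at hlog
  linarith

lemma tendsto_log_sub_div_log (p B : ℝ) :
    Tendsto (fun u : ℝ => p * (Real.log u - B) / Real.log u) atTop (𝓝 p) := by
  have hlog : Tendsto (fun u : ℝ => (Real.log u)⁻¹) atTop (𝓝 0) :=
    tendsto_inv_atTop_zero.comp Real.tendsto_log_atTop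
  have h : Tendsto (fun u : ℝ => p * (1 - B * (Real.log u)⁻¹)) atTop (𝓝 (p * (1 - B * 0))) :=
    ((hlog.const_mul B).const_sub 1).const_mul p
  rw [mul_zero, sub_zero, mul_one] at h
  refine h.congr' ?_
  filter_upwards [eventually_gt_atTop 1] with u hu
  have h1 := Real.log_pos hu
  field_simp

lemma integral_Ioi_one_eq {χ f : ℝ → ℝ} {T : ℝ} (hT : 1 < T) (hχT : ∀ᵐ t, T < t → χ t = 0) :
    ∫ v in Ioi (1 : ℝ), χ v * f v = ∫ v in (1 : ℝ)..T, χ v * f v := by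
  rw [intervalIntegral.integral_of_le hT.le]
  refine setIntegral_eq_of_subset_of_ae_sdiff_eq_zero measurableSet_Ioi.nullMeasurableSet
    Ioc_subset_Ioi_self ?_
  filter_upwards [hχT] with t ht hmem
  rw [ht (not_le.1 fun h => hmem.2 ⟨hmem.1, h⟩), zero_mul]

theorem statement7 (χ : ℝ → ℝ) (hmeas : Measurable χ)
    (hχ1 : ∀ t : ℝ, 0 ≤ t → t ≤ 1 → χ t = 1)
    (hχ2 : ∀ t : ℝ, 1 < t → 0 ≤ χ t ∧ χ t ≤ 1)
    (T : ℝ) (hT : 1 < T) (hT0 : (∫ t in Set.Ioi T, χ t) = 0)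
    (hTmin : ∀ T' : ℝ, (∫ t in Set.Ioi T', χ t) = 0 → T ≤ T')
    (σ : ℝ → ℝ)
    (hσ1 : ∀ u : ℝ, 0 ≤ u → u ≤ 1 → σ u = 1)
    (hσeq : ∀ u : ℝ, 1 < u → u * σ u = ∫ t in (0 : ℝ)..u, σ (u - t) * χ t)
    (ξ : ℝ → ℝ)
    (hξ : ∀ u : ℝ, 1 < u → u = ∫ v in Set.Ioi (1 : ℝ), χ v * Real.exp (ξ u * v)) :
    Filter.Tendsto (fun u : ℝ => ξ u * T / Real.log u) Filter.atTop (nhds 1) ∧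
    Filter.Tendsto (fun u : ℝ => Real.log (σ u) / (u * Real.log u / T))
      Filter.atTop (nhds (-1)) := by
  have hTpos : 0 < T := by linarith
  have hχ : ∀ t, 0 ≤ t → 0 ≤ χ t ∧ χ t ≤ 1 := fun t ht => by
    rcases le_or_gt t 1 with h | h
    · simp [hχ1 t ht h]
    · exact hχ2 t h
  have hχT := ae_eq_zero_of_tail hχ hT hT0 hTmin
  have hmass : ∀ a, 1 ≤ a → a < T → 0 < ∫ t in a..T, χ t := fun a ha haT =>
    integral_pos_of_minimal hχ hχT hTmin (by linarith) haT
  constructor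
  · have hξ' : ∀ u, T < u → u = ∫ v in (1 : ℝ)..T, χ v * Real.exp (ξ u * v) := fun u hu => by
      rw [← integral_Ioi_one_eq hT hχT]
      exact hξ u (by linarith)
    refine tendsto_order.2 ⟨fun l hl => ?_, fun l hl => ?_⟩
    · filter_upwards [(tendsto_log_sub_div_log 1 (Real.log T)).eventually_const_lt hl,
        eventually_gt_atTop T] with u hu huT
      refine hu.trans_le ?_
      have hlog : 0 < Real.log u := Real.log_pos (by linarith)
      rw [one_mul]
      exact div_le_div_of_nonneg_right (xi_lower_bound hmeas hχ hT huT (hξ' u huT)).2 hlog.le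
    · obtain ⟨a, ha, haT⟩ : ∃ a, max 1 (T / l) < a ∧ a < T :=
        exists_between (max_lt hT (div_lt_self hTpos hl))
      obtain ⟨ha1, hal⟩ := max_lt_iff.1 ha
      have ha0 : 0 < a := by linarith
      have hlim : T / a < l := by
        rw [div_lt_iff₀ ha0]
        rw [div_lt_iff₀ (by linarith)] at hal
        linarith
      filter_upwards [(tendsto_log_sub_div_log (T / a)
        (Real.log (∫ t in a..T, χ t))).eventually_lt_const hlim,
        eventually_gt_atTop T] with u hu huT
      refine lt_of_le_of_lt ?_ hu
      have hlog : 0 < Real.log u := Real.log_pos (by linarith)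
      refine div_le_div_of_nonneg_right ?_ hlog.le
      have h := xi_upper_bound hmeas hχ
        (xi_lower_bound hmeas hχ hT huT (hξ' u huT)).1.le (hξ' u huT) ha1.le haT
        (hmass a ha1.le haT)
      calc ξ u * T = T / a * (ξ u * a) := by field_simp
        _ ≤ _ := mul_le_mul_of_nonneg_left h (by positivity)
  · have hσ : ∀ u, 0 ≤ u → IntervalIntegrable σ volume 0 u := fun u hu =>
      intervalIntegrable_of_delay hmeas hχ1 hχ hσ1 hσeq hu
    have hlow := exists_pos_lower_bound hmeas hχ1 hχ hσ1 hσeq hσ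
    have hpos : ∀ s, 0 ≤ s → 0 < σ s := fun s hs => by
      obtain ⟨c, hc, h⟩ := hlow s
      exact hc.trans_le (h s hs le_rfl)
    refine tendsto_order.2 ⟨fun l hl => ?_, fun l hl => ?_⟩
    · obtain ⟨a, ha, haT⟩ : ∃ a, max 1 (T / -l) < a ∧ a < T :=
        exists_between (max_lt hT (div_lt_self hTpos (by linarith)))
      obtain ⟨ha1, hal⟩ := max_lt_iff.1 ha
      have ha0 : 0 < a := by linarith
      have hlim : l < -(1 / a * T) := by
        rw [div_lt_iff₀ (by linarith)] at hal
        rw [lt_neg, one_div_mul_eq_div, div_lt_iff₀ ha0]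
        linarith
      obtain ⟨c, hc, hcle⟩ := hlow T
      filter_upwards [(tendsto_affine_mul_log_div (Real.log c) (1 / a) 1
        (Real.log (∫ t in a..T, χ t)) hTpos).eventually_const_lt hlim, eventually_gt_atTop 1,
        eventually_ge_atTop (∫ t in a..T, χ t)] with u hu hu1 hum
      refine hu.trans_le ?_
      have hlog : 0 < Real.log u := Real.log_pos hu1
      have hu0 : 0 < u := by linarith
      refine div_le_div_of_nonneg_right ?_ (by positivity)
      rw [one_div_mul_eq_div]
      exact log_lower_bound hmeas hχ hT hσeq hσ (fun s hs => (hpos s hs).le) ha0 haT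
        (hmass a ha1.le haT) hc hcle hu0 hum
    · obtain ⟨C, hC, hCle⟩ := exists_upper_bound hmeas hχ hχT hσ1 hσeq hσ
        (fun s hs => (hpos s hs).le) hT
      obtain ⟨κ, hκ, hκ'⟩ : ∃ κ, 0 < κ ∧ κ < min 1 (1 + l) :=
        exists_between (lt_min one_pos (by linarith))
      obtain ⟨hκ1, hκl⟩ := lt_min_iff.1 hκ'
      have hlim : -((1 - κ) / T * T) < l := by
        rw [div_mul_cancel₀ _ hTpos.ne']
        linarith
      filter_upwards [(tendsto_affine_mul_log_div (Real.log C) ((1 - κ) / T) (-1)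
        (Real.log (T / κ)) hTpos).eventually_lt_const hlim, eventually_gt_atTop 1,
        eventually_ge_atTop (T / κ)] with u hu hu1 hum
      refine lt_of_le_of_lt ?_ hu
      have hlog : 0 < Real.log u := Real.log_pos hu1
      have hu0 : 0 < u := by linarith
      refine div_le_div_of_nonneg_right ?_ (by positivity)
      rw [div_mul_eq_mul_div, ← sub_eq_add_neg]
      refine log_upper_bound hmeas hχ hχT hT hσeq hσ hpos hC hCle hκ hκ1 hu0 ?_
      rw [div_le_iff₀ hκ] at hum
      linarith
end

section
/- Let χ be a real measurable function with χ(t) = 1 for 0 ≤ t ≤ 1 and 0 ≤ χ(t) ≤ 1 for t > 1, and suppose χ(t) = ((1+ε(t))/h(t))^t for some function ε(t) → 0 as t → ∞, where h satisfies: (i) h is positive and nondecreasing with h(u) → ∞ as u → ∞; (ii) h is continuously differentiable and u·h'(u)/h(u) → n as u → ∞ for some 0 ≤ n < ∞. Let σ be the unique solution of u·σ(u) = ∫₀^u σ(u−t)·χ(t) dt for u > 1 with σ(u) = 1 for 0 ≤ u ≤ 1. Set ζ = e/n if n > 0 and ζ = 1 if n = 0. Then σ(u)^{1/u} · h(ζ·log(u))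 → 1 as u → ∞. -/
section

open MeasureTheory Set Filter Topology

/-- The delay equation `u σ(u) = ∫₀ᵘ σ(r) χ(u - r) dr` for a measurable kernel with values in
`[0, 1]` that equals `1` on `[0, 1]`, with initial datum `σ = 1` on `[0, 1]`. -/
structure IsDelaySolution (χ σ : ℝ → ℝ) : Prop where
  measurable : Measurable χ
  kernel_eq_one : ∀ t, 0 ≤ t → t ≤ 1 → χ t = 1
  kernel_nonneg : ∀ t, 0 ≤ t → 0 ≤ χ t
  kernel_le_one : ∀ t, 0 ≤ t → χ t ≤ 1
  eq_one : ∀ u, 0 ≤ u → u ≤ 1 → σ u = 1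
  mul_eq : ∀ u, 1 < u → u * σ u = ∫ r in (0 : ℝ)..u, σ r * χ (u - r)

/-- A nonnegative function dominated by a multiple of its own primitive vanishes. -/
theorem eq_zero_of_le_mul_integral {w : ℝ → ℝ} {T K : ℝ} (hK : 0 ≤ K) (hw : ∀ v, 0 ≤ w v)
    (hint : IntervalIntegrable w volume 0 T)
    (hle : ∀ v ∈ Icc 0 T, w v ≤ K * ∫ r in (0 : ℝ)..v, w r) :
    ∀ v ∈ Icc 0 T, w v = 0 := by
  intro v hv
  have hT : 0 ≤ T := hv.1.trans hv.2
  set w' : ℝ → ℝ := (Ioc 0 T).indicator w with hw'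
  have hi : Integrable w' := by
    rw [hw', integrable_indicator_iff measurableSet_Ioc]
    exact (intervalIntegrable_iff_integrableOn_Ioc_of_le hT).1 hint
  have hw'0 : ∀ x, 0 ≤ w' x := fun x => indicator_nonneg (fun y _ => hw y) x
  set F : ℝ → ℝ := fun x => ∫ r in (0 : ℝ)..x, w' r with hF
  have hFc : Continuous F := hi.continuous_primitive 0
  have hF0 : ∀ x, 0 ≤ x → 0 ≤ F x := fun x hx =>
    intervalIntegral.integral_nonneg hx fun r _ => hw'0 r
  have hFw : ∀ x ∈ Icc 0 T, F x = ∫ r in (0 : ℝ)..x, w r := by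
    intro x hx
    refine intervalIntegral.integral_congr_ae (Eventually.of_forall fun r hr => ?_)
    rw [uIoc_of_le hx.1] at hr
    exact indicator_of_mem (s := Ioc 0 T) ⟨hr.1, hr.2.trans hx.2⟩ w
  have hFle : ∀ x ∈ Icc 0 T, F x ≤ K * ∫ r in (0 : ℝ)..x, F r := by
    intro x hx
    rw [← intervalIntegral.integral_const_mul]
    refine intervalIntegral.integral_mono_on hx.1 hi.intervalIntegrable
      (hFc.const_mul K |>.intervalIntegrable _ _) fun r hr => ?_
    have hr' : r ∈ Icc 0 T := ⟨hr.1, hr.2.trans hx.2⟩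
    rw [hFw r hr']
    exact (indicator_le_self' (fun y _ => hw y) r).trans (hle r hr')
  have hG : ∀ x ∈ Icc 0 T, ‖∫ r in (0 : ℝ)..x, F r‖ ≤ gronwallBound 0 K 0 (x - 0) := by
    refine norm_le_gronwallBound_of_norm_deriv_right_le (f' := F)
      (intervalIntegral.continuous_primitive
        (fun a b => hFc.intervalIntegrable a b) 0).continuousOn
      (fun x _ => (hFc.integral_hasStrictDerivAt 0 x).hasDerivAt.hasDerivWithinAt)
      (by simp) fun x hx => ?_
    rw [add_zero, Real.norm_of_nonneg (hF0 x hx.1), Real.norm_of_nonneg]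
    · exact hFle x ⟨hx.1, hx.2.le⟩
    · exact intervalIntegral.integral_nonneg hx.1 fun r hr => hF0 r hr.1
  have hG0 := hG v hv
  rw [gronwallBound_ε0_δ0, norm_le_zero_iff] at hG0
  have hFv := hFle v hv
  rw [hG0, mul_zero] at hFv
  have h1 := hle v hv
  rw [← hFw v hv] at h1
  have := hw v
  nlinarith [hF0 v hv.1]

namespace IsDelaySolution

variable {χ σ : ℝ → ℝ}

theorem aestronglyMeasurable_kernel (S : IsDelaySolution χ σ) (v : ℝ) (μ : Measure ℝ) :
    AEStronglyMeasurable (fun r => χ (v - r)) μ :=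
  (S.measurable.comp (measurable_const.sub measurable_id)).aestronglyMeasurable

theorem intervalIntegrable_mul_kernel (S : IsDelaySolution χ σ) {f : ℝ → ℝ} {v : ℝ} (hv : 0 ≤ v)
    (hf : IntervalIntegrable f volume 0 v) :
    IntervalIntegrable (fun r => f r * χ (v - r)) volume 0 v := by
  rw [intervalIntegrable_iff_integrableOn_Ioc_of_le hv] at hf ⊢
  refine Integrable.mul_bdd (c := 1) hf (S.aestronglyMeasurable_kernel v _) ?_
  refine (ae_restrict_mem measurableSet_Ioc).mono fun r hr => ?_
  have : 0 ≤ v - r := by linarith [hr.2]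
  rw [Real.norm_of_nonneg (S.kernel_nonneg _ this)]
  exact S.kernel_le_one _ this

theorem eq_zero_of_not_intervalIntegrable (S : IsDelaySolution χ σ) {v : ℝ} (hv : 1 < v)
    (hprev : IntervalIntegrable σ volume 0 (v - 1)) (hnot : ¬ IntervalIntegrable σ volume 0 v) :
    σ v = 0 := by
  have hund : ¬ IntervalIntegrable (fun r => σ r * χ (v - r)) volume 0 v := by
    intro hi
    refine hnot (hprev.trans ?_)
    have h1 : IntervalIntegrable (fun r => σ r * χ (v - r)) volume (v - 1) v := by
      refine hi.mono_set ?_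
      rw [uIcc_of_le (by linarith), uIcc_of_le (by linarith)]
      exact Icc_subset_Icc_left (by linarith)
    refine h1.congr fun r hr => ?_
    rw [uIoc_of_le (by linarith)] at hr
    rw [S.kernel_eq_one (v - r) (by linarith [hr.2]) (by linarith [hr.1]), mul_one]
  have h := S.mul_eq v hv
  rw [intervalIntegral.integral_undef hund] at h
  exact (mul_eq_zero.1 h).resolve_left (by linarith)

theorem abs_le_integral_abs (S : IsDelaySolution χ σ) {v : ℝ} (hv : 1 < v)
    (hi : IntervalIntegrable σ volume 0 v) : |σ v| ≤ ∫ r in (0 : ℝ)..v, |σ r| := by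
  have h1 : |v * σ v| ≤ ∫ r in (0 : ℝ)..v, |σ r| := by
    rw [S.mul_eq v hv, ← Real.norm_eq_abs]
    refine intervalIntegral.norm_integral_le_of_norm_le (by linarith)
      (Eventually.of_forall fun r hr => ?_) hi.abs
    have : 0 ≤ v - r := by linarith [hr.2]
    rw [norm_mul, Real.norm_of_nonneg (S.kernel_nonneg _ this)]
    exact mul_le_of_le_one_right (norm_nonneg _) (S.kernel_le_one _ this)
  rw [abs_mul, abs_of_pos (by linarith)] at h1
  nlinarith [abs_nonneg (σ v)]

theorem intervalIntegrable_add_half (S : IsDelaySolution χ σ) {a : ℝ} (ha : 1 ≤ a)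
    (hi : IntervalIntegrable σ volume 0 a) : IntervalIntegrable σ volume 0 (a + 1 / 2) := by
  set A : Set ℝ := {u | a ≤ u ∧ u ≤ a + 1 / 2 ∧ IntervalIntegrable σ volume 0 u} with hA
  have haA : a ∈ A := ⟨le_rfl, by linarith, hi⟩
  have hbdd : BddAbove A := ⟨a + 1 / 2, fun u hu => hu.2.1⟩
  have hab : a ≤ sSup A := le_csSup hbdd haA
  have hb : sSup A ≤ a + 1 / 2 := csSup_le ⟨a, haA⟩ fun u hu => hu.2.1
  obtain ⟨x, -, hx, hxA⟩ := exists_seq_tendsto_sSup ⟨a, haA⟩ hbdd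
  have hsub : ∀ {p q u : ℝ}, 0 ≤ p → p ≤ q → q ≤ u → IntervalIntegrable σ volume 0 u →
      IntervalIntegrable σ volume p q := by
    intro p q u hp hpq hqu hu
    refine hu.mono_set ?_
    rw [uIcc_of_le hpq, uIcc_of_le (hp.trans (hpq.trans hqu))]
    exact Icc_subset_Icc hp hqu
  have hmass : ∀ u ∈ A, ∫ r in a..u, |σ r| ≤ ∫ r in (0 : ℝ)..a, |σ r| := by
    rintro u ⟨hau, hua, hu⟩
    have hau' : IntervalIntegrable σ volume a u := hsub (by linarith) hau le_rfl hu
    have hsplit : ∫ r in (0 : ℝ)..u, |σ r| = (∫ r in (0 : ℝ)..a, |σ r|) + ∫ r in a..u, |σ r| :=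
      (intervalIntegral.integral_add_adjacent_intervals hi.abs hau'.abs).symm
    have hnn : 0 ≤ ∫ r in (0 : ℝ)..u, |σ r| :=
      intervalIntegral.integral_nonneg (by linarith) fun r _ => abs_nonneg _
    have hle : ∫ r in a..u, |σ r| ≤ ∫ _ in a..u, ∫ r in (0 : ℝ)..u, |σ r| := by
      refine intervalIntegral.integral_mono_ae_restrict hau hau'.abs
        intervalIntegrable_const ?_
      rw [← restrict_Ioc_eq_restrict_Icc]
      refine (ae_restrict_mem measurableSet_Ioc).mono fun v hv => ?_
      refine (S.abs_le_integral_abs (ha.trans_lt hv.1)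
        (hsub le_rfl (by linarith [hv.1]) hv.2 hu)).trans ?_
      exact intervalIntegral.integral_mono_interval le_rfl (by linarith [hv.1]) hv.2
        (Eventually.of_forall fun r => abs_nonneg _) hu.abs
    rw [intervalIntegral.integral_const, smul_eq_mul] at hle
    nlinarith
  have hib : IntervalIntegrable σ volume a (sSup A) := by
    rw [intervalIntegrable_iff_integrableOn_Ioc_of_le hab]
    refine integrableOn_Ioc_of_intervalIntegral_norm_bounded_right
      (I := ∫ r in (0 : ℝ)..a, |σ r|) (fun i => ?_) hx (Eventually.of_forall fun i => ?_)
    · exact (intervalIntegrable_iff_integrableOn_Ioc_of_le (hxA i).1).1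
        (hsub (by linarith) (hxA i).1 le_rfl (hxA i).2.2)
    · have := hmass _ (hxA i)
      rwa [intervalIntegral.integral_of_le (hxA i).1] at this
  refine (hi.trans hib).trans ((intervalIntegrable_const (c := (0 : ℝ))).congr fun v hv => ?_)
  rw [uIoc_of_le hb] at hv
  refine (S.eq_zero_of_not_intervalIntegrable (by linarith [hv.1]) ?_ fun hn => ?_).symm
  · exact hsub le_rfl (by linarith [hv.1]) (by linarith [hv.2]) hi
  · exact absurd (le_csSup hbdd ⟨hab.trans hv.1.le, hv.2, hn⟩) (not_le.2 hv.1)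

theorem intervalIntegrable (S : IsDelaySolution χ σ) {u : ℝ} (hu : 0 ≤ u) :
    IntervalIntegrable σ volume 0 u := by
  have key : ∀ k : ℕ, IntervalIntegrable σ volume 0 (1 + k * (1 / 2)) := by
    intro k
    induction k with
    | zero =>
      refine (intervalIntegrable_const (c := (1 : ℝ))).congr fun v hv => ?_
      norm_num at hv
      exact (S.eq_one v hv.1.le hv.2).symm
    | succ k ih =>
      have hk : (1 : ℝ) ≤ 1 + k * (1 / 2) := le_add_of_nonneg_right (by positivity)
      have h := S.intervalIntegrable_add_half hk ih
      rwa [show 1 + (k : ℝ) * (1 / 2) + 1 / 2 = 1 + (k + 1 : ℕ) * (1 / 2) by push_cast; ring] at h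
  obtain ⟨k, hk⟩ := exists_nat_gt (2 * u)
  refine (key k).mono_set ?_
  rw [uIcc_of_le hu, uIcc_of_le (by positivity)]
  exact Icc_subset_Icc_right (by linarith)

theorem nonneg (S : IsDelaySolution χ σ) {u : ℝ} (hu : 0 ≤ u) : 0 ≤ σ u := by
  have hi := S.intervalIntegrable hu
  have key := eq_zero_of_le_mul_integral (w := fun v => max (-σ v) 0) (T := u) (K := 1)
    zero_le_one (fun v => le_max_right _ _)
    ⟨hi.neg.1.pos_part, hi.neg.2.pos_part⟩ ?_ u ⟨hu, le_rfl⟩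
  · simpa using key
  intro v hv
  have hiv := S.intervalIntegrable hv.1
  have hwv : IntervalIntegrable (fun v => max (-σ v) 0) volume 0 v :=
    ⟨hiv.neg.1.pos_part, hiv.neg.2.pos_part⟩
  have hnn : 0 ≤ ∫ r in (0 : ℝ)..v, max (-σ r) 0 :=
    intervalIntegral.integral_nonneg hv.1 fun r _ => le_max_right _ _
  rw [one_mul]
  refine max_le ?_ hnn
  rcases le_or_gt v 1 with h1 | h1
  · rw [S.eq_one v hv.1 h1]; linarith
  have hle : -(v * σ v) ≤ ∫ r in (0 : ℝ)..v, max (-σ r) 0 := by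
    rw [S.mul_eq v h1, ← intervalIntegral.integral_neg]
    refine intervalIntegral.integral_mono_on hv.1
      (S.intervalIntegrable_mul_kernel hv.1 hiv).neg hwv fun r hr => ?_
    have h0 : 0 ≤ v - r := by linarith [hr.2]
    have := S.kernel_nonneg _ h0
    have := S.kernel_le_one _ h0
    have := le_max_left (-σ r) 0
    have := le_max_right (-σ r) 0
    nlinarith
  rcases le_or_gt 0 (σ v) with h2 | h2
  · linarith
  · nlinarith

/-- Exponential upper bounds propagate once the exponential moment of the kernel on `[0, v]` is at
most `v`. -/
theorem le_mul_exp (S : IsDelaySolution χ σ) {T s B : ℝ} (hs : 0 ≤ s) (hB : 0 ≤ B)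
    (H : ∀ v ∈ Icc 0 T, σ v ≤ B * Real.exp (-(s * v)) ∨
      (1 < v ∧ ∫ t in (0 : ℝ)..v, χ t * Real.exp (s * t) ≤ v)) :
    ∀ v ∈ Icc 0 T, σ v ≤ B * Real.exp (-(s * v)) := by
  have hiff : ∀ v, σ v ≤ B * Real.exp (-(s * v)) ↔ Real.exp (s * v) * σ v - B ≤ 0 := by
    intro v
    rw [Real.exp_neg, ← div_eq_mul_inv, le_div_iff₀ (Real.exp_pos _), sub_nonpos, mul_comm]
  have hint : ∀ {v}, 0 ≤ v →
      IntervalIntegrable (fun v => max (Real.exp (s * v) * σ v - B) 0) volume 0 v := by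
    intro v hv
    have h1 : IntervalIntegrable (fun v => Real.exp (s * v) * σ v - B) volume 0 v :=
      ((S.intervalIntegrable hv).continuousOn_mul (by fun_prop)).sub intervalIntegrable_const
    exact ⟨h1.1.pos_part, h1.2.pos_part⟩
  intro u hu
  have key := eq_zero_of_le_mul_integral (w := fun v => max (Real.exp (s * v) * σ v - B) 0)
    (T := T) (K := Real.exp (s * T)) (Real.exp_pos _).le (fun v => le_max_right _ _)
    (hint (hu.1.trans hu.2)) ?_ u hu
  · rw [hiff]
    simpa using key
  intro v hv
  have hnn : 0 ≤ ∫ r in (0 : ℝ)..v, max (Real.exp (s * r) * σ r - B) 0 :=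
    intervalIntegral.integral_nonneg hv.1 fun r _ => le_max_right _ _
  have hKnn := mul_nonneg (Real.exp_pos (s * T)).le hnn
  refine max_le ?_ hKnn
  rcases H v hv with h | ⟨h1, h2⟩
  · exact ((hiff v).1 h).trans hKnn
  have hmom : ∫ r in (0 : ℝ)..v, Real.exp (s * (v - r)) * χ (v - r) ≤ v := by
    rw [intervalIntegral.integral_comp_sub_left (fun t => Real.exp (s * t) * χ t) v]
    simpa [mul_comm] using h2
  have hmi : IntervalIntegrable (fun r => Real.exp (s * (v - r)) * χ (v - r)) volume 0 v :=
    S.intervalIntegrable_mul_kernel hv.1 (Continuous.intervalIntegrable (by fun_prop) _ _)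
  have hle : v * (Real.exp (s * v) * σ v) ≤
      ∫ r in (0 : ℝ)..v, (B * (Real.exp (s * (v - r)) * χ (v - r)) +
        Real.exp (s * T) * max (Real.exp (s * r) * σ r - B) 0) := by
    have heq : v * (Real.exp (s * v) * σ v) =
        ∫ r in (0 : ℝ)..v, Real.exp (s * v) * (σ r * χ (v - r)) := by
      rw [intervalIntegral.integral_const_mul, ← S.mul_eq v h1]; ring
    rw [heq]
    refine intervalIntegral.integral_mono_on hv.1
      ((S.intervalIntegrable_mul_kernel hv.1 (S.intervalIntegrable hv.1)).const_mul _)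
      ((hmi.const_mul _).add ((hint hv.1).const_mul _)) fun r hr => ?_
    have h0 : 0 ≤ v - r := by linarith [hr.2]
    have hk0 := S.kernel_nonneg _ h0
    have hk1 := S.kernel_le_one _ h0
    have hm1 := le_max_left (Real.exp (s * r) * σ r - B) 0
    have hm0 := le_max_right (Real.exp (s * r) * σ r - B) 0
    set m := max (Real.exp (s * r) * σ r - B) 0
    have hexp : Real.exp (s * v) = Real.exp (s * (v - r)) * Real.exp (s * r) := by
      rw [← Real.exp_add]; ring_nf
    have hE : Real.exp (s * (v - r)) ≤ Real.exp (s * T) :=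
      Real.exp_le_exp.2 (mul_le_mul_of_nonneg_left (by linarith [hr.1, hv.2]) hs)
    have hE0 := Real.exp_pos (s * (v - r))
    calc Real.exp (s * v) * (σ r * χ (v - r))
        = (Real.exp (s * (v - r)) * χ (v - r)) * (Real.exp (s * r) * σ r) := by rw [hexp]; ring
      _ ≤ (Real.exp (s * (v - r)) * χ (v - r)) * (B + m) := by
          gcongr; linarith
      _ = B * (Real.exp (s * (v - r)) * χ (v - r)) + (Real.exp (s * (v - r)) * χ (v - r)) * m := by
          ring
      _ ≤ _ := by
          gcongr
          exact (mul_le_of_le_one_right hE0.le hk1).trans hE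
  rw [intervalIntegral.integral_add (hmi.const_mul _) ((hint hv.1).const_mul _),
    intervalIntegral.integral_const_mul, intervalIntegral.integral_const_mul] at hle
  have h3 : v * (Real.exp (s * v) * σ v - B) ≤
      Real.exp (s * T) * ∫ r in (0 : ℝ)..v, max (Real.exp (s * r) * σ r - B) 0 := by
    nlinarith [mul_le_mul_of_nonneg_left hmom hB]
  rcases le_or_gt (Real.exp (s * v) * σ v - B) 0 with h4 | h4
  · exact h4.trans hKnn
  · nlinarith

theorem le_one (S : IsDelaySolution χ σ) {u : ℝ} (hu : 0 ≤ u) : σ u ≤ 1 := by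
  have := S.le_mul_exp (T := u) (s := 0) (B := 1) le_rfl zero_le_one (fun v hv => ?_) u ⟨hu, le_rfl⟩
  · simpa using this
  rcases le_or_gt v 1 with h | h
  · left; simp [S.eq_one v hv.1 h]
  · right
    refine ⟨h, ?_⟩
    have hi := S.intervalIntegrable_mul_kernel hv.1
      (intervalIntegrable_const (c := (1 : ℝ)))
    have : ∫ t in (0 : ℝ)..v, χ t * Real.exp (0 * t) = ∫ r in (0 : ℝ)..v, 1 * χ (v - r) := by
      rw [intervalIntegral.integral_comp_sub_left (fun t => 1 * χ t) v]; simp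
    rw [this]
    refine (intervalIntegral.integral_mono_on hv.1 hi
      (intervalIntegrable_const (c := (1 : ℝ))) fun r hr => ?_).trans (by simp)
    rw [one_mul]
    exact S.kernel_le_one _ (by linarith [hr.2])

/-- Exponential lower bounds propagate using the part of the kernel supported on `[a, b]`. -/
theorem mul_exp_le (S : IsDelaySolution χ σ) {T s B a b c : ℝ} (ha : 0 < a) (hab : a ≤ b)
    (hb : 1 ≤ b) (hs : 0 ≤ s) (hB : 0 ≤ B) (hc : 0 ≤ c) (hχ : ∀ t ∈ Icc a b, c ≤ χ t)
    (hT : T ≤ (b - a) * c * Real.exp (s * a))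
    (hbase : ∀ v ∈ Icc 0 b, B * Real.exp (-(s * v)) ≤ σ v) :
    ∀ v ∈ Icc 0 T, B * Real.exp (-(s * v)) ≤ σ v := by
  have key : ∀ k : ℕ, ∀ v ∈ Icc 0 T, v ≤ b + k * a → B * Real.exp (-(s * v)) ≤ σ v := by
    intro k
    induction k with
    | zero => exact fun v hv hvb => hbase v ⟨hv.1, by simpa using hvb⟩
    | succ k ih =>
      intro v hv hvb
      rcases le_or_gt v b with h | h
      · exact hbase v ⟨hv.1, h⟩
      have hi := S.intervalIntegrable_mul_kernel hv.1 (S.intervalIntegrable hv.1)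
      have hconst : ∫ _ in (v - b)..(v - a), B * Real.exp (-(s * (v - a))) * c ≤
          ∫ r in (v - b)..(v - a), σ r * χ (v - r) := by
        refine intervalIntegral.integral_mono_on (by linarith) intervalIntegrable_const ?_
          fun r hr => ?_
        · refine hi.mono_set ?_
          rw [uIcc_of_le (by linarith), uIcc_of_le hv.1]
          exact Icc_subset_Icc (by linarith) (by linarith)
        · have hr0 : 0 ≤ r := by linarith [hr.1]
          have h1 := ih r ⟨hr0, by linarith [hr.2, hv.2]⟩ (by push_cast at hvb; linarith [hr.2])
          have h2 : Real.exp (-(s * (v - a))) ≤ Real.exp (-(s * r)) :=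
            Real.exp_le_exp.2 (neg_le_neg (mul_le_mul_of_nonneg_left hr.2 hs))
          exact mul_le_mul ((mul_le_mul_of_nonneg_left h2 hB).trans h1)
            (hχ _ ⟨by linarith [hr.2], by linarith [hr.1]⟩) hc (S.nonneg hr0)
      have hmono : ∫ r in (v - b)..(v - a), σ r * χ (v - r) ≤ v * σ v := by
        rw [S.mul_eq v (by linarith)]
        refine intervalIntegral.integral_mono_interval (by linarith) (by linarith) (by linarith)
          ?_ hi
        refine (ae_restrict_mem measurableSet_Ioc).mono fun r hr => ?_
        exact mul_nonneg (S.nonneg hr.1.le) (S.kernel_nonneg _ (by linarith [hr.2]))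
      rw [intervalIntegral.integral_const, smul_eq_mul] at hconst
      have hexp : Real.exp (-(s * (v - a))) = Real.exp (-(s * v)) * Real.exp (s * a) := by
        rw [← Real.exp_add]; ring_nf
      rw [hexp] at hconst
      have hvp : 0 < v := by linarith
      have h3 : v * (B * Real.exp (-(s * v))) ≤
          ((b - a) * c * Real.exp (s * a)) * (B * Real.exp (-(s * v))) :=
        mul_le_mul_of_nonneg_right (hv.2.trans hT) (by positivity)
      refine le_of_mul_le_mul_left ?_ hvp
      linarith
  intro v hv
  obtain ⟨k, hk⟩ := exists_nat_gt (v / a)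
  rw [div_lt_iff₀ ha] at hk
  exact key k v hv (by linarith)

theorem exp_neg_mul_log_le (S : IsDelaySolution χ σ) {T : ℝ} (hT : 1 ≤ T) {v : ℝ}
    (hv : v ∈ Icc 0 T) : Real.exp (-(2 * T * Real.log (2 * T))) ≤ σ v := by
  have hlog : 0 ≤ Real.log (2 * T) := Real.log_nonneg (by linarith)
  have h := S.mul_exp_le (T := T) (s := 2 * Real.log (2 * T)) (B := 1) (a := 1 / 2) (b := 1) (c := 1)
    (by norm_num) (by norm_num) le_rfl (by positivity) zero_le_one zero_le_one
    (fun t ht => (S.kernel_eq_one t (by linarith [ht.1]) ht.2).ge) ?_ (fun r hr => ?_) v hv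
  · refine le_trans ?_ h
    rw [one_mul, Real.exp_le_exp, neg_le_neg_iff]
    nlinarith [mul_le_mul_of_nonneg_left hv.2 hlog]
  · rw [show 2 * Real.log (2 * T) * (1 / 2) = Real.log (2 * T) by ring,
      Real.exp_log (by linarith)]
    linarith
  · rw [S.eq_one r hr.1 hr.2, one_mul, Real.exp_le_one_iff, neg_nonpos]
    exact mul_nonneg (by positivity) hr.1

end IsDelaySolution

/-- `h` is positive, nondecreasing and continuously differentiable on `(0, ∞)`, tends to infinity,
and its logarithmic derivative satisfies `x h'(x) / h(x) → n`. -/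
structure IsSmoothlyVarying (h : ℝ → ℝ) (n : ℝ) : Prop where
  pos : ∀ t, 0 < t → 0 < h t
  monotoneOn : MonotoneOn h (Ioi 0)
  tendsto_atTop : Tendsto h atTop atTop
  contDiffOn : ContDiffOn ℝ 1 h (Ioi 0)
  tendsto_index : Tendsto (fun u : ℝ => u * deriv h u / h u) atTop (𝓝 n)

namespace IsSmoothlyVarying

variable {h : ℝ → ℝ} {n : ℝ}

theorem hasDerivAt_log_sub (R : IsSmoothlyVarying h n) (N : ℝ) {t : ℝ} (ht : 0 < t) :
    HasDerivAt (fun t => Real.log (h t) - N * Real.log t)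
      ((t * deriv h t / h t - N) / t) t := by
  have hd : DifferentiableAt ℝ h t :=
    (R.contDiffOn.differentiableOn one_ne_zero).differentiableAt (Ioi_mem_nhds ht)
  have hh := R.pos t ht
  refine ((hd.hasDerivAt.log hh.ne').sub ((Real.hasDerivAt_log ht.ne').const_mul N)).congr_deriv ?_
  field_simp

theorem log_le_log (R : IsSmoothlyVarying h n) {x y : ℝ} (hx : 0 < x) (hxy : x ≤ y) :
    Real.log (h x) ≤ Real.log (h y) :=
  Real.log_le_log (R.pos x hx) (R.monotoneOn hx (hx.trans_le hxy) hxy)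

theorem exists_log_sub_le (R : IsSmoothlyVarying h n) {N : ℝ} (hN : n < N) :
    ∃ T : ℝ, 1 ≤ T ∧ ∀ x y, T ≤ x → x ≤ y →
      Real.log (h y) - Real.log (h x) ≤ N * Real.log (y / x) := by
  obtain ⟨T, hT⟩ := eventually_atTop.1
    ((R.tendsto_index.eventually (eventually_le_nhds hN)).and (eventually_ge_atTop 1))
  have hT1 := (hT T le_rfl).2
  have hder : ∀ t, T ≤ t → HasDerivAt (fun t => Real.log (h t) - N * Real.log t)
      ((t * deriv h t / h t - N) / t) t := fun t ht => R.hasDerivAt_log_sub N (by linarith)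
  have hanti : AntitoneOn (fun t => Real.log (h t) - N * Real.log t) (Ici T) := by
    refine antitoneOn_of_deriv_nonpos (convex_Ici T)
      (fun t ht => (hder t ht).continuousAt.continuousWithinAt)
      (fun t ht => (hder t (interior_subset ht)).differentiableAt.differentiableWithinAt)
      fun t ht => ?_
    have ht' := interior_subset ht
    rw [(hder t ht').deriv]
    exact div_nonpos_of_nonpos_of_nonneg (sub_nonpos.2 (hT t ht').1) (by linarith [(hT t ht').2])
  refine ⟨T, hT1, fun x y hx hxy => ?_⟩
  have := hanti hx (hx.trans hxy) hxy
  simp only at this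
  rw [Real.log_div (by linarith) (by linarith)]
  linarith

theorem exists_le_log_sub (R : IsSmoothlyVarying h n) {N : ℝ} (hN : N < n) :
    ∃ T : ℝ, 1 ≤ T ∧ ∀ x y, T ≤ x → x ≤ y →
      N * Real.log (y / x) ≤ Real.log (h y) - Real.log (h x) := by
  obtain ⟨T, hT⟩ := eventually_atTop.1
    ((R.tendsto_index.eventually (eventually_ge_nhds hN)).and (eventually_ge_atTop 1))
  have hT1 := (hT T le_rfl).2
  have hder : ∀ t, T ≤ t → HasDerivAt (fun t => Real.log (h t) - N * Real.log t)
      ((t * deriv h t / h t - N) / t) t := fun t ht => R.hasDerivAt_log_sub N (by linarith)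
  have hmono : MonotoneOn (fun t => Real.log (h t) - N * Real.log t) (Ici T) := by
    refine monotoneOn_of_deriv_nonneg (convex_Ici T)
      (fun t ht => (hder t ht).continuousAt.continuousWithinAt)
      (fun t ht => (hder t (interior_subset ht)).differentiableAt.differentiableWithinAt)
      fun t ht => ?_
    have ht' := interior_subset ht
    rw [(hder t ht').deriv]
    exact div_nonneg (sub_nonneg.2 (hT t ht').1) (by linarith [(hT t ht').2])
  refine ⟨T, hT1, fun x y hx hxy => ?_⟩
  have := hmono hx (hx.trans hxy) hxy
  simp only at this
  rw [Real.log_div (by linarith) (by linarith)]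
  linarith

theorem tendsto_log_atTop (R : IsSmoothlyVarying h n) :
    Tendsto (fun x => Real.log (h x)) atTop atTop :=
  Real.tendsto_log_atTop.comp R.tendsto_atTop

theorem tendsto_log_div (R : IsSmoothlyVarying h n) :
    Tendsto (fun x => Real.log (h x) / x) atTop (𝓝 0) := by
  obtain ⟨T, hT1, hT⟩ := R.exists_log_sub_le (N := max n 0 + 1)
    (lt_of_le_of_lt (le_max_left n 0) (lt_add_one _))
  have hN : 0 ≤ max n 0 + 1 := by positivity
  have hub : Tendsto (fun x : ℝ => Real.log (h T) / x + (max n 0 + 1) * (Real.log x / x))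
      atTop (𝓝 0) := by
    have h1 : Tendsto (fun x : ℝ => Real.log x / x) atTop (𝓝 0) :=
      Real.isLittleO_log_id_atTop.tendsto_div_nhds_zero
    simpa using (tendsto_const_nhds.div_atTop tendsto_id).add (h1.const_mul (max n 0 + 1))
  refine tendsto_of_tendsto_of_tendsto_of_le_of_le' tendsto_const_nhds hub ?_ ?_
  · filter_upwards [R.tendsto_log_atTop.eventually_ge_atTop 0, eventually_ge_atTop 0] with x hx hx0
    exact div_nonneg hx hx0
  · filter_upwards [eventually_ge_atTop T] with x hx
    have hx0 : 0 < x := by linarith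
    have h1 := hT T x le_rfl hx
    have h2 : Real.log (x / T) ≤ Real.log x := by
      rw [Real.log_div hx0.ne' (by linarith)]
      linarith [Real.log_nonneg hT1]
    rw [mul_div_assoc', ← add_div]
    gcongr
    nlinarith [mul_le_mul_of_nonneg_left h2 hN]

theorem tendsto_log_mul_sub (R : IsSmoothlyVarying h n) {a b : ℝ} (ha : 0 < a) (hb : 0 < b) :
    Tendsto (fun x => Real.log (h (a * x)) - Real.log (h (b * x))) atTop
      (𝓝 (n * Real.log (a / b))) := by
  wlog hab : b ≤ a generalizing a b with H
  · have := (H hb ha (le_of_not_ge hab)).neg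
    convert this using 2
    · ring
    · rw [← inv_div, Real.log_inv]; ring
  have hl : 0 ≤ Real.log (a / b) := Real.log_nonneg ((one_le_div hb).2 hab)
  have hratio : ∀ x : ℝ, 0 < x → a * x / (b * x) = a / b := fun x hx =>
    mul_div_mul_right _ _ hx.ne'
  have hbx : Tendsto (fun x : ℝ => b * x) atTop atTop := tendsto_id.const_mul_atTop hb
  have hcont : Continuous fun N : ℝ => N * Real.log (a / b) := continuous_id.mul continuous_const
  refine tendsto_order.2 ⟨fun y hy => ?_, fun y hy => ?_⟩
  · obtain ⟨N, hNy, hN⟩ := ((((hcont.tendsto n).eventually (lt_mem_nhds hy)).filter_mono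
      nhdsWithin_le_nhds).and (self_mem_nhdsWithin : Iio n ∈ 𝓝[<] n)).exists
    obtain ⟨T, -, hT⟩ := R.exists_le_log_sub hN
    filter_upwards [hbx.eventually_ge_atTop T, eventually_gt_atTop 0] with x hx hx0
    have := hT (b * x) (a * x) hx (by gcongr)
    rw [hratio x hx0] at this
    linarith
  · obtain ⟨N, hNy, hN⟩ := ((((hcont.tendsto n).eventually (gt_mem_nhds hy)).filter_mono
      nhdsWithin_le_nhds).and (self_mem_nhdsWithin : Ioi n ∈ 𝓝[>] n)).exists
    obtain ⟨T, -, hT⟩ := R.exists_log_sub_le hN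
    filter_upwards [hbx.eventually_ge_atTop T, eventually_gt_atTop 0] with x hx hx0
    have := hT (b * x) (a * x) hx (by gcongr)
    rw [hratio x hx0] at this
    linarith

end IsSmoothlyVarying

theorem eventually_exp_le_rpow_le {χ e h : ℝ → ℝ} (he : Tendsto e atTop (𝓝 0))
    (hpos : ∀ t, 0 < t → 0 < h t) (hχ : ∀ t, 1 ≤ t → χ t = ((1 + e t) / h t) ^ t) {δ : ℝ}
    (hδ : 0 < δ) :
    ∀ᶠ t in atTop, Real.exp (-(t * (δ + Real.log (h t)))) ≤ χ t ∧
      χ t ≤ Real.exp (t * (δ - Real.log (h t))) := by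
  have h1 : Tendsto (fun t => 1 + e t) atTop (𝓝 1) := by simpa using he.const_add 1
  have h2 : Tendsto (fun t => Real.log (1 + e t)) atTop (𝓝 0) := by
    simpa using h1.log one_ne_zero
  filter_upwards [eventually_ge_atTop 1, h1.eventually (lt_mem_nhds one_half_lt_one),
    h2.eventually (eventually_le_nhds hδ),
    h2.eventually (eventually_ge_nhds (neg_lt_zero.2 hδ))] with t ht he0 hle hge
  have hh := hpos t (by linarith)
  have he1 : 0 < 1 + e t := by linarith
  rw [hχ t ht, Real.rpow_def_of_pos (div_pos he1 hh), Real.log_div he1.ne' hh.ne',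
    Real.exp_le_exp, Real.exp_le_exp]
  constructor <;> nlinarith

theorem IsSmoothlyVarying.eventually_log_le {h : ℝ → ℝ} {n : ℝ} (R : IsSmoothlyVarying h n)
    {a c : ℝ} (ha : 0 < a) (hc : 0 < c) : ∀ᶠ x in atTop, Real.log (h (a * x)) ≤ c * x := by
  have hax : Tendsto (fun x : ℝ => a * x) atTop atTop := tendsto_id.const_mul_atTop ha
  filter_upwards [(R.tendsto_log_div.comp hax).eventually (eventually_le_nhds (div_pos hc ha)),
    eventually_gt_atTop 0] with x hx hx0
  rw [Function.comp_apply, div_le_iff₀ (by positivity)] at hx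
  refine hx.trans_eq ?_
  field_simp

theorem IsDelaySolution.eventually_exp_neg_le {χ σ h : ℝ → ℝ} {n : ℝ} (S : IsDelaySolution χ σ)
    (R : IsSmoothlyVarying h n) {ζ A A' δ : ℝ} (hζ : 0 < ζ) (hA : 0 < A) (hAA' : A < A')
    (hδ : 0 < δ) (hχ : ∀ᶠ t in atTop, Real.exp (-(t * (δ + Real.log (h t)))) ≤ χ t)
    (hle : 1 / A + n * Real.log (A' / ζ) ≤ δ) :
    ∀ᶠ u in atTop, Real.exp (-(u * (Real.log (h (ζ * Real.log u)) + 5 * δ))) ≤ σ u := by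
  suffices key : ∀ᶠ L in atTop,
      Real.exp (-(Real.exp L * (Real.log (h (ζ * L)) + 5 * δ))) ≤ σ (Real.exp L) by
    filter_upwards [Real.tendsto_log_atTop.eventually key, eventually_gt_atTop 0] with u hu hu0
    rwa [Real.exp_log hu0] at hu
  have hA' : 0 < A' := hA.trans hAA'
  have hAx : Tendsto (fun x : ℝ => A * x) atTop atTop := tendsto_id.const_mul_atTop hA
  obtain ⟨T₀, hT₀⟩ := eventually_atTop.1 (hχ.and (R.tendsto_log_atTop.eventually_ge_atTop 0))
  have hsq : Tendsto (fun L : ℝ => L ^ 2 * Real.exp (-L)) atTop (𝓝 0) :=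
    Real.tendsto_pow_mul_exp_neg_atTop_nhds_zero 2
  have hδA : 0 < δ / (4 * A' ^ 2) := by positivity
  filter_upwards [(R.tendsto_log_mul_sub hA' hζ).eventually
      (eventually_le_nhds (lt_add_of_pos_right _ hδ)),
    eventually_ge_atTop (1 / (A' - A)), R.eventually_log_le hA' (half_pos (mul_pos hδ hA)),
    hAx.eventually_ge_atTop 2, hAx.eventually_ge_atTop T₀, eventually_gt_atTop 0,
    hsq.eventually (eventually_le_nhds hδA)] with L hreg hL hlog hAL hALT hL0 hexpL
  have ht1 : A * L + 1 ≤ A' * L := by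
    rw [div_le_iff₀ (sub_pos.2 hAA')] at hL
    linarith
  have ht0 : 0 < A * L := by positivity
  have hHt1 : Real.log (h (A * L + 1)) ≤ Real.log (h (A' * L)) := R.log_le_log (by linarith) ht1
  have hH0 : 0 ≤ Real.log (h (A * L + 1)) := (hT₀ _ (by linarith)).2
  set t₁ := A * L + 1 with ht₁
  set q := δ + Real.log (h t₁) with hq
  have hq0 : 0 < q := by linarith
  set s := (L + t₁ * q) / (A * L) with hs
  have hs0 : 0 ≤ s := by positivity
  have hsA : s * (A * L) = L + t₁ * q := div_mul_cancel₀ _ ht0.ne'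
  have hbase : ∀ v ∈ Icc 0 t₁,
      Real.exp (-(2 * t₁ * Real.log (2 * t₁))) * Real.exp (-(s * v)) ≤ σ v := fun v hv =>
    (mul_le_of_le_one_right (Real.exp_pos _).le (Real.exp_le_one_iff.2
      (neg_nonpos.2 (mul_nonneg hs0 hv.1)))).trans (S.exp_neg_mul_log_le (by linarith) hv)
  have hlow := S.mul_exp_le (T := Real.exp L) (c := Real.exp (-(t₁ * q))) ht0
    (by linarith : A * L ≤ t₁) (by linarith) hs0 (Real.exp_pos _).le (Real.exp_pos _).le
    (fun t ht => ?_) ?_ hbase (Real.exp L) ⟨(Real.exp_pos _).le, le_rfl⟩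
  · refine le_trans ?_ hlow
    rw [← Real.exp_add, Real.exp_le_exp]
    have hs1 : s ≤ Real.log (h (ζ * L)) + 4 * δ := by
      have h1 : s = 1 / A + q + q / (A * L) := by
        rw [hs, ht₁]; field_simp; ring
      have h2 : q / (A * L) ≤ δ := by
        rw [div_le_iff₀ ht0]; nlinarith
      linarith
    have hB : 2 * t₁ * Real.log (2 * t₁) ≤ δ * Real.exp L := by
      have h1 : Real.log (2 * t₁) ≤ 2 * t₁ :=
        (Real.log_le_sub_one_of_pos (by linarith)).trans (by linarith)
      have h2 : 2 * t₁ * Real.log (2 * t₁) ≤ (2 * (A' * L)) ^ 2 := by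
        calc 2 * t₁ * Real.log (2 * t₁) ≤ 2 * t₁ * (2 * t₁) :=
              mul_le_mul_of_nonneg_left h1 (by linarith)
          _ ≤ 2 * (A' * L) * (2 * (A' * L)) := by gcongr
          _ = _ := by ring
      have h3 : L ^ 2 ≤ δ / (4 * A' ^ 2) * Real.exp L := by
        rwa [Real.exp_neg, ← div_eq_mul_inv, div_le_iff₀ (Real.exp_pos _)] at hexpL
      calc _ ≤ (2 * (A' * L)) ^ 2 := h2
        _ = 4 * A' ^ 2 * L ^ 2 := by ring
        _ ≤ 4 * A' ^ 2 * (δ / (4 * A' ^ 2) * Real.exp L) := by gcongr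
        _ = δ * Real.exp L := by field_simp
    have := mul_le_mul_of_nonneg_right hs1 (Real.exp_pos L).le
    linarith
  · have htT := hT₀ t (hALT.trans ht.1)
    refine le_trans ?_ htT.1
    rw [Real.exp_le_exp, neg_le_neg_iff]
    have := R.log_le_log (by linarith [ht.1] : 0 < t) ht.2
    exact mul_le_mul ht.2 (by linarith) (by linarith [htT.2]) (by linarith)
  · rw [hsA, show t₁ - A * L = 1 by ring, one_mul, ← Real.exp_add, Real.exp_le_exp]
    linarith

theorem mul_log_div_sub_le {N t y d : ℝ} (hN : 0 < N) (ht : 0 < t) (hy : 0 < y) :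
    t * (N * Real.log (y / t) - d) ≤ y * (N * Real.exp (-1 - d / N)) := by
  have h1 := Real.log_le_sub_one_of_pos (mul_pos (Real.exp_pos (-1 - d / N)) (div_pos hy ht))
  rw [Real.log_mul (Real.exp_pos _).ne' (div_pos hy ht).ne', Real.log_exp] at h1
  have h2 : Real.log (y / t) - d / N ≤ Real.exp (-1 - d / N) * (y / t) := by linarith
  calc t * (N * Real.log (y / t) - d) = N * t * (Real.log (y / t) - d / N) := by field_simp
    _ ≤ N * t * (Real.exp (-1 - d / N) * (y / t)) := by gcongr
    _ = _ := by field_simp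

theorem IsDelaySolution.eventually_le_exp_neg {χ σ h : ℝ → ℝ} {n : ℝ} (S : IsDelaySolution χ σ)
    (R : IsSmoothlyVarying h n) {ζ N κ δ : ℝ} (hζ : 0 < ζ) (hnN : n < N) (hN : 0 < N) (hκ : 0 < κ)
    (hδ : 0 < δ) (hχ : ∀ᶠ t in atTop, χ t ≤ Real.exp (t * (δ / 4 - Real.log (h t))))
    (hle : ζ * (N * Real.exp (-1 - δ / 2 / N)) ≤ 1 - κ) :
    ∀ᶠ u in atTop, σ u ≤ Real.exp (-(u * (Real.log (h (ζ * Real.log u)) - 2 * δ))) := by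
  suffices key : ∀ᶠ L in atTop,
      σ (Real.exp L) ≤ Real.exp (-(Real.exp L * (Real.log (h (ζ * L)) - 2 * δ))) by
    filter_upwards [Real.tendsto_log_atTop.eventually key, eventually_gt_atTop 0] with u hu hu0
    rwa [Real.exp_log hu0] at hu
  have hκ1 : 0 < 1 - κ := lt_of_lt_of_le (by positivity) hle
  obtain ⟨T₁, hT₁, hpotter⟩ := R.exists_log_sub_le hnN
  obtain ⟨T₂, hT₂⟩ := eventually_atTop.1 hχ
  set T := max T₁ T₂ with hT
  have hT1 : 1 ≤ T := hT₁.trans (le_max_left _ _)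
  set d := δ / 4 with hd
  have hd0 : 0 < d := by positivity
  have hζx : Tendsto (fun x : ℝ => ζ * x) atTop atTop := tendsto_id.const_mul_atTop hζ
  have hsmall : Tendsto (fun L : ℝ => Real.exp (-(κ / 2 * L))) atTop (𝓝 0) :=
    Real.tendsto_exp_neg_atTop_nhds_zero.comp (tendsto_id.const_mul_atTop (half_pos hκ))
  have hc1 : 0 < (1 - κ / 2) / (2 * (1 + T)) := div_pos (by linarith) (by linarith)
  have hc2 : 0 < δ / (2 / d + 1) := by positivity
  have hc3 : 0 < (1 - κ / 2) / 2 := by linarith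
  filter_upwards [R.eventually_log_le hζ (half_pos hκ), R.eventually_log_le hζ hc1,
    (tendsto_id.const_mul_atTop hc3).eventually_ge_atTop (d * T), eventually_gt_atTop 0,
    (R.tendsto_log_atTop.comp hζx).eventually_ge_atTop δ,
    hsmall.eventually (eventually_le_nhds hc2)] with L hs₁ hs₂ hL hL0 hge hexpL
  simp only [Function.comp_apply, id_eq] at hge hL
  set y := ζ * L with hy
  have hy0 : 0 < y := by positivity
  set s := Real.log (h y) - δ with hs
  have hs0 : 0 ≤ s := by linarith
  have hpt : ∀ t, T ≤ t → t * (s + 2 * d - Real.log (h t)) ≤ (1 - κ) * L := by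
    intro t ht
    have ht0 : 0 < t := by linarith
    rcases le_total y t with hyt | hyt
    · have := R.log_le_log hy0 hyt
      exact (mul_nonpos_of_nonneg_of_nonpos ht0.le (by linarith)).trans (by positivity)
    · have h1 := hpotter t y ((le_max_left _ _).trans ht) hyt
      calc t * (s + 2 * d - Real.log (h t)) ≤ t * (N * Real.log (y / t) - δ / 2) :=
            mul_le_mul_of_nonneg_left (by linarith) ht0.le
        _ ≤ y * (N * Real.exp (-1 - δ / 2 / N)) := mul_log_div_sub_le hN ht0 hy0
        _ = ζ * (N * Real.exp (-1 - δ / 2 / N)) * L := by rw [hy]; ring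
        _ ≤ (1 - κ) * L := by gcongr
  set C := Real.exp ((s + d) * T) + Real.exp ((1 - κ) * L) with hC
  have hC0 : 0 < C := by positivity
  have hker : ∀ t, 0 ≤ t → χ t * Real.exp (s * t) ≤ C * Real.exp (-d * t) := by
    intro t ht0
    rcases le_total t T with ht | ht
    · calc χ t * Real.exp (s * t) ≤ 1 * Real.exp (s * t) := by
            gcongr; exact S.kernel_le_one t ht0
        _ ≤ Real.exp ((s + d) * T) * Real.exp (-d * t) := by
            rw [one_mul, ← Real.exp_add, Real.exp_le_exp]
            nlinarith [mul_le_mul_of_nonneg_left ht (add_nonneg hs0 hd0.le)]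
        _ ≤ C * Real.exp (-d * t) := by
            gcongr; exact le_add_of_nonneg_right (Real.exp_pos _).le
    · calc χ t * Real.exp (s * t) ≤ Real.exp (t * (d - Real.log (h t))) * Real.exp (s * t) := by
            gcongr; exact hT₂ t ((le_max_right _ _).trans ht)
        _ ≤ Real.exp ((1 - κ) * L) * Real.exp (-d * t) := by
            rw [← Real.exp_add, ← Real.exp_add, Real.exp_le_exp]
            linarith [hpt t ht]
        _ ≤ C * Real.exp (-d * t) := by
            gcongr; exact le_add_of_nonneg_left (Real.exp_pos _).le
  have hmoment : ∀ v, 0 ≤ v → ∫ t in (0 : ℝ)..v, χ t * Real.exp (s * t) ≤ C / d := by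
    intro v hv
    have hi : IntervalIntegrable (fun t => χ t * Real.exp (s * t)) volume 0 v := by
      have hi' : IntervalIntegrable (fun t => C * Real.exp (-d * t)) volume 0 v :=
        Continuous.intervalIntegrable (by fun_prop) _ _
      refine hi'.mono_fun' (S.measurable.mul (by fun_prop)).aestronglyMeasurable ?_
      refine (ae_restrict_mem measurableSet_uIoc).mono fun t ht => ?_
      rw [uIoc_of_le hv] at ht
      have := S.kernel_nonneg t ht.1.le
      exact (Real.norm_of_nonneg (by positivity)).trans_le (hker t ht.1.le)
    refine (intervalIntegral.integral_mono_on hv hi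
      (Continuous.intervalIntegrable (by fun_prop) _ _) fun t ht => hker t ht.1).trans ?_
    rw [intervalIntegral.integral_const_mul,
      intervalIntegral.integral_comp_mul_left Real.exp (neg_ne_zero.2 hd0.ne'), integral_exp,
      mul_zero, Real.exp_zero, smul_eq_mul, div_eq_mul_inv]
    refine mul_le_mul_of_nonneg_left ?_ hC0.le
    rw [inv_neg]
    nlinarith [mul_pos (inv_pos.2 hd0) (Real.exp_pos (-d * v))]
  have hub := S.le_mul_exp (T := Real.exp L) (s := s) (B := Real.exp (s * (C / d + 1))) hs0
    (Real.exp_pos _).le (fun v hv => ?_) (Real.exp L) ⟨(Real.exp_pos _).le, le_rfl⟩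
  · refine hub.trans ?_
    rw [← Real.exp_add, Real.exp_le_exp]
    have hses : s ≤ Real.exp s := by linarith [Real.add_one_le_exp s]
    have hE1 : s * Real.exp ((s + d) * T) ≤ Real.exp ((1 - κ / 2) * L) := by
      refine (mul_le_mul_of_nonneg_right hses (Real.exp_pos _).le).trans ?_
      rw [← Real.exp_add, Real.exp_le_exp]
      have h1 : s * (1 + T) ≤ (1 - κ / 2) / 2 * L := by
        have : s ≤ (1 - κ / 2) / (2 * (1 + T)) * L := by linarith
        calc s * (1 + T) ≤ (1 - κ / 2) / (2 * (1 + T)) * L * (1 + T) := by gcongr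
          _ = _ := by field_simp
      linarith
    have hE2 : s * Real.exp ((1 - κ) * L) ≤ Real.exp ((1 - κ / 2) * L) := by
      refine (mul_le_mul_of_nonneg_right hses (Real.exp_pos _).le).trans ?_
      rw [← Real.exp_add, Real.exp_le_exp]
      linarith
    have hE3 : s ≤ Real.exp ((1 - κ / 2) * L) := by
      refine hses.trans (Real.exp_le_exp.2 ?_)
      nlinarith
    have hE4 : Real.exp ((1 - κ / 2) * L) ≤ δ / (2 / d + 1) * Real.exp L := by
      rw [show (1 - κ / 2) * L = -(κ / 2 * L) + L by ring, Real.exp_add]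
      gcongr
    have hsum : s * (C / d + 1) ≤ δ * Real.exp L := by
      calc s * (C / d + 1)
          = (s * Real.exp ((s + d) * T) + s * Real.exp ((1 - κ) * L)) / d + s := by rw [hC]; ring
        _ ≤ (Real.exp ((1 - κ / 2) * L) + Real.exp ((1 - κ / 2) * L)) / d +
              Real.exp ((1 - κ / 2) * L) := by gcongr
        _ = (2 / d + 1) * Real.exp ((1 - κ / 2) * L) := by ring
        _ ≤ (2 / d + 1) * (δ / (2 / d + 1) * Real.exp L) := by gcongr
        _ = δ * Real.exp L := by field_simp
    linarith
  · rcases le_or_gt v (C / d + 1) with hv1 | hv1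
    · left
      refine (S.le_one hv.1).trans ?_
      rw [← Real.exp_add, Real.one_le_exp_iff]
      linarith [mul_le_mul_of_nonneg_left hv1 hs0]
    · right
      have : 0 < C / d := by positivity
      exact ⟨by linarith, (hmoment v hv.1).trans (by linarith)⟩

theorem exists_lower_parameters {n ζ δ : ℝ} (hn : 0 ≤ n) (hδ : 0 < δ)
    (hζpos : 0 < n → ζ = Real.exp 1 / n) :
    ∃ A A' : ℝ, 0 < A ∧ A < A' ∧ 1 / A + n * Real.log (A' / ζ) ≤ δ := by
  rcases hn.eq_or_lt with rfl | hn
  · exact ⟨1 / δ, 2 / δ, by positivity, by gcongr; norm_num, by simp⟩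
  · refine ⟨1 / n, Real.exp (δ / n) / n, by positivity, ?_, ?_⟩
    · gcongr
      exact Real.one_lt_exp_iff.2 (by positivity)
    · rw [hζpos hn, div_div_div_cancel_right₀ hn.ne', ← Real.exp_sub, Real.log_exp]
      refine le_of_eq ?_
      field_simp
      ring

theorem exists_upper_parameters {n ζ δ : ℝ} (hn : 0 ≤ n) (hδ : 0 < δ)
    (hζpos : 0 < n → ζ = Real.exp 1 / n) (hζzero : n = 0 → ζ = 1) :
    ∃ N κ : ℝ, n < N ∧ 0 < κ ∧ ζ * (N * Real.exp (-1 - δ / 2 / N)) ≤ 1 - κ := by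
  suffices H : ∃ N, n < N ∧ ζ * (N * Real.exp (-1 - δ / 2 / N)) < 1 by
    obtain ⟨N, hN, hlt⟩ := H
    exact ⟨N, 1 - ζ * (N * Real.exp (-1 - δ / 2 / N)), hN, sub_pos.2 hlt, by linarith⟩
  rcases hn.eq_or_lt with rfl | hn
  · refine ⟨1, one_pos, ?_⟩
    rw [hζzero rfl, one_mul, one_mul, Real.exp_lt_one_iff]
    linarith
  · have hcont : ContinuousAt (fun N => ζ * (N * Real.exp (-1 - δ / 2 / N))) n := by
      have := hn.ne'
      fun_prop (disch := assumption)
    have hval : ζ * (n * Real.exp (-1 - δ / 2 / n)) < 1 := by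
      rw [hζpos hn, ← mul_assoc, div_mul_cancel₀ _ hn.ne', ← Real.exp_add, Real.exp_lt_one_iff]
      have : 0 < δ / 2 / n := by positivity
      linarith
    obtain ⟨N, hlt, hN⟩ := (((hcont.tendsto.eventually (gt_mem_nhds hval)).filter_mono
      nhdsWithin_le_nhds).and (self_mem_nhdsWithin : Ioi n ∈ 𝓝[>] n)).exists
    exact ⟨N, hN, hlt⟩

end

theorem statement8 (χ : ℝ → ℝ) (hmeas : Measurable χ)
    (hχ1 : ∀ t : ℝ, 0 ≤ t → t ≤ 1 → χ t = 1)
    (hχ2 : ∀ t : ℝ, 1 < t → 0 ≤ χ t ∧ χ t ≤ 1)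
    (e : ℝ → ℝ) (he : Filter.Tendsto e Filter.atTop (nhds 0))
    (h : ℝ → ℝ)
    (hpos : ∀ t : ℝ, 0 < t → 0 < h t)
    (hmono : MonotoneOn h (Set.Ioi 0))
    (htop : Filter.Tendsto h Filter.atTop Filter.atTop)
    (hdiff : ContDiffOn ℝ 1 h (Set.Ioi 0))
    (n : ℝ) (hn : 0 ≤ n)
    (hlim : Filter.Tendsto (fun u : ℝ => u * deriv h u / h u) Filter.atTop (nhds n))
    (hχh : ∀ t : ℝ, 1 ≤ t → χ t = ((1 + e t) / h t) ^ t)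
    (σ : ℝ → ℝ)
    (hσ1 : ∀ u : ℝ, 0 ≤ u → u ≤ 1 → σ u = 1)
    (hσeq : ∀ u : ℝ, 1 < u → u * σ u = ∫ t in (0 : ℝ)..u, σ (u - t) * χ t)
    (ζ : ℝ) (hζpos : 0 < n → ζ = Real.exp 1 / n) (hζzero : n = 0 → ζ = 1) :
    Filter.Tendsto (fun u : ℝ => (σ u) ^ (1 / u) * h (ζ * Real.log u))
      Filter.atTop (nhds 1) := by
  have S : IsDelaySolution χ σ :=
    { measurable := hmeas
      kernel_eq_one := hχ1
      kernel_nonneg := fun t ht => (le_or_gt t 1).elim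
        (fun h1 => (hχ1 t ht h1).symm ▸ zero_le_one) fun h1 => (hχ2 t h1).1
      kernel_le_one := fun t ht => (le_or_gt t 1).elim
        (fun h1 => (hχ1 t ht h1).le) fun h1 => (hχ2 t h1).2
      eq_one := hσ1
      mul_eq := fun u hu => by
        rw [hσeq u hu]
        simpa using intervalIntegral.integral_comp_sub_left (a := 0) (b := u)
          (fun r => σ r * χ (u - r)) u }
  have R : IsSmoothlyVarying h n := ⟨hpos, hmono, htop, hdiff, hlim⟩
  have hζ : 0 < ζ := by
    rcases hn.eq_or_lt with h0 | h0
    · rw [hζzero h0.symm]; exact one_pos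
    · rw [hζpos h0]; positivity
  have hlower : ∀ δ : ℝ, 0 < δ → ∀ᶠ u in Filter.atTop,
      Real.exp (-(u * (Real.log (h (ζ * Real.log u)) + 5 * δ))) ≤ σ u := fun δ hδ => by
    obtain ⟨A, A', hA, hAA', hle⟩ := exists_lower_parameters hn hδ hζpos
    exact S.eventually_exp_neg_le R hζ hA hAA' hδ
      ((eventually_exp_le_rpow_le he hpos hχh hδ).mono fun t ht => ht.1) hle
  have hupper : ∀ δ : ℝ, 0 < δ → ∀ᶠ u in Filter.atTop,
      σ u ≤ Real.exp (-(u * (Real.log (h (ζ * Real.log u)) - 2 * δ))) := fun δ hδ => by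
    obtain ⟨N, κ, hnN, hκ, hle⟩ := exists_upper_parameters hn hδ hζpos hζzero
    exact S.eventually_le_exp_neg R hζ hnN (hn.trans_lt hnN) hκ hδ
      ((eventually_exp_le_rpow_le he hpos hχh (by positivity)).mono fun t ht => ht.2) hle
  have hσpos : ∀ᶠ u in Filter.atTop, 0 < σ u :=
    (hlower 1 one_pos).mono fun u hu => (Real.exp_pos _).trans_le hu
  have hlog : Filter.Tendsto
      (fun u => Real.log (σ u) / u + Real.log (h (ζ * Real.log u))) Filter.atTop (nhds 0) := by
    refine Metric.tendsto_nhds.2 fun ε hε => ?_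
    filter_upwards [hlower (ε / 10) (by positivity), hupper (ε / 4) (by positivity), hσpos,
      Filter.eventually_gt_atTop 0] with u h1 h2 h3 hu
    rw [← Real.le_log_iff_exp_le h3] at h1
    rw [← Real.log_le_iff_le_exp h3] at h2
    have h4 : -(Real.log (h (ζ * Real.log u)) + 5 * (ε / 10)) ≤ Real.log (σ u) / u := by
      rw [le_div_iff₀ hu]; linarith
    have h5 : Real.log (σ u) / u ≤ -(Real.log (h (ζ * Real.log u)) - 2 * (ε / 4)) := by
      rw [div_le_iff₀ hu]; linarith
    rw [Real.dist_0_eq_abs, abs_lt]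
    constructor <;> linarith
  have hexp := (Real.continuous_exp.tendsto 0).comp hlog
  rw [Real.exp_zero] at hexp
  refine hexp.congr' ?_
  filter_upwards [hσpos, Real.tendsto_log_atTop.eventually_gt_atTop 0] with u hu hL
  rw [Function.comp_apply, Real.exp_add, Real.exp_log (hpos _ (mul_pos hζ hL)),
    Real.rpow_def_of_pos hu, mul_one_div]
end

section
/- For each integer k ≥ 0 there exists a constant C_k > 0 such that for all reals x ≥ 2 and 2 ≤ y ≤ x, the number of positive integers n ≤ x for which there exists a prime p > y with p² | φ_k(n) is at most C_k · x·(log x)^{2k}/y. -/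
/-- A prime dividing `φ m` either divides `m` to the second power, or divides `r - 1` for some prime
`r` dividing `m`. -/
theorem Nat.Prime.sq_dvd_or_of_dvd_totient {p m : ℕ} (hp : p.Prime) (hm : 0 < m)
    (h : p ∣ m.totient) : p * p ∣ m ∨ ∃ r, r.Prime ∧ r ∣ m ∧ p ∣ r - 1 := by
  rw [Nat.totient_eq_prod_factorization hm.ne', Finsupp.prod, hp.prime.dvd_finsetProd_iff] at h
  obtain ⟨r, hr, hpr⟩ := h
  rw [Nat.support_factorization, Nat.mem_primeFactors] at hr
  rcases hp.dvd_mul.1 hpr with h1 | h1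
  · left
    have hpr' : p = r := (Nat.prime_dvd_prime_iff_eq hp hr.1).1 (hp.dvd_of_dvd_pow h1)
    subst hpr'
    have h2 : m.factorization p - 1 ≠ 0 := by
      intro h0
      rw [h0, pow_zero] at h1
      exact hp.one_lt.ne' (Nat.dvd_one.1 h1)
    rw [← sq]
    exact (hp.pow_dvd_iff_le_factorization hm.ne').2 (by omega)
  · exact Or.inr ⟨r, hr.1, hr.2.1, h1⟩

/-- How a product of two primes, or a prime (`b = 1`), can divide `φ m`. -/
theorem dvd_of_mul_dvd_totient {a b m : ℕ} (ha : a.Prime) (hb : b = 1 ∨ b.Prime) (hba : b ≤ a)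
    (hm : 0 < m) (h : a * b ∣ m.totient) :
    a * a ∣ m ∨ (∃ r, r.Prime ∧ a ∣ r - 1 ∧ r * b ∣ m) ∨
      (∃ r, r.Prime ∧ a * b ∣ r - 1 ∧ r ∣ m) ∨
      ∃ r s, r.Prime ∧ s.Prime ∧ a ∣ r - 1 ∧ b ∣ s - 1 ∧ r * s ∣ m := by
  rcases ha.sq_dvd_or_of_dvd_totient hm ((Dvd.intro b rfl).trans h) with h1 | ⟨r, hr, hrm, har⟩
  · exact Or.inl h1
  right
  rcases hb with rfl | hb
  · exact Or.inr (Or.inl ⟨r, hr, by simpa using har, hrm⟩)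
  by_cases hab : a * b ∣ r - 1
  · exact Or.inr (Or.inl ⟨r, hr, hab, hrm⟩)
  have hr1 : 0 < r - 1 := Nat.sub_pos_of_lt hr.one_lt
  have hbr : b < r := by have := Nat.le_of_dvd hr1 har; omega
  obtain ⟨e, m', hm', rfl⟩ := Nat.exists_eq_pow_mul_and_not_dvd hm.ne' r hr.ne_one
  have he : 0 < e := by
    rcases Nat.eq_zero_or_pos e with rfl | he
    · simp at hrm; exact absurd hrm hm'
    · exact he
  have hcop : Nat.Coprime (r ^ e) m' := Nat.Coprime.pow_left _ ((hr.coprime_iff_not_dvd).2 hm')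
  have hm0 : 0 < m' := Nat.pos_of_ne_zero fun h0 => hm' (h0 ▸ dvd_zero r)
  rw [Nat.totient_mul hcop, Nat.totient_prime_pow hr he] at h
  obtain ⟨c, hc⟩ := har
  have hbc : ¬ b ∣ c := fun hbc => hab (hc ▸ Nat.mul_dvd_mul_left a hbc)
  have hbm : b ∣ r ^ (e - 1) * c * m'.totient := by
    refine Nat.dvd_of_mul_dvd_mul_left ha.pos (h.trans (dvd_of_eq ?_))
    rw [hc]; ring
  have hbm' : b ∣ m'.totient := by
    rcases hb.dvd_mul.1 hbm with h2 | h2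
    · rcases hb.dvd_mul.1 h2 with h3 | h3
      · exact absurd ((Nat.prime_dvd_prime_iff_eq hb hr).1 (hb.dvd_of_dvd_pow h3)) hbr.ne
      · exact absurd h3 hbc
    · exact h2
  have hre : r ∣ r ^ e := dvd_pow_self r he.ne'
  rcases hb.sq_dvd_or_of_dvd_totient hm0 hbm' with h2 | ⟨s, hs, hsm, hbs⟩
  · exact Or.inl ⟨r, hr, ⟨c, hc⟩, mul_dvd_mul hre ((Dvd.intro b rfl).trans h2)⟩
  · exact Or.inr (Or.inr ⟨r, s, hr, hs, ⟨c, hc⟩, hbs, mul_dvd_mul hre hsm⟩)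

theorem Nat.iterate_totient_pos {n : ℕ} (hn : 0 < n) (k : ℕ) : 0 < Nat.totient^[k] n := by
  induction k with
  | zero => exact hn
  | succ k ih => rw [Function.iterate_succ_apply']; exact Nat.totient_pos.2 ih

theorem Nat.iterate_totient_le (n k : ℕ) : Nat.totient^[k] n ≤ n := by
  induction k with
  | zero => exact le_rfl
  | succ k ih => rw [Function.iterate_succ_apply']; exact (Nat.totient_le _).trans ih

/-- The integers `1 ≤ n ≤ N` for which `D` divides the `k`-th iterate of `φ` at `n`. -/
def iterTotientMultiples (N k D : ℕ) : Finset ℕ :=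
  {n ∈ Finset.Icc 1 N | D ∣ Nat.totient^[k] n}

/-- The multipliers `1 ≤ j ≤ N` for which `j * a + 1` is prime. -/
def primeMultipliers (N a : ℕ) : Finset ℕ :=
  {j ∈ Finset.Icc 1 N | (j * a + 1).Prime}

theorem exists_mem_primeMultipliers {N a r : ℕ} (hr : r.Prime) (hrN : r ≤ N) (har : a ∣ r - 1) :
    ∃ j ∈ primeMultipliers N a, r = j * a + 1 := by
  obtain ⟨j, hj⟩ := har
  have hr1 := hr.one_lt
  have hrj : r = j * a + 1 := by rw [mul_comm]; omega
  have ha : 0 < a := Nat.pos_of_ne_zero fun h => by subst h; omega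
  have hj0 : 0 < j := Nat.pos_of_ne_zero fun h => by subst h; omega
  refine ⟨j, ?_, hrj⟩
  simp only [primeMultipliers, Finset.mem_filter, Finset.mem_Icc]
  exact ⟨⟨hj0, by nlinarith⟩, hrj ▸ hr⟩

theorem sum_primeMultipliers_le (N : ℕ) {a : ℕ} (ha : 0 < a) :
    ∑ j ∈ primeMultipliers N a, ((j * a + 1 : ℕ) : ℝ)⁻¹ ≤ (harmonic N : ℝ) / a := by
  have ha' : (0 : ℝ) < a := by exact_mod_cast ha
  calc ∑ j ∈ primeMultipliers N a, ((j * a + 1 : ℕ) : ℝ)⁻¹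
      ≤ ∑ j ∈ primeMultipliers N a, (j : ℝ)⁻¹ / a := by
        refine Finset.sum_le_sum fun j hj => ?_
        simp only [primeMultipliers, Finset.mem_filter, Finset.mem_Icc] at hj
        have hj' : (0 : ℝ) < j := by exact_mod_cast hj.1.1
        rw [div_eq_mul_inv, ← mul_inv]
        apply inv_anti₀ (by positivity)
        push_cast; linarith
    _ ≤ ∑ j ∈ Finset.Icc 1 N, (j : ℝ)⁻¹ / a :=
        Finset.sum_le_sum_of_subset_of_nonneg (Finset.filter_subset _ _)
          fun j _ _ => by positivity
    _ = (harmonic N : ℝ) / a := by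
        rw [harmonic_eq_sum_Icc, ← Finset.sum_div]; push_cast; rfl

theorem iterTotientMultiples_succ_subset (N k : ℕ) {a b : ℕ} (ha : a.Prime)
    (hb : b = 1 ∨ b.Prime) (hba : b ≤ a) :
    iterTotientMultiples N (k + 1) (a * b) ⊆
      (iterTotientMultiples N k (a * a) ∪
        (primeMultipliers N a).biUnion fun j => iterTotientMultiples N k ((j * a + 1) * b)) ∪
      ((primeMultipliers N (a * b)).biUnion fun j =>
          iterTotientMultiples N k ((j * (a * b) + 1) * 1)) ∪
      (primeMultipliers N a).biUnion fun i => (primeMultipliers N b).biUnion fun j =>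
          iterTotientMultiples N k ((i * a + 1) * (j * b + 1)) := by
  intro n hn
  simp only [iterTotientMultiples, Finset.mem_filter, Finset.mem_Icc,
    Function.iterate_succ_apply'] at hn
  obtain ⟨⟨hn1, hnN⟩, hn⟩ := hn
  have hm := Nat.iterate_totient_pos hn1 k
  have hle : ∀ {d}, d ∣ Nat.totient^[k] n → d ≤ N := fun hd =>
    (Nat.le_of_dvd hm hd).trans ((Nat.iterate_totient_le n k).trans hnN)
  simp only [iterTotientMultiples, Finset.mem_union, Finset.mem_biUnion, Finset.mem_filter,
    Finset.mem_Icc]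
  rcases dvd_of_mul_dvd_totient ha hb hba hm hn with
    h | ⟨r, hr, har, h⟩ | ⟨r, hr, har, h⟩ | ⟨r, s, hr, hs, har, hbs, h⟩
  · exact Or.inl (Or.inl (Or.inl ⟨⟨hn1, hnN⟩, h⟩))
  · obtain ⟨j, hj, rfl⟩ := exists_mem_primeMultipliers hr (hle (dvd_of_mul_right_dvd h)) har
    exact Or.inl (Or.inl (Or.inr ⟨j, hj, ⟨hn1, hnN⟩, h⟩))
  · obtain ⟨j, hj, rfl⟩ := exists_mem_primeMultipliers hr (hle h) har
    exact Or.inl (Or.inr ⟨j, hj, ⟨hn1, hnN⟩, by simpa using h⟩)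
  · obtain ⟨i, hi, rfl⟩ := exists_mem_primeMultipliers hr (hle (dvd_of_mul_right_dvd h)) har
    obtain ⟨j, hj, rfl⟩ := exists_mem_primeMultipliers hs (hle (dvd_of_mul_left_dvd h)) hbs
    exact Or.inr ⟨i, hi, j, hj, ⟨hn1, hnN⟩, h⟩

theorem one_le_harmonic {N : ℕ} (hN : 0 < N) : (1 : ℝ) ≤ harmonic N := by
  rw [harmonic_eq_sum_Icc]
  push_cast
  have h : ∀ i ∈ Finset.Icc 1 N, (0 : ℝ) ≤ (i : ℝ)⁻¹ := fun i _ => by positivity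
  simpa using Finset.single_le_sum h (Finset.mem_Icc.2 ⟨le_rfl, hN⟩)

theorem card_iterTotientMultiples_le {N : ℕ} (hN : 0 < N) (k : ℕ) :
    ∀ {a b : ℕ}, a.Prime → (b = 1 ∨ b.Prime) →
      ((iterTotientMultiples N k (a * b)).card : ℝ) ≤
        N * (4 * (harmonic N : ℝ) ^ 2) ^ k * ((a : ℝ)⁻¹ * (b : ℝ)⁻¹) := by
  induction k with
  | zero =>
    intro a b _ _
    have h : iterTotientMultiples N 0 (a * b) = {n ∈ Finset.Ioc 0 N | a * b ∣ n} := rfl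
    rw [h, Nat.Ioc_filter_dvd_card_eq_div]
    refine Nat.cast_div_le.trans (le_of_eq ?_)
    push_cast
    rw [pow_zero, mul_one, div_eq_mul_inv, mul_inv]
  | succ k ih =>
    intro a b ha hb
    wlog hba : b ≤ a generalizing a b
    · have hb' : b.Prime := hb.resolve_left fun h => hba (h ▸ ha.one_lt.le)
      rw [mul_comm a b, mul_comm (a : ℝ)⁻¹]
      exact this hb' (Or.inr ha) (le_of_not_ge hba)
    have hb0 : 0 < b := by rcases hb with rfl | hb; exacts [one_pos, hb.pos]
    have ha' : (0 : ℝ) < a := by exact_mod_cast ha.pos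
    have hb' : (0 : ℝ) < b := by exact_mod_cast hb0
    have hH := one_le_harmonic hN
    set H : ℝ := (harmonic N : ℝ) with hHdef
    set M : ℝ := N * (4 * H ^ 2) ^ k with hM
    have hM0 : 0 ≤ M := by positivity
    have hmem : ∀ {c j}, j ∈ primeMultipliers N c → (j * c + 1).Prime := fun h =>
      (Finset.mem_filter.1 h).2
    have hsum_a := sum_primeMultipliers_le N ha.pos
    have hsum_b := sum_primeMultipliers_le N hb0
    have hsum_ab := sum_primeMultipliers_le N (Nat.mul_pos ha.pos hb0)
    rw [← hHdef] at hsum_a hsum_b hsum_ab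
    have b1 : ((iterTotientMultiples N k (a * a)).card : ℝ) ≤ M * ((a : ℝ)⁻¹ * (b : ℝ)⁻¹) := by
      refine (ih ha (Or.inr ha)).trans ?_
      gcongr
    have b2 : (((primeMultipliers N a).biUnion fun j =>
        iterTotientMultiples N k ((j * a + 1) * b)).card : ℝ) ≤ M * (H / a * (b : ℝ)⁻¹) := by
      refine (Nat.cast_le.2 Finset.card_biUnion_le).trans ?_
      rw [Nat.cast_sum]
      refine (Finset.sum_le_sum fun j hj => ih (hmem hj) hb).trans ?_
      rw [← Finset.mul_sum, ← Finset.sum_mul]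
      gcongr
    have b3 : (((primeMultipliers N (a * b)).biUnion fun j =>
        iterTotientMultiples N k ((j * (a * b) + 1) * 1)).card : ℝ) ≤
        M * (H / (a * b : ℕ)) := by
      refine (Nat.cast_le.2 Finset.card_biUnion_le).trans ?_
      rw [Nat.cast_sum]
      refine (Finset.sum_le_sum fun j hj => ih (hmem hj) (Or.inl rfl)).trans ?_
      simp only [Nat.cast_one, inv_one, mul_one]
      rw [← Finset.mul_sum]
      gcongr
    have b4 : (((primeMultipliers N a).biUnion fun i => (primeMultipliers N b).biUnion fun j =>
        iterTotientMultiples N k ((i * a + 1) * (j * b + 1))).card : ℝ) ≤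
        M * (H / a * (H / b)) := by
      refine (Nat.cast_le.2 (Finset.card_biUnion_le.trans
        (Finset.sum_le_sum fun i _ => Finset.card_biUnion_le))).trans ?_
      simp only [Nat.cast_sum]
      refine (Finset.sum_le_sum fun i hi => Finset.sum_le_sum fun j hj =>
        ih (hmem hi) (Or.inr (hmem hj))).trans ?_
      simp only [← Finset.mul_sum]
      rw [← Finset.sum_mul]
      gcongr
    have hcard := (Finset.card_le_card (iterTotientMultiples_succ_subset N k ha hb hba)).trans
      ((Finset.card_union_le _ _).trans (Nat.add_le_add_right ((Finset.card_union_le _ _).trans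
        (Nat.add_le_add_right (Finset.card_union_le _ _) _)) _))
    have hcard' := (Nat.cast_le (α := ℝ)).2 hcard
    simp only [Nat.cast_add] at hcard'
    have hMab : 0 ≤ M * ((a : ℝ)⁻¹ * (b : ℝ)⁻¹) := by positivity
    have hHH : H ≤ H ^ 2 := by nlinarith
    have htotal : M * ((a : ℝ)⁻¹ * (b : ℝ)⁻¹) + M * (H / a * (b : ℝ)⁻¹) +
        M * (H / (a * b : ℕ)) + M * (H / a * (H / b)) =
        (1 + H + H + H ^ 2) * (M * ((a : ℝ)⁻¹ * (b : ℝ)⁻¹)) := by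
      push_cast; field_simp
    have hfinal : (1 + H + H + H ^ 2) * (M * ((a : ℝ)⁻¹ * (b : ℝ)⁻¹)) ≤
        4 * H ^ 2 * (M * ((a : ℝ)⁻¹ * (b : ℝ)⁻¹)) :=
      mul_le_mul_of_nonneg_right (by linarith) hMab
    have hgoal : (N : ℝ) * (4 * H ^ 2) ^ (k + 1) * ((a : ℝ)⁻¹ * (b : ℝ)⁻¹) =
        4 * H ^ 2 * (M * ((a : ℝ)⁻¹ * (b : ℝ)⁻¹)) := by rw [hM]; ring
    linarith

theorem statement15 (k : ℕ) :
    ∃ C : ℝ, 0 < C ∧ ∀ x y : ℝ, 2 ≤ x → 2 ≤ y → y ≤ x →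
      ({n : ℕ | 0 < n ∧ (n : ℝ) ≤ x ∧
          ∃ p : ℕ, p.Prime ∧ y < (p : ℝ) ∧ p ^ 2 ∣ Nat.totient^[k] n}.ncard : ℝ) ≤
        C * x * (Real.log x) ^ (2 * k) / y := by
  refine ⟨2 * 36 ^ k, by positivity, fun x y hx hy hyx => ?_⟩
  set N := ⌊x⌋₊ with hNdef
  set K := ⌊y⌋₊ with hKdef
  have hK : 2 ≤ K := Nat.le_floor (by exact_mod_cast hy)
  have hKN : K ≤ N := Nat.floor_mono hyx
  have hN : 0 < N := by omega
  have hNx : (N : ℝ) ≤ x := Nat.floor_le (by linarith)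
  set P : Finset ℕ := {p ∈ Finset.Ioc K N | p.Prime} with hP
  have hsub : {n : ℕ | 0 < n ∧ (n : ℝ) ≤ x ∧
      ∃ p : ℕ, p.Prime ∧ y < (p : ℝ) ∧ p ^ 2 ∣ Nat.totient^[k] n} ⊆
      (P.biUnion fun p => iterTotientMultiples N k (p * p) : Finset ℕ) := by
    rintro n ⟨hn, hnx, p, hp, hyp, hpn⟩
    have hnN : n ≤ N := Nat.le_floor hnx
    have hpN : p ≤ N := (Nat.le_self_pow two_ne_zero p).trans
      ((Nat.le_of_dvd (Nat.iterate_totient_pos hn k) hpn).trans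
        ((Nat.iterate_totient_le n k).trans hnN))
    rw [sq] at hpn
    simp only [hP, iterTotientMultiples, Finset.coe_biUnion, Set.mem_iUnion, Finset.mem_coe,
      Finset.mem_filter, Finset.mem_Ioc, Finset.mem_Icc]
    exact ⟨p, ⟨⟨(Nat.floor_lt (by linarith)).2 hyp, hpN⟩, hp⟩, ⟨hn, hnN⟩, hpn⟩
  have hncard := Set.ncard_le_ncard hsub (Finset.finite_toSet _)
  rw [Set.ncard_coe_finset] at hncard
  have hlog2 : (1 : ℝ) / 2 ≤ Real.log x := by
    have h1 := Real.log_two_gt_d9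
    have h2 := Real.log_le_log (by norm_num) hx
    linarith
  have hH : (harmonic N : ℝ) ≤ 3 * Real.log x := by
    have h1 := harmonic_le_one_add_log N
    have h2 := Real.log_le_log (by exact_mod_cast hN) hNx
    linarith
  have hH1 := one_le_harmonic hN
  have hsq : ∑ p ∈ P, ((p : ℝ)⁻¹ * (p : ℝ)⁻¹) ≤ 2 / y := by
    have h1 : ∑ p ∈ P, ((p : ℝ)⁻¹ * (p : ℝ)⁻¹) ≤ ∑ p ∈ Finset.Ioc K N, ((p : ℝ) ^ 2)⁻¹ := by
      simp only [← sq, ← inv_pow]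
      exact Finset.sum_le_sum_of_subset_of_nonneg (Finset.filter_subset _ _)
        fun j _ _ => by positivity
    have h2 := sum_Ioc_inv_sq_le_sub (α := ℝ) (by omega : K ≠ 0) hKN
    have h3 : (0 : ℝ) ≤ (N : ℝ)⁻¹ := by positivity
    have h4 : (K : ℝ)⁻¹ ≤ 2 / y := by
      have h5 : y < K + 1 := Nat.lt_floor_add_one y
      have h6 : (2 : ℝ) ≤ K := by exact_mod_cast hK
      rw [inv_eq_one_div, div_le_div_iff₀ (by linarith) (by linarith)]
      linarith
    linarith
  calc _ ≤ ((P.biUnion fun p => iterTotientMultiples N k (p * p)).card : ℝ) :=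
        Nat.cast_le.2 hncard
    _ ≤ ∑ p ∈ P, ((iterTotientMultiples N k (p * p)).card : ℝ) := by
        exact_mod_cast Finset.card_biUnion_le
    _ ≤ ∑ p ∈ P, N * (4 * (harmonic N : ℝ) ^ 2) ^ k * ((p : ℝ)⁻¹ * (p : ℝ)⁻¹) :=
        Finset.sum_le_sum fun p hp =>
          have hp' := (Finset.mem_filter.1 hp).2
          card_iterTotientMultiples_le hN k hp' (Or.inr hp')
    _ = N * (4 * (harmonic N : ℝ) ^ 2) ^ k * ∑ p ∈ P, ((p : ℝ)⁻¹ * (p : ℝ)⁻¹) := by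
        rw [Finset.mul_sum]
    _ ≤ x * (4 * (3 * Real.log x) ^ 2) ^ k * (2 / y) := by gcongr
    _ = 2 * 36 ^ k * x * Real.log x ^ (2 * k) / y := by
        rw [show 4 * (3 * Real.log x) ^ 2 = 36 * Real.log x ^ 2 by ring, mul_pow, ← pow_mul]
        ring
end
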